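/- arXiv:2409.07371 — 2 statements merged into one kernel-verified Lean document; each statement's English description precedes it below -/
import Mathlib

section
/- Let n ≥ 1 and suppose (A,b) satisfies Setting B. Then there exists a measurable ℤⁿ-periodic function r : ℝⁿ → ℝ with ∫_Y r² < ∞ such that r ≥ 0 almost everywhere, ∫_Y r = 1, and ∫_Y r(x)(A(x):D²φ(x) + b(x)·∇φ(x)) dx = 0 for every twice continuously differentiable ℤⁿ-periodic function φ : ℝⁿ → ℝ; moreover, r is unique up to equality almost everywhere. -/
open MeasureTheory

noncomputable section

/-- The unit cell `Y = (0,1)^n`. -/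
def unitCell (n : ℕ) : Set (Fin n → ℝ) := Set.univ.pi fun _ => Set.Ioo (0 : ℝ) 1

/-- Frobenius norm squared of a matrix. -/
def frobSq {n : ℕ} (M : Matrix (Fin n) (Fin n) ℝ) : ℝ := ∑ i, ∑ j, (M i j) ^ 2

/-- Frobenius inner product of two matrices. -/
def frobInner {n : ℕ} (M N : Matrix (Fin n) (Fin n) ℝ) : ℝ := ∑ i, ∑ j, M i j * N i j

/-- Euclidean norm squared of a vector. -/
def euclSq {n : ℕ} (v : Fin n → ℝ) : ℝ := ∑ i, (v i) ^ 2

/-- Euclidean dot product. -/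
def dotc {n : ℕ} (v w : Fin n → ℝ) : ℝ := ∑ i, v i * w i

/-- `ℤⁿ`-periodicity of a function on `ℝⁿ`. -/
def IsPeriodic {n : ℕ} {α : Type*} (f : (Fin n → ℝ) → α) : Prop :=
  ∀ (x : Fin n → ℝ) (k : Fin n → ℤ), f (x + fun i => (k i : ℝ)) = f x

/-- Partial derivative in direction `i`. -/
def pd {n : ℕ} (f : (Fin n → ℝ) → ℝ) (i : Fin n) (x : Fin n → ℝ) : ℝ :=
  fderiv ℝ f x (Pi.single i 1)

/-- Gradient. -/
def grad {n : ℕ} (f : (Fin n → ℝ) → ℝ) (x : Fin n → ℝ) : Fin n → ℝ := fun i => pd f i x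

/-- Hessian matrix. -/
def hess {n : ℕ} (f : (Fin n → ℝ) → ℝ) (x : Fin n → ℝ) : Matrix (Fin n) (Fin n) ℝ :=
  Matrix.of fun i j => pd (pd f j) i x

/-- Laplacian. -/
def lap {n : ℕ} (f : (Fin n → ℝ) → ℝ) (x : Fin n → ℝ) : ℝ := ∑ i, pd (pd f i) i x

/-- Jacobian matrix of a vector field: `(jac w x) i j = ∂_j w_i (x)`. -/
def jac {n : ℕ} (w : (Fin n → ℝ) → Fin n → ℝ) (x : Fin n → ℝ) : Matrix (Fin n) (Fin n) ℝ :=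
  Matrix.of fun i j => pd (fun y => w y i) j x

/-- Divergence of a vector field. -/
def divg {n : ℕ} (w : (Fin n → ℝ) → Fin n → ℝ) (x : Fin n → ℝ) : ℝ :=
  ∑ i, pd (fun y => w y i) i x

/-- Setting B: symmetric-valued, measurable, `ℤⁿ`-periodic, essentially bounded coefficients,
uniform ellipticity, and the Cordes-type condition with constant `δ ∈ (n/(n+π²), 1]`. -/
structure SettingB {n : ℕ} (A : (Fin n → ℝ) → Matrix (Fin n) (Fin n) ℝ)
    (b : (Fin n → ℝ) → Fin n → ℝ) (lam Lam δ : ℝ) : Prop where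
  symm : ∀ x, (A x).IsSymm
  measA : ∀ i j, Measurable fun x => A x i j
  measb : ∀ i, Measurable fun x => b x i
  perA : IsPeriodic A
  perb : IsPeriodic b
  bddA : ∃ C : ℝ, ∀ᵐ x ∂(volume : Measure (Fin n → ℝ)), frobSq (A x) ≤ C
  bddb : ∃ C : ℝ, ∀ᵐ x ∂(volume : Measure (Fin n → ℝ)), euclSq (b x) ≤ C
  lam_pos : 0 < lam
  lam_le_Lam : lam ≤ Lam
  ellip : ∀ᵐ x ∂(volume : Measure (Fin n → ℝ)), ∀ ξ : Fin n → ℝ,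
    lam * euclSq ξ ≤ dotc ξ (Matrix.mulVec (A x) ξ) ∧
      dotc ξ (Matrix.mulVec (A x) ξ) ≤ Lam * euclSq ξ
  delta_mem : δ ∈ Set.Ioc ((n : ℝ) / ((n : ℝ) + Real.pi ^ 2)) 1
  cordes : ∀ᵐ x ∂(volume : Measure (Fin n → ℝ)),
    (frobSq (A x) + euclSq (b x)) / (Matrix.trace (A x)) ^ 2 ≤ 1 / ((n : ℝ) - 1 + δ)

/-- The renormalization function `γ = tr A / (|A|² + |b|²)`. -/
def gam {n : ℕ} (A : (Fin n → ℝ) → Matrix (Fin n) (Fin n) ℝ)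
    (b : (Fin n → ℝ) → Fin n → ℝ) (x : Fin n → ℝ) : ℝ :=
  Matrix.trace (A x) / (frobSq (A x) + euclSq (b x))

/-- The constant `κ = (δ − n/(n+π²))·(n+π²)/π²`. -/
def kappa (n : ℕ) (δ : ℝ) : ℝ :=
  (δ - (n : ℝ) / ((n : ℝ) + Real.pi ^ 2)) * (((n : ℝ) + Real.pi ^ 2) / Real.pi ^ 2)

/-- The invariant measure: measurable, `ℤⁿ`-periodic, square-integrable over `Y`,
with unit mass over `Y`, solving the stationary FPK equation in the very weak sense. -/
def IsInvariantMeasure {n : ℕ} (A : (Fin n → ℝ) → Matrix (Fin n) (Fin n) ℝ)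
    (b : (Fin n → ℝ) → Fin n → ℝ) (r : (Fin n → ℝ) → ℝ) : Prop :=
  Measurable r ∧ IsPeriodic r ∧
    IntegrableOn (fun x => (r x) ^ 2) (unitCell n) ∧
    (∫ x in unitCell n, r x) = 1 ∧
    ∀ φ : (Fin n → ℝ) → ℝ, ContDiff ℝ 2 φ → IsPeriodic φ →
      (∫ x in unitCell n,
        r x * (frobInner (A x) (hess φ x) + dotc (b x) (grad φ x))) = 0

/-- The bilinear form `B₂`. -/
def B2 {n : ℕ} (A : (Fin n → ℝ) → Matrix (Fin n) (Fin n) ℝ)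
    (b : (Fin n → ℝ) → Fin n → ℝ) (v w : (Fin n → ℝ) → Fin n → ℝ) : ℝ :=
  (∫ x in unitCell n,
    divg v x * (frobInner (gam A b x • A x) (jac w x) + dotc (gam A b x • b x) (w x)))
  + (1 / 2) * ∫ x in unitCell n,
      frobInner (jac v x - (jac v x).transpose) (jac w x - (jac w x).transpose)

section

namespace TorusCordes

attribute [local instance] instMeasureSpaceUnitAddCircle

open UnitAddTorus ComplexConjugate
open scoped ENNReal

local instance : Measure.IsAddHaarMeasure (volume : Measure UnitAddCircle) :=
  inferInstanceAs (Measure.IsAddHaarMeasure AddCircle.haarAddCircle)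

local instance : IsProbabilityMeasure (volume : Measure UnitAddCircle) :=
  inferInstanceAs (IsProbabilityMeasure AddCircle.haarAddCircle)

/-- Complex-valued square-integrable functions on the torus. -/
abbrev H (n : ℕ) : Type := Lp ℂ 2 (volume : Measure (UnitAddTorus (Fin n)))

variable {n : ℕ} {ι : Type*} [Fintype ι]

/-- The inclusion of continuous functions on the torus into `L²`. -/
abbrev toH : C(UnitAddTorus (Fin n), ℂ) →L[ℂ] H n := ContinuousMap.toLp 2 volume ℂ

/-- The variable-coefficient symbol `∑ i, αᵢ(x) mᵢ(k)`. -/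
def symb (α : ι → UnitAddTorus (Fin n) → ℝ) (m : ι → (Fin n → ℤ) → ℂ) (k : Fin n → ℤ)
    (x : UnitAddTorus (Fin n)) : ℂ := ∑ i, (α i x : ℂ) * m i k

lemma norm_toH_le (f : C(UnitAddTorus (Fin n), ℂ)) : ‖toH f‖ ≤ ‖f‖ := by
  refine ((toH (n := n)).le_opNorm f).trans ?_
  have h : ‖(toH (n := n))‖ ≤ 1 := by
    refine (ContinuousMap.toLp_norm_le (volume : Measure (UnitAddTorus (Fin n)))).trans ?_
    simp [measureUnivNNReal]
  nlinarith [norm_nonneg f]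

lemma norm_sq_eq_integral (f : H n) : ‖f‖ ^ 2 = ∫ x, ‖f x‖ ^ 2 := by
  have := congrArg Complex.re (L2.inner_def (𝕜 := ℂ) f f)
  rw [inner_self_eq_norm_sq_to_K] at this
  have h2 : (∫ x, inner ℂ (f x) (f x)) = ((∫ x, ‖f x‖ ^ 2 : ℝ) : ℂ) := by
    rw [← integral_complex_ofReal]
    congr with x
    rw [inner_self_eq_norm_sq_to_K]; norm_cast
  rw [h2] at this
  norm_cast at this

lemma integrable_norm_sq (f : H n) : Integrable (fun x => ‖f x‖ ^ 2) := by
  simpa using (Lp.memLp f).integrable_norm_pow (by norm_num)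

lemma norm_le_of_ae_le (w : H n) (F : ι → H n) (R : ℝ)
    (h : ∀ᵐ x, ‖w x‖ ^ 2 ≤ R ^ 2 * ∑ i, ‖F i x‖ ^ 2) :
    ‖w‖ ^ 2 ≤ R ^ 2 * ∑ i, ‖F i‖ ^ 2 := by
  simp_rw [norm_sq_eq_integral]
  rw [← integral_finsetSum _ (fun i _ => integrable_norm_sq _), ← integral_const_mul]
  refine integral_mono_ae (integrable_norm_sq _) ?_ h
  exact (integrable_finsetSum _ (fun i _ => integrable_norm_sq _)).const_mul _

lemma norm_sq_sum_smul (s : Finset (Fin n → ℤ)) (c : (Fin n → ℤ) → ℂ) :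
    ‖∑ k ∈ s, c k • mFourierLp (d := Fin n) 2 k‖ ^ 2 = ∑ k ∈ s, ‖c k‖ ^ 2 := by
  have := (orthonormal_mFourier (d := Fin n)).inner_sum c c s
  rw [inner_self_eq_norm_sq_to_K] at this
  have h2 : (∑ i ∈ s, conj (c i) * c i) = ((∑ k ∈ s, ‖c k‖ ^ 2 : ℝ) : ℂ) := by
    push_cast
    exact Finset.sum_congr rfl fun i _ => by rw [mul_comm, Complex.mul_conj']
  rw [h2] at this
  exact Complex.ofReal_injective (by simpa using this)

lemma coeFn_sum_smul (s : Finset (Fin n → ℤ)) (c : (Fin n → ℤ) → ℂ) (w : (Fin n → ℤ) → H n)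
    (f : (Fin n → ℤ) → UnitAddTorus (Fin n) → ℂ) (hw : ∀ k, w k =ᵐ[volume] f k) :
    (∑ k ∈ s, c k • w k : H n) =ᵐ[volume] fun x => ∑ k ∈ s, c k * f k x := by
  have h1 : ∀ k ∈ s, (c k • w k : H n) =ᵐ[volume] fun x => c k * f k x := by
    intro k _
    filter_upwards [Lp.coeFn_smul (c k) (w k), hw k] with x h1 h2
    rw [h1, Pi.smul_apply, h2, smul_eq_mul]
  have h2 := Lp.coeFn_finsetSum s (fun k => c k • w k)
  have h3 : ∀ᵐ x, ∀ k ∈ s, (c k • w k : H n) x = c k * f k x :=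
    (Finset.eventually_all s).2 h1
  filter_upwards [h2, h3] with x h2 h3
  rw [h2, Finset.sum_apply]
  exact Finset.sum_congr rfl h3

lemma denseRange_linearCombination :
    DenseRange (Finsupp.linearCombination ℂ (mFourierLp (d := Fin n) 2)) := by
  have := span_mFourierLp_closure_eq_top (d := Fin n) (p := 2) (by simp)
  rw [← Finsupp.range_linearCombination] at this
  exact Submodule.dense_iff_topologicalClosure_eq_top.2 this

lemma norm_sum_mul_sq_le (a : ι → ℝ) (z : ι → ℂ) :
    ‖∑ i, (a i : ℂ) * z i‖ ^ 2 ≤ (∑ i, a i ^ 2) * ∑ i, ‖z i‖ ^ 2 := by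
  have h1 : ‖∑ i, (a i : ℂ) * z i‖ ≤ ∑ i, |a i| * ‖z i‖ :=
    (norm_sum_le _ _).trans (le_of_eq (by simp))
  calc _ ≤ (∑ i, |a i| * ‖z i‖) ^ 2 := by gcongr
    _ ≤ (∑ i, |a i| ^ 2) * ∑ i, ‖z i‖ ^ 2 := Finset.sum_mul_sq_le_sq_mul_sq _ _ _
    _ = _ := by simp

lemma exists_perturbation (α : ι → UnitAddTorus (Fin n) → ℝ) (m : ι → (Fin n → ℤ) → ℂ) {R M : ℝ}
    (hR : 0 ≤ R) (hM : 0 ≤ M) (hα : ∀ i, AEStronglyMeasurable (α i))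
    (hαR : ∀ᵐ x, ∑ i, α i x ^ 2 ≤ R ^ 2) (hm : ∀ k, ∑ i, ‖m i k‖ ^ 2 ≤ M ^ 2) :
    ∃ K : H n →L[ℂ] H n, ‖K‖ ≤ R * M ∧
      ∀ k, K (mFourierLp 2 k) =ᵐ[volume] fun x => symb α m k x * mFourier k x := by
  have hsm : ∀ k, AEStronglyMeasurable (fun x => symb α m k x * mFourier k x) := by
    intro k
    refine AEStronglyMeasurable.mul ?_ (by fun_prop)
    refine Finset.aestronglyMeasurable_fun_sum _ fun i _ => ?_
    exact (Complex.continuous_ofReal.comp_aestronglyMeasurable (hα i)).mul_const _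
  have hw : ∀ k, MemLp (fun x => symb α m k x * mFourier k x) 2 := by
    intro k
    refine MemLp.of_bound (hsm k) (R * M) ?_
    filter_upwards [hαR] with x hx
    have h1 : ‖(mFourier k x : ℂ)‖ ≤ 1 := by
      simpa [mFourier_norm] using (mFourier k).norm_coe_le_norm x
    have h2 : ‖symb α m k x‖ ≤ R * M := by
      refine abs_le_of_sq_le_sq' ?_ (by positivity) |>.2
      refine (norm_sum_mul_sq_le _ _).trans ?_
      rw [mul_pow]
      exact mul_le_mul hx (hm k) (by positivity) (by positivity)
    rw [norm_mul]
    nlinarith [norm_nonneg (symb α m k x)]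
  set w : (Fin n → ℤ) → H n := fun k => (hw k).toLp _
  have key : ∀ c, ‖Finsupp.linearCombination ℂ w c‖ ≤
      (R * M) * ‖Finsupp.linearCombination ℂ (mFourierLp 2) c‖ := by
    intro c
    rw [Finsupp.linearCombination_apply, Finsupp.linearCombination_apply, Finsupp.sum, Finsupp.sum]
    set F : ι → H n := fun i => ∑ k ∈ c.support, (c k * m i k) • mFourierLp 2 k
    have hF : ∀ᵐ x, ∀ i, F i x = ∑ k ∈ c.support, (c k * m i k) * mFourier k x :=
      ae_all_iff.2 fun i => coeFn_sum_smul _ (fun k => c k * m i k) _ _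
        fun k => coeFn_mFourierLp 2 k
    have h1 : ‖∑ k ∈ c.support, c k • w k‖ ^ 2 ≤ R ^ 2 * ∑ i, ‖F i‖ ^ 2 := by
      refine norm_le_of_ae_le _ _ _ ?_
      filter_upwards [hF, hαR, coeFn_sum_smul c.support c w _ fun k => (hw k).coeFn_toLp]
        with x hx hxR hxw
      have : (∑ k ∈ c.support, c k • w k : H n) x = ∑ i, (α i x : ℂ) * F i x := by
        rw [hxw]
        simp_rw [hx, symb, Finset.sum_mul, Finset.mul_sum]
        rw [Finset.sum_comm]
        refine Finset.sum_congr rfl fun i _ => Finset.sum_congr rfl fun k _ => by ring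
      rw [this]
      refine (norm_sum_mul_sq_le _ _).trans ?_
      gcongr
    have h2 : ∑ i, ‖F i‖ ^ 2 ≤ M ^ 2 * ‖∑ k ∈ c.support, c k • mFourierLp (d := Fin n) 2 k‖ ^ 2 := by
      simp_rw [F, norm_sq_sum_smul, norm_mul, mul_pow]
      rw [Finset.sum_comm, Finset.mul_sum]
      refine Finset.sum_le_sum fun k _ => ?_
      rw [← Finset.mul_sum, mul_comm]
      gcongr
      exact hm k
    refine abs_le_of_sq_le_sq' ?_ (by positivity) |>.2
    calc _ ≤ R ^ 2 * ∑ i, ‖F i‖ ^ 2 := h1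
      _ ≤ R ^ 2 * (M ^ 2 * ‖∑ k ∈ c.support, c k • mFourierLp (d := Fin n) 2 k‖ ^ 2) := by gcongr
      _ = _ := by ring
  refine ⟨(Finsupp.linearCombination ℂ w).extendOfNorm
    (Finsupp.linearCombination ℂ (mFourierLp 2)), ?_, fun k => ?_⟩
  · exact LinearMap.opNorm_extendOfNorm_le denseRange_linearCombination (by positivity) key
  · have := LinearMap.extendOfNorm_eq denseRange_linearCombination ⟨_, key⟩ (Finsupp.single k 1)
    simp only [Finsupp.linearCombination_single, one_smul] at this
    rw [this]
    exact (hw k).coeFn_toLp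

/-- The frequencies `k ∈ ℤⁿ` with `|kᵢ| ≤ d` for all `i`. -/
def box (n d : ℕ) : Finset (Fin n → ℤ) := Fintype.piFinset fun _ => Finset.Icc (-d : ℤ) d

/-- Trigonometric polynomials of degree at most `d` in each variable. -/
def trig (n d : ℕ) : Submodule ℂ C(UnitAddTorus (Fin n), ℂ) :=
  Submodule.span ℂ (mFourier '' (box n d : Set (Fin n → ℤ)))

lemma mem_box {d : ℕ} {k : Fin n → ℤ} : k ∈ box n d ↔ ∀ i, |k i| ≤ d := by
  simp [box, abs_le]

lemma card_box (d : ℕ) : (box n d).card = (2 * d + 1) ^ n := by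
  simp only [box, Fintype.card_piFinset, Int.card_Icc, Finset.prod_const, Finset.card_univ,
    Fintype.card_fin]
  congr 1
  omega

lemma trig_mono {d e : ℕ} (h : d ≤ e) : trig n d ≤ trig n e := by
  refine Submodule.span_mono (Set.image_mono fun k hk => ?_)
  simp only [Finset.mem_coe, mem_box] at hk ⊢
  exact fun i => (hk i).trans (by exact_mod_cast h)

lemma mFourier_mem_trig {d : ℕ} {k : Fin n → ℤ} (hk : k ∈ box n d) : mFourier k ∈ trig n d :=
  Submodule.subset_span ⟨k, hk, rfl⟩

lemma exists_coeff_of_mem_trig {d : ℕ} {p : C(UnitAddTorus (Fin n), ℂ)} (hp : p ∈ trig n d) :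
    ∃ c : (Fin n → ℤ) → ℂ, p = ∑ k ∈ box n d, c k • mFourier k := by
  obtain ⟨c, hc⟩ := (Submodule.mem_span_image_finset_iff_exists_fun ℂ).1 hp
  refine ⟨fun k => if h : k ∈ box n d then c ⟨k, h⟩ else 0, ?_⟩
  rw [← hc, ← Finset.sum_coe_sort (box n d)]
  simp

lemma toH_sum (s : Finset (Fin n → ℤ)) (c : (Fin n → ℤ) → ℂ) :
    toH (∑ k ∈ s, c k • mFourier k) = ∑ k ∈ s, c k • mFourierLp 2 k := by
  simp [map_sum]

lemma norm_le_of_mem_trig {d : ℕ} {p : C(UnitAddTorus (Fin n), ℂ)} (hp : p ∈ trig n d) :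
    ‖p‖ ≤ (2 * d + 1) ^ n * ‖toH p‖ := by
  obtain ⟨c, rfl⟩ := exists_coeff_of_mem_trig hp
  have h := norm_sq_sum_smul (box n d) c
  rw [toH_sum]
  calc _ ≤ ∑ k ∈ box n d, ‖c k • mFourier (d := Fin n) k‖ := norm_sum_le _ _
    _ ≤ ∑ k ∈ box n d, ‖∑ k ∈ box n d, c k • mFourierLp (d := Fin n) 2 k‖ := by
        refine Finset.sum_le_sum fun k hk => ?_
        rw [norm_smul, mFourier_norm, mul_one]
        refine abs_le_of_sq_le_sq' ?_ (by positivity) |>.2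
        rw [h]
        exact Finset.single_le_sum (f := fun k => ‖c k‖ ^ 2) (fun _ _ => by positivity) hk
    _ = _ := by rw [Finset.sum_const, card_box]; simp

lemma mul_mem_trig {d e : ℕ} {p q : C(UnitAddTorus (Fin n), ℂ)} (hp : p ∈ trig n d)
    (hq : q ∈ trig n e) : p * q ∈ trig n (d + e) := by
  have h := Submodule.mul_mem_mul hp hq
  rw [trig, trig, Submodule.span_mul_span] at h
  refine Submodule.span_mono ?_ h
  rintro _ ⟨_, ⟨k, hk, rfl⟩, _, ⟨l, hl, rfl⟩, rfl⟩
  refine ⟨k + l, ?_, by ext x; simp [mFourier_add]⟩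
  simp only [Finset.mem_coe, mem_box] at hk hl ⊢
  intro i
  push_cast
  exact (abs_add_le _ _).trans (add_le_add (hk i) (hl i))

lemma star_mem_trig {d : ℕ} {p : C(UnitAddTorus (Fin n), ℂ)} (hp : p ∈ trig n d) :
    star p ∈ trig n d := by
  obtain ⟨c, rfl⟩ := exists_coeff_of_mem_trig hp
  rw [star_sum]
  refine Submodule.sum_mem _ fun k hk => ?_
  rw [star_smul]
  refine Submodule.smul_mem _ _ ?_
  have : star (mFourier k) = mFourier (-k) := by
    ext x; simp [mFourier_neg]
  rw [this]
  exact mFourier_mem_trig (by simpa [mem_box] using hk)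

lemma exists_mem_trig_of_mem_span {p : C(UnitAddTorus (Fin n), ℂ)}
    (hp : p ∈ Submodule.span ℂ (Set.range (mFourier (d := Fin n)))) : ∃ d, p ∈ trig n d := by
  induction hp using Submodule.span_induction with
  | mem x h =>
    obtain ⟨k, rfl⟩ := h
    refine ⟨∑ i, (k i).natAbs, mFourier_mem_trig (mem_box.2 fun i => ?_)⟩
    rw [Int.abs_eq_natAbs]
    exact_mod_cast Finset.single_le_sum (f := fun i => (k i).natAbs) (fun _ _ => Nat.zero_le _)
      (Finset.mem_univ i)
  | zero => exact ⟨0, Submodule.zero_mem _⟩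
  | add x y _ _ hx hy =>
    obtain ⟨d, hd⟩ := hx
    obtain ⟨e, he⟩ := hy
    exact ⟨max d e, Submodule.add_mem _ (trig_mono (le_max_left _ _) hd)
      (trig_mono (le_max_right _ _) he)⟩
  | smul a x _ hx =>
    obtain ⟨d, hd⟩ := hx
    exact ⟨d, Submodule.smul_mem _ _ hd⟩

lemma exists_trig_near (f : C(UnitAddTorus (Fin n), ℂ)) {ε : ℝ} (hε : 0 < ε) :
    ∃ d, ∃ p ∈ trig n d, ‖f - p‖ < ε := by
  have hf : f ∈ (Submodule.span ℂ (Set.range (mFourier (d := Fin n)))).topologicalClosure := by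
    rw [span_mFourier_closure_eq_top]; trivial
  obtain ⟨p, hp, hpe⟩ := Metric.mem_closure_iff.1 hf ε hε
  obtain ⟨d, hd⟩ := exists_mem_trig_of_mem_span hp
  exact ⟨d, p, hd, by rwa [← dist_eq_norm]⟩

lemma exists_trig_near_L2 (u : H n) {ε : ℝ} (hε : 0 < ε) :
    ∃ d, ∃ p ∈ trig n d, ‖u - toH p‖ < ε := by
  have hu : u ∈ closure (Set.range (toH (n := n))) :=
    ContinuousMap.toLp_denseRange ℂ volume ℂ (by simp) u
  obtain ⟨_, ⟨f, rfl⟩, hf⟩ := Metric.mem_closure_iff.1 hu (ε / 2) (half_pos hε)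
  obtain ⟨d, p, hp, hpe⟩ := exists_trig_near f (half_pos hε)
  refine ⟨d, p, hp, ?_⟩
  have h1 := norm_toH_le (f - p)
  rw [map_sub] at h1
  rw [dist_eq_norm] at hf
  calc _ ≤ ‖u - toH f‖ + ‖toH f - toH p‖ := norm_sub_le_norm_sub_add_norm_sub _ _ _
    _ < _ := by linarith

lemma perturbation_toH {α : ι → UnitAddTorus (Fin n) → ℝ}
    {m : ι → (Fin n → ℤ) → ℂ} {K : H n →L[ℂ] H n}
    (hK : ∀ k, K (mFourierLp 2 k) =ᵐ[volume] fun x => symb α m k x * mFourier k x)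
    (a : ι → C(UnitAddTorus (Fin n), ℂ)) (haα : ∀ i x, a i x = α i x)
    (s : Finset (Fin n → ℤ)) (c : (Fin n → ℤ) → ℂ) :
    K (toH (∑ k ∈ s, c k • mFourier k)) =
      toH (∑ k ∈ s, c k • ∑ i, m i k • (a i * mFourier k)) := by
  have h1 : ∀ k, K (mFourierLp 2 k) = toH (∑ i, m i k • (a i * mFourier k)) := by
    intro k
    refine Lp.ext ((hK k).trans
      (Filter.EventuallyEq.trans ?_ (ContinuousMap.coeFn_toLp volume _).symm))
    refine Filter.Eventually.of_forall fun x => ?_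
    simp only [symb, Finset.sum_mul, ContinuousMap.coe_sum, Finset.sum_apply,
      ContinuousMap.coe_smul, Pi.smul_apply, ContinuousMap.coe_mul, Pi.mul_apply, haα, smul_eq_mul]
    exact Finset.sum_congr rfl fun i _ => by ring
  simp only [map_sum, map_smul, h1]

lemma exists_toH_eq_perturbation {D d : ℕ} {α : ι → UnitAddTorus (Fin n) → ℝ}
    {m : ι → (Fin n → ℤ) → ℂ} {K : H n →L[ℂ] H n}
    (hK : ∀ k, K (mFourierLp 2 k) =ᵐ[volume] fun x => symb α m k x * mFourier k x)
    (a : ι → C(UnitAddTorus (Fin n), ℂ)) (ha : ∀ i, a i ∈ trig n D)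
    (haα : ∀ i x, a i x = α i x) {p : C(UnitAddTorus (Fin n), ℂ)} (hp : p ∈ trig n d) :
    ∃ q ∈ trig n (D + d), K (toH p) = toH q := by
  obtain ⟨c, rfl⟩ := exists_coeff_of_mem_trig hp
  refine ⟨_, ?_, perturbation_toH hK a haα _ c⟩
  exact Submodule.sum_mem _ fun k hk => Submodule.smul_mem _ _ <| Submodule.sum_mem _ fun i _ =>
    Submodule.smul_mem _ _ <| mul_mem_trig (ha i) (mFourier_mem_trig hk)

lemma exists_neumann {D d : ℕ} {θ : ℝ} (hθ0 : 0 ≤ θ) (hθ : θ < 1) {S : H n →L[ℂ] H n}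
    (hS : ‖S‖ ≤ θ) (hSt : ∀ e, ∀ p ∈ trig n e, ∃ q ∈ trig n (D + e), S (toH p) = toH q)
    {h : C(UnitAddTorus (Fin n), ℂ)} (hh : h ∈ trig n d) {η : ℝ} (hη : 0 < η) :
    ∃ e, ∃ u ∈ trig n e, ∃ q ∈ trig n e, ‖toH u‖ ≤ ‖toH h‖ / (1 - θ) ∧ ‖q‖ ≤ η ∧
      toH u - S (toH u) = toH h - toH q := by
  have hp : ∀ j : ℕ, ∃ p ∈ trig n (d + j * D), toH p = (S ^ j) (toH h) := by
    intro j
    induction j with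
    | zero => exact ⟨h, by simpa using hh, by simp⟩
    | succ j ih =>
      obtain ⟨p, hp, hpj⟩ := ih
      obtain ⟨q, hq, hpq⟩ := hSt _ p hp
      refine ⟨q, by convert hq using 2; ring, ?_⟩
      rw [← hpq, hpj, pow_succ']; rfl
  choose p hpt hpS using hp
  have hnorm : ∀ j, ‖toH (p j)‖ ≤ θ ^ j * ‖toH h‖ := by
    intro j
    induction j with
    | zero => simp [hpS]
    | succ j ih =>
      have : toH (p (j + 1)) = S (toH (p j)) := by rw [hpS, hpS, pow_succ']; rfl
      rw [this, pow_succ', mul_assoc]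
      exact (S.le_of_opNorm_le hS _).trans (by gcongr)
  have hlim : Filter.Tendsto (fun j : ℕ => (2 * ((d + j * D : ℕ) : ℝ) + 1) ^ n *
      (θ ^ j * ‖toH h‖)) Filter.atTop (nhds 0) := by
    have h0 := (tendsto_pow_const_mul_const_pow_of_abs_lt_one n
      (by rwa [abs_of_nonneg hθ0] : |θ| < 1)).const_mul ((2 * d + 2 * D + 1 : ℝ) ^ n * ‖toH h‖)
    rw [mul_zero] at h0
    refine squeeze_zero' (Filter.Eventually.of_forall fun j => by positivity) ?_ h0
    filter_upwards [Filter.eventually_ge_atTop 1] with j hj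
    have hj' : (1 : ℝ) ≤ j := by exact_mod_cast hj
    have h2 : (2 * ((d + j * D : ℕ) : ℝ) + 1) ≤ (2 * d + 2 * D + 1) * j := by
      push_cast
      nlinarith [(Nat.cast_nonneg d : (0 : ℝ) ≤ d)]
    calc _ ≤ ((2 * d + 2 * D + 1 : ℝ) * j) ^ n * (θ ^ j * ‖toH h‖) := by gcongr
      _ = _ := by rw [mul_pow]; ring
  obtain ⟨J, hJ⟩ := (hlim.eventually (ge_mem_nhds hη)).exists
  refine ⟨d + J * D, ∑ j ∈ Finset.range J, p j, ?_, p J, hpt J, ?_, ?_, ?_⟩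
  · refine Submodule.sum_mem _ fun j hj => trig_mono ?_ (hpt j)
    have := (Finset.mem_range.1 hj).le
    gcongr
  · rw [map_sum]
    refine (norm_sum_le _ _).trans ?_
    refine (Finset.sum_le_sum fun j _ => hnorm j).trans ?_
    rw [← Finset.sum_mul, div_eq_inv_mul]
    gcongr
    rw [← tsum_geometric_of_lt_one hθ0 hθ]
    exact (summable_geometric_of_lt_one hθ0 hθ).sum_le_tsum _ (fun _ _ => by positivity)
  · refine (norm_le_of_mem_trig (hpt J)).trans (le_trans ?_ hJ)
    gcongr
    exact hnorm J
  · rw [map_sum, map_sum]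
    have : ∀ j, S (toH (p j)) = toH (p (j + 1)) := by
      intro j
      rw [hpS, hpS, pow_succ']; rfl
    simp_rw [this]
    rw [← Finset.sum_sub_distrib, Finset.sum_range_sub' (fun j => toH (p j)), hpS 0]
    simp

lemma exists_trig_coeff_near {α : ι → UnitAddTorus (Fin n) → ℝ} {R R' : ℝ} (hR : 0 < R)
    (hRR : R < R') (hα : ∀ i, AEStronglyMeasurable (α i)) (hαR : ∀ᵐ x, ∑ i, α i x ^ 2 ≤ R ^ 2)
    {η : ℝ} (hη : 0 < η) :
    ∃ (D : ℕ) (a : ι → C(UnitAddTorus (Fin n), ℂ)) (β : ι → UnitAddTorus (Fin n) → ℝ),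
      (∀ i, a i ∈ trig n D) ∧ (∀ i x, a i x = β i x) ∧ (∀ x, ∑ i, β i x ^ 2 ≤ R' ^ 2) ∧
      ∀ i, ∫ x, (β i x - α i x) ^ 2 ≤ η := by
  classical
  set F : UnitAddTorus (Fin n) → EuclideanSpace ℝ ι := fun x => WithLp.toLp 2 fun i => α i x
  have hFn : ∀ᵐ x, ‖F x‖ ≤ R := by
    filter_upwards [hαR] with x hx
    rw [EuclideanSpace.norm_eq]
    refine Real.sqrt_le_iff.2 ⟨hR.le, by simpa [F] using hx⟩
  have hFm : AEStronglyMeasurable F := by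
    refine (PiLp.continuous_toLp 2 _).comp_aestronglyMeasurable ?_
    exact (aemeasurable_pi_lambda _ fun i => (hα i).aemeasurable).aestronglyMeasurable
  have hF : MemLp F (ENNReal.ofReal 2) := MemLp.of_bound hFm R hFn
  obtain ⟨g, hg, -⟩ := hF.exists_boundedContinuous_integral_rpow_sub_le (by norm_num)
    (show 0 < η / 16 by positivity)
  set G : UnitAddTorus (Fin n) → EuclideanSpace ℝ ι := fun x => (R / max R ‖g x‖) • g x
  have hmax : ∀ x, 0 < max R ‖g x‖ := fun x => lt_of_lt_of_le hR (le_max_left _ _)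
  have hGc : Continuous G := by
    refine Continuous.smul (Continuous.div continuous_const (by fun_prop) fun x => (hmax x).ne')
      (by fun_prop)
  have hGn : ∀ x, ‖G x‖ ≤ R := by
    intro x
    rw [norm_smul, Real.norm_of_nonneg (div_nonneg hR.le (hmax x).le), div_mul_eq_mul_div,
      div_le_iff₀ (hmax x)]
    gcongr
    exact le_max_right _ _
  have hGF : ∀ᵐ x, ‖G x - F x‖ ≤ 2 * ‖F x - g x‖ := by
    filter_upwards [hFn] with x hx
    have h1 : ‖G x - g x‖ ≤ ‖F x - g x‖ := by
      have : G x - g x = (R / max R ‖g x‖ - 1) • g x := by simp [G, sub_smul]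
      rw [this, norm_smul]
      rcases le_total ‖g x‖ R with h | h
      · rw [max_eq_left h, div_self hR.ne']; simp
      · have hg0 : 0 < ‖g x‖ := hR.trans_le h
        rw [max_eq_right h, Real.norm_of_nonpos (by rw [sub_nonpos, div_le_one hg0]; exact h)]
        have : -(R / ‖g x‖ - 1) * ‖g x‖ = ‖g x‖ - R := by field_simp; ring
        rw [this]
        have := norm_sub_norm_le (g x) (F x)
        rw [norm_sub_rev] at this
        linarith
    calc _ ≤ ‖G x - g x‖ + ‖g x - F x‖ := norm_sub_le_norm_sub_add_norm_sub _ _ _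
      _ ≤ _ := by rw [norm_sub_rev (g x)]; linarith
  obtain ⟨e, he0, he1, he2⟩ : ∃ e : ℝ, 0 < e ∧ 4 * e ^ 2 ≤ η ∧
      (Fintype.card ι : ℝ) * (2 * e * R + e ^ 2) ≤ R' ^ 2 - R ^ 2 := by
    have h1 : Filter.Tendsto (fun e : ℝ => 4 * e ^ 2) (nhdsWithin 0 (Set.Ioi 0)) (nhds 0) := by
      refine tendsto_nhdsWithin_of_tendsto_nhds ?_
      exact (show Continuous fun e : ℝ => 4 * e ^ 2 by fun_prop).tendsto' _ _ (by simp)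
    have h2 : Filter.Tendsto (fun e : ℝ => (Fintype.card ι : ℝ) * (2 * e * R + e ^ 2))
        (nhdsWithin 0 (Set.Ioi 0)) (nhds 0) := by
      refine tendsto_nhdsWithin_of_tendsto_nhds ?_
      exact (show Continuous fun e : ℝ => (Fintype.card ι : ℝ) * (2 * e * R + e ^ 2) by
        fun_prop).tendsto' _ _ (by simp)
    have h3 : 0 < R' ^ 2 - R ^ 2 := by nlinarith
    obtain ⟨e, h⟩ := ((h1.eventually (ge_mem_nhds hη)).and
      ((h2.eventually (ge_mem_nhds h3)).and self_mem_nhdsWithin)).exists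
    exact ⟨e, h.2.2, h.1, h.2.1⟩
  have hp : ∀ i, ∃ d, ∃ p ∈ trig n d,
      ‖(⟨fun x => (G x i : ℂ), by fun_prop⟩ : C(UnitAddTorus (Fin n), ℂ)) - p‖ < e :=
    fun i => exists_trig_near _ he0
  choose d p hpt hpe using hp
  have hpe' : ∀ i x, |(p i x).re - G x i| ≤ e := by
    intro i x
    have h1 := (ContinuousMap.norm_coe_le_norm _ x).trans (hpe i).le
    have h2 := (Complex.abs_re_le_norm _).trans h1
    rw [abs_sub_comm]
    simpa using h2
  refine ⟨∑ i, d i, fun i => (1 / 2 : ℂ) • (p i + star (p i)), fun i x => (p i x).re,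
    fun i => ?_, fun i x => ?_, fun x => ?_, fun i => ?_⟩
  · refine Submodule.smul_mem _ _ (trig_mono (Finset.single_le_sum (f := d)
      (fun _ _ => Nat.zero_le _) (Finset.mem_univ i)) ?_)
    exact Submodule.add_mem _ (hpt i) (star_mem_trig (hpt i))
  · simp [Complex.ext_iff]
    ring
  · have h1 : ∑ i, (G x i) ^ 2 ≤ R ^ 2 := by
      have := hGn x
      rw [EuclideanSpace.norm_eq] at this
      simpa using (Real.sqrt_le_iff.1 this).2
    have hGi : ∀ i, |G x i| ≤ R := fun i =>
      (by simpa using PiLp.norm_apply_le (G x) i : |G x i| ≤ ‖G x‖).trans (hGn x)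
    calc ∑ i, (p i x).re ^ 2 ≤ ∑ i, ((G x i) ^ 2 + (2 * e * R + e ^ 2)) := by
          refine Finset.sum_le_sum fun i _ => ?_
          have h3 := hpe' i x
          have h4 := hGi i
          have h5 : (p i x).re ^ 2 = (G x i) ^ 2 + 2 * ((p i x).re - G x i) * G x i +
            ((p i x).re - G x i) ^ 2 := by ring
          have h6 : ((p i x).re - G x i) * G x i ≤ e * R :=
            (le_abs_self _).trans (by rw [abs_mul]; gcongr)
          have h7 : ((p i x).re - G x i) ^ 2 ≤ e ^ 2 := by
            rw [← sq_abs]; gcongr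
          linarith
      _ ≤ R' ^ 2 := by
          rw [Finset.sum_add_distrib, Finset.sum_const, nsmul_eq_mul, Finset.card_univ]
          linarith
  · have hgi : Integrable fun x => ‖F x - g x‖ ^ (2 : ℝ) := by
      have : MemLp (fun x => F x - g x) (ENNReal.ofReal 2) :=
        hF.sub (MemLp.of_bound (by fun_prop) ‖g‖ (Filter.Eventually.of_forall g.norm_coe_le_norm))
      simpa using this.integrable_norm_rpow (by simp) (by simp)
    calc ∫ x, ((p i x).re - α i x) ^ 2 ≤ ∫ x, (2 * e ^ 2 + 8 * ‖F x - g x‖ ^ (2 : ℝ)) := by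
          refine integral_mono_of_nonneg (Filter.Eventually.of_forall fun x => by positivity)
            ((integrable_const _).add (hgi.const_mul _)) ?_
          filter_upwards [hGF] with x hx
          have h1 := hpe' i x
          have h2 : |G x i - α i x| ≤ 2 * ‖F x - g x‖ := by
            have := PiLp.norm_apply_le (G x - F x) i
            simp only [PiLp.sub_apply, Real.norm_eq_abs] at this
            exact this.trans hx
          have h3 : |(p i x).re - α i x| ≤ e + 2 * ‖F x - g x‖ :=
            (abs_sub_le _ (G x i) _).trans (add_le_add h1 h2)
          rw [← sq_abs]
          simp only [Real.rpow_two]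
          have h4 : |(p i x).re - α i x| ^ 2 ≤ (e + 2 * ‖F x - g x‖) ^ 2 := by gcongr
          nlinarith [sq_nonneg (e - 2 * ‖F x - g x‖)]
      _ ≤ η := by
          have h8 : ∫ x, 8 * ‖F x - g x‖ ^ (2 : ℝ) = 8 * ∫ x, ‖F x - g x‖ ^ (2 : ℝ) :=
            integral_const_mul _ _
          rw [integral_add (integrable_const _) (hgi.const_mul _), h8, integral_const]
          simp only [probReal_univ, one_smul]
          linarith

lemma norm_perturbation_sub_sq_le {α β : ι → UnitAddTorus (Fin n) → ℝ}
    {m : ι → (Fin n → ℤ) → ℂ} {M η : ℝ} {K K' : H n →L[ℂ] H n}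
    (hK : ∀ k, K (mFourierLp 2 k) =ᵐ[volume] fun x => symb α m k x * mFourier k x)
    (hK' : ∀ k, K' (mFourierLp 2 k) =ᵐ[volume] fun x => symb β m k x * mFourier k x)
    (hm : ∀ k, ∑ i, ‖m i k‖ ^ 2 ≤ M ^ 2)
    (hinteg : ∀ i, Integrable fun x => (β i x - α i x) ^ 2)
    (hη : ∀ i, ∫ x, (β i x - α i x) ^ 2 ≤ η) (k : Fin n → ℤ) :
    ‖K' (mFourierLp 2 k) - K (mFourierLp 2 k)‖ ^ 2 ≤ M ^ 2 * (Fintype.card ι * η) := by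
  rw [norm_sq_eq_integral]
  calc _ ≤ ∫ x, M ^ 2 * ∑ i, (β i x - α i x) ^ 2 := by
        refine integral_mono_ae (integrable_norm_sq _)
          ((integrable_finsetSum _ fun i _ => hinteg i).const_mul _) ?_
        filter_upwards [Lp.coeFn_sub (K' (mFourierLp 2 k)) (K (mFourierLp 2 k)), hK k, hK' k]
          with x h1 h2 h3
        simp only [h1, Pi.sub_apply, h2, h3]
        have h4 : ‖(mFourier k x : ℂ)‖ ≤ 1 :=
          ((mFourier k).norm_coe_le_norm x).trans_eq mFourier_norm
        have h5 : symb β m k x * mFourier k x - symb α m k x * mFourier k x =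
            (∑ i, ((β i x - α i x : ℝ) : ℂ) * m i k) * mFourier k x := by
          simp only [symb, ← sub_mul, ← Finset.sum_sub_distrib, Complex.ofReal_sub]
        rw [h5, norm_mul, mul_pow]
        calc _ ≤ ((∑ i, (β i x - α i x) ^ 2) * ∑ i, ‖m i k‖ ^ 2) * 1 := by
              gcongr
              · exact norm_sum_mul_sq_le _ _
              · exact pow_le_one₀ (norm_nonneg _) h4
          _ ≤ _ := by
              rw [mul_one, mul_comm]
              gcongr
              exact hm k
    _ ≤ _ := by
        rw [integral_const_mul, integral_finsetSum _ fun i _ => hinteg i]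
        gcongr
        refine (Finset.sum_le_sum fun i _ => hη i).trans ?_
        simp

lemma inner_mFourierLp_zero_sum (d : ℕ) (c : (Fin n → ℤ) → ℂ) :
    inner ℂ (mFourierLp 2 0) (toH (∑ k ∈ box n d, c k • mFourier k)) = c 0 := by
  rw [toH_sum]
  exact (orthonormal_mFourier (d := Fin n)).inner_right_sum c (by simp [mem_box])

lemma inner_nonneg_of_trig {m : ι → (Fin n → ℤ) → ℂ} {M R : ℝ} (hM : 1 ≤ M)
    (hm : ∀ k, ∑ i, ‖m i k‖ ^ 2 ≤ M ^ 2)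
    (hmax : ∀ β : ι → UnitAddTorus (Fin n) → ℝ, (∀ x, ∑ i, β i x ^ 2 ≤ 1) →
      ∀ (d : ℕ) (c : (Fin n → ℤ) → ℂ), ∃ x,
        (∑ k ∈ box n d, c k * ((1 + symb β m k x) * mFourier k x)).re ≤ (c 0).re)
    {α : ι → UnitAddTorus (Fin n) → ℝ} (hR : 0 < R) (hRM : R * M < 1)
    (hα : ∀ i, AEStronglyMeasurable (α i)) (hαR : ∀ᵐ x, ∑ i, α i x ^ 2 ≤ R ^ 2)
    {K : H n →L[ℂ] H n} (hKn : ‖K‖ ≤ R * M)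
    (hK : ∀ k, K (mFourierLp 2 k) =ᵐ[volume] fun x => symb α m k x * mFourier k x)
    {d : ℕ} {g : C(UnitAddTorus (Fin n), ℂ)} (hg : g ∈ trig n d) (hg0 : ∀ x, 0 ≤ (g x).re)
    {f : H n} (hf : f + K f = toH g) :
    0 ≤ (inner ℂ (mFourierLp 2 0) f).re := by
  have hM0 : 0 < M := by linarith
  obtain ⟨R', hRR', hR'M⟩ : ∃ R', R < R' ∧ R' * M < 1 := by
    obtain ⟨R', h1, h2⟩ := exists_between ((lt_div_iff₀ hM0).2 hRM)
    exact ⟨R', h1, (lt_div_iff₀ hM0).1 h2⟩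
  set θ := R' * M with hθ
  have hR'0 : 0 < R' := hR.trans hRR'
  have hθ0 : 0 ≤ θ := by positivity
  have hθ1 : 0 < 1 - θ := by linarith
  have hR'1 : R' ≤ 1 := by nlinarith
  refine le_of_forall_pos_le_add fun τ hτ => ?_
  obtain ⟨ε, hε, hετ⟩ : ∃ ε, 0 < ε ∧ ε * (2 + 3 / (1 - θ)) = τ :=
    ⟨τ / (2 + 3 / (1 - θ)), by positivity, by field_simp⟩
  obtain ⟨d₁, p, hp, hpf⟩ := exists_trig_near_L2 f hε
  obtain ⟨c, hc⟩ := exists_coeff_of_mem_trig hp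
  set C := ∑ k ∈ box n d₁, ‖c k‖ with hC
  have hC0 : 0 ≤ C := by positivity
  obtain ⟨η, hη, hηε⟩ : ∃ η, 0 < η ∧ C ^ 2 * (M ^ 2 * (Fintype.card ι * η)) ≤ ε ^ 2 := by
    refine ⟨ε ^ 2 / (C ^ 2 * M ^ 2 * Fintype.card ι + 1), by positivity, ?_⟩
    have : C ^ 2 * (M ^ 2 * (Fintype.card ι * (ε ^ 2 / (C ^ 2 * M ^ 2 * Fintype.card ι + 1)))) =
        (C ^ 2 * M ^ 2 * Fintype.card ι) / (C ^ 2 * M ^ 2 * Fintype.card ι + 1) * ε ^ 2 := by ring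
    rw [this]
    refine mul_le_of_le_one_left (by positivity) ?_
    rw [div_le_one (by positivity)]
    linarith
  obtain ⟨D, a, β, ha, haβ, hβ, hβα⟩ := exists_trig_coeff_near hR hRR' hα hαR hη
  have hβc : ∀ i, Continuous (β i) := by
    intro i
    have : β i = fun x => (a i x).re := by ext x; rw [haβ]; simp
    rw [this]
    fun_prop
  have hinteg : ∀ i, Integrable fun x => (β i x - α i x) ^ 2 := by
    intro i
    refine Integrable.of_bound (((hβc i).aestronglyMeasurable.sub (hα i)).pow 2)
      ((R' + R) ^ 2) ?_
    filter_upwards [hαR] with x hx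
    have h1 : |β i x| ≤ R' := abs_le_of_sq_le_sq ((Finset.single_le_sum
      (f := fun i => β i x ^ 2) (fun _ _ => sq_nonneg _) (Finset.mem_univ i)).trans (hβ x)) hR'0.le
    have h2 : |α i x| ≤ R := abs_le_of_sq_le_sq ((Finset.single_le_sum
      (f := fun i => α i x ^ 2) (fun _ _ => sq_nonneg _) (Finset.mem_univ i)).trans hx) hR.le
    simp only [norm_pow, Real.norm_eq_abs]
    gcongr
    exact (abs_sub _ _).trans (add_le_add h1 h2)
  obtain ⟨K', hK'n, hK'⟩ := exists_perturbation β m hR'0.le hM0.le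
    (fun i => (hβc i).aestronglyMeasurable) (Filter.Eventually.of_forall hβ) hm
  have hclose : ‖K' (toH p) - K (toH p)‖ ≤ ε := by
    rw [hc, toH_sum]
    simp only [map_sum, map_smul, ← Finset.sum_sub_distrib, ← smul_sub]
    have h1 : ∀ k, ‖K' (mFourierLp 2 k) - K (mFourierLp 2 k)‖ ≤
        √(M ^ 2 * (Fintype.card ι * η)) := fun k =>
      Real.le_sqrt_of_sq_le (norm_perturbation_sub_sq_le hK hK' hm hinteg hβα k)
    calc _ ≤ ∑ k ∈ box n d₁, ‖c k‖ * √(M ^ 2 * (Fintype.card ι * η)) := by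
          refine norm_sum_le_of_le _ fun k _ => ?_
          rw [norm_smul]
          gcongr
          exact h1 k
      _ = C * √(M ^ 2 * (Fintype.card ι * η)) := by rw [← Finset.sum_mul]
      _ ≤ ε := by
          refine abs_le_of_sq_le_sq' ?_ hε.le |>.2
          rw [mul_pow, Real.sq_sqrt (by positivity)]
          exact hηε
  have hSt : ∀ e, ∀ p ∈ trig n e, ∃ q ∈ trig n (D + e), (-K') (toH p) = toH q := by
    intro e p hp
    obtain ⟨q, hq, h⟩ := exists_toH_eq_perturbation hK' a ha haβ hp
    exact ⟨-q, Submodule.neg_mem _ hq, by simp [h]⟩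
  obtain ⟨q₁, hq₁, hpq₁⟩ := exists_toH_eq_perturbation hK' a ha haβ hp
  have hh : g - (p + q₁) ∈ trig n (d + (D + d₁)) :=
    Submodule.sub_mem _ (trig_mono (by omega) hg)
      (Submodule.add_mem _ (trig_mono (by omega) hp) (trig_mono (by omega) hq₁))
  have hhn : ‖toH (g - (p + q₁))‖ ≤ 3 * ε := by
    have h1 : toH (g - (p + q₁)) =
        (f - toH p) + K (f - toH p) - (K' (toH p) - K (toH p)) := by
      rw [map_sub, map_add, ← hf, ← hpq₁, map_sub]
      abel
    have h2 : ‖K (f - toH p)‖ ≤ 1 * ‖f - toH p‖ := K.le_of_opNorm_le (hKn.trans hRM.le) _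
    rw [h1]
    refine (norm_sub_le _ _).trans ?_
    have := norm_add_le (f - toH p) (K (f - toH p))
    linarith
  obtain ⟨e, u, hu, q, hq, hun, hqn, huq⟩ :=
    exists_neumann hθ0 hR'M (S := -K') (by simpa using hK'n) hSt hh hε
  have hw : p + u ∈ trig n (max d₁ e) :=
    Submodule.add_mem _ (trig_mono (le_max_left _ _) hp) (trig_mono (le_max_right _ _) hu)
  obtain ⟨c', hc'⟩ := exists_coeff_of_mem_trig hw
  obtain ⟨x, hx⟩ := hmax β (fun x => (hβ x).trans (by nlinarith)) (max d₁ e) c'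
  have heq : (p + u) + ∑ k ∈ box n (max d₁ e), c' k • ∑ i, m i k • (a i * mFourier k) = g - q := by
    refine ContinuousMap.toLp_injective (p := 2) (𝕜 := ℂ) volume ?_
    change toH _ = toH _
    rw [map_add toH (p + u), ← perturbation_toH hK' a haβ, ← hc', map_add toH p u, map_add, hpq₁]
    have h1 : toH u - -K' (toH u) = toH g - (toH p + toH q₁) - toH q := by
      simpa using huq
    rw [sub_neg_eq_add] at h1
    rw [map_sub]
    calc _ = toH u + K' (toH u) + (toH p + toH q₁) := by abel
      _ = _ := by rw [h1]; abel
  have hval : (∑ k ∈ box n (max d₁ e), c' k * ((1 + symb β m k x) * mFourier k x)) =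
      g x - q x := by
    have h1 := DFunLike.congr_fun heq x
    rw [hc'] at h1
    simp only [ContinuousMap.add_apply, ContinuousMap.coe_sum, Finset.sum_apply,
      ContinuousMap.coe_smul, Pi.smul_apply, ContinuousMap.mul_apply, haβ, smul_eq_mul,
      ContinuousMap.sub_apply] at h1
    rw [← h1, ← Finset.sum_add_distrib]
    refine Finset.sum_congr rfl fun k _ => ?_
    rw [add_mul, mul_add, one_mul, symb, Finset.sum_mul]
    congr 2
    exact Finset.sum_congr rfl fun i _ => by ring
  have hc'0 : -ε ≤ (c' 0).re := by
    refine le_trans ?_ hx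
    rw [hval, Complex.sub_re]
    have h1 := (Complex.re_le_norm (q x)).trans ((q.norm_coe_le_norm x).trans hqn)
    linarith [hg0 x]
  have h1 : inner ℂ (mFourierLp 2 0) (toH (p + u)) = c' 0 := by
    rw [hc', inner_mFourierLp_zero_sum]
  have h2 : ‖toH (p + u) - f‖ ≤ ε + 3 * ε / (1 - θ) := by
    rw [map_add]
    calc _ = ‖-(f - toH p) + toH u‖ := by congr 1; abel
      _ ≤ ‖f - toH p‖ + ‖toH u‖ := by
          refine (norm_add_le _ _).trans ?_
          rw [norm_neg]
      _ ≤ _ := by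
          refine add_le_add hpf.le (hun.trans ?_)
          gcongr
  have h3 : (inner ℂ (mFourierLp (d := Fin n) 2 0) (toH (p + u) - f)).re ≤
      ε + 3 * ε / (1 - θ) := by
    refine (Complex.re_le_norm _).trans ((norm_inner_le_norm _ _).trans ?_)
    rw [(orthonormal_mFourier (d := Fin n)).norm_eq_one, one_mul]
    exact h2
  rw [inner_sub_right, h1, Complex.sub_re] at h3
  have h4 : ε * (2 + 3 / (1 - θ)) = ε + (ε + 3 * ε / (1 - θ)) := by ring
  linarith

lemma ae_nonneg_of_integral_mul_nonneg {ρ : UnitAddTorus (Fin n) → ℝ} (hρ : MemLp ρ 2)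
    (h : ∀ g : C(UnitAddTorus (Fin n), ℝ), (∀ x, 0 ≤ g x) → 0 ≤ ∫ x, ρ x * g x) :
    0 ≤ᵐ[volume] ρ := by
  set f : UnitAddTorus (Fin n) → ℝ := fun x => max (-ρ x) 0 with hf
  have hfL : MemLp f 2 := by
    refine hρ.mono ((hρ.1.neg.aemeasurable.max aemeasurable_const).aestronglyMeasurable) ?_
    refine Filter.Eventually.of_forall fun x => ?_
    rw [Real.norm_of_nonneg (le_max_right _ _), Real.norm_eq_abs]
    exact max_le (neg_le_abs _) (abs_nonneg _)
  have key : ∫ x, f x ^ 2 ≤ 0 := by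
    refine le_of_forall_pos_le_add fun τ hτ => ?_
    set I := ∫ x, ρ x ^ 2 with hI
    have hI0 : 0 ≤ I := integral_nonneg fun x => sq_nonneg _
    obtain ⟨t, ht, htτ⟩ : ∃ t : ℝ, 0 < t ∧ t * (I + 1) = τ :=
      ⟨τ / (I + 1), by positivity, by field_simp⟩
    obtain ⟨g, hg, hgL⟩ := (show MemLp f (ENNReal.ofReal 2) by simpa using hfL
      ).exists_boundedContinuous_integral_rpow_sub_le (by norm_num) (show 0 < t ^ 2 by positivity)
    have hgL' : MemLp g 2 := by simpa using hgL
    simp only [Real.rpow_two, Real.norm_eq_abs, sq_abs] at hg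
    have h1 := h ⟨fun x => max (g x) 0, by fun_prop⟩ fun x => le_max_right _ _
    simp only [ContinuousMap.coe_mk] at h1
    have hgp : MemLp (fun x => max (g x) 0) 2 := by
      refine hgL'.mono (by fun_prop) (Filter.Eventually.of_forall fun x => ?_)
      rw [Real.norm_of_nonneg (le_max_right _ _), Real.norm_eq_abs]
      exact max_le (le_abs_self _) (abs_nonneg _)
    have i1 : Integrable fun x => ρ x * max (g x) 0 := hρ.integrable_mul hgp
    have i2 : Integrable fun x => ρ x ^ 2 := hρ.integrable_sq
    have i3 : Integrable fun x => (f x - g x) ^ 2 := (hfL.sub hgL').integrable_sq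
    have i4 : Integrable fun x => f x ^ 2 := hfL.integrable_sq
    calc ∫ x, f x ^ 2 ≤ ∫ x, (-(ρ x * max (g x) 0) + (t * ρ x ^ 2 + t⁻¹ * (f x - g x) ^ 2)) := by
          refine integral_mono i4 (i1.neg.add ((i2.const_mul _).add (i3.const_mul _))) fun x => ?_
          have e1 : f x ^ 2 = -(ρ x * f x) := by
            simp only [hf]
            rcases le_total (-ρ x) 0 with h | h
            · simp [max_eq_right h]
            · rw [max_eq_left h]; ring
          have e2 : |max (g x) 0 - f x| ≤ |f x - g x| := by
            have : f x = max (f x) 0 := (max_eq_left (le_max_right _ _)).symm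
            rw [abs_sub_comm (f x)]
            conv_lhs => rw [this]
            exact abs_max_sub_max_le_abs _ _ _
          have e3 : ρ x * (max (g x) 0 - f x) ≤ t * ρ x ^ 2 + t⁻¹ * (f x - g x) ^ 2 := by
            calc _ ≤ |ρ x| * |f x - g x| := (le_abs_self _).trans (by rw [abs_mul]; gcongr)
              _ ≤ t * |ρ x| ^ 2 + t⁻¹ * |f x - g x| ^ 2 := by
                have e4 : t * |ρ x| ^ 2 + t⁻¹ * |f x - g x| ^ 2 - |ρ x| * |f x - g x| =
                    t⁻¹ * ((t * |ρ x| - |f x - g x|) ^ 2 + t * |ρ x| * |f x - g x|) := by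
                  field_simp; ring
                have : 0 ≤ t⁻¹ * ((t * |ρ x| - |f x - g x|) ^ 2 + t * |ρ x| * |f x - g x|) := by
                  positivity
                linarith
              _ = _ := by simp
          dsimp only
          linarith
      _ = -(∫ x, ρ x * max (g x) 0) + (t * I + t⁻¹ * ∫ x, (f x - g x) ^ 2) := by
          rw [integral_add (f := fun x => -(ρ x * max (g x) 0))
            (g := fun x => t * ρ x ^ 2 + t⁻¹ * (f x - g x) ^ 2) i1.neg
            ((i2.const_mul t).add (i3.const_mul t⁻¹)), integral_neg,
            integral_add (i2.const_mul _) (i3.const_mul _), integral_const_mul, integral_const_mul]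
      _ ≤ t * I + t⁻¹ * t ^ 2 := by
          have : t⁻¹ * ∫ x, (f x - g x) ^ 2 ≤ t⁻¹ * t ^ 2 := by gcongr
          linarith
      _ = 0 + τ := by rw [← htτ]; field_simp; ring
  have h2 : (fun x => f x ^ 2) =ᵐ[volume] 0 :=
    (integral_eq_zero_iff_of_nonneg (fun x => sq_nonneg _) hfL.integrable_sq).1
      (le_antisymm key (integral_nonneg fun x => sq_nonneg _))
  filter_upwards [h2] with x hx
  have : f x = 0 := by simpa using hx
  have h3 : -ρ x ≤ f x := le_max_left _ _
  simp only [Pi.zero_apply]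
  linarith

lemma inner_eq_integral (u w : H n) : inner ℂ u w = ∫ x, conj (u x) * w x := by
  rw [L2.inner_def]
  congr with x
  rw [RCLike.inner_apply, mul_comm]

theorem exists_density {m : ι → (Fin n → ℤ) → ℂ} {M R : ℝ} (hM : 1 ≤ M)
    (hm : ∀ k, ∑ i, ‖m i k‖ ^ 2 ≤ M ^ 2) (hm0 : ∀ i, m i 0 = 0)
    (hmneg : ∀ i k, m i (-k) = conj (m i k))
    (hmax : ∀ β : ι → UnitAddTorus (Fin n) → ℝ, (∀ x, ∑ i, β i x ^ 2 ≤ 1) →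
      ∀ (d : ℕ) (c : (Fin n → ℤ) → ℂ), ∃ x,
        (∑ k ∈ box n d, c k * ((1 + symb β m k x) * mFourier k x)).re ≤ (c 0).re)
    {α : ι → UnitAddTorus (Fin n) → ℝ} (hR : 0 < R) (hRM : R * M < 1)
    (hα : ∀ i, AEStronglyMeasurable (α i)) (hαR : ∀ᵐ x, ∑ i, α i x ^ 2 ≤ R ^ 2) :
    ∃ ρ : UnitAddTorus (Fin n) → ℝ, MemLp ρ 2 ∧ 0 ≤ᵐ[volume] ρ ∧ ∫ x, ρ x = 1 ∧
      (∀ k, k ≠ 0 → ∫ x, (ρ x : ℂ) * ((1 + symb α m k x) * mFourier k x) = 0) ∧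
      ∀ σ : UnitAddTorus (Fin n) → ℝ, MemLp σ 2 →
        (∀ k, k ≠ 0 → ∫ x, (σ x : ℂ) * ((1 + symb α m k x) * mFourier k x) = 0) →
        σ =ᵐ[volume] fun x => (∫ y, σ y) * ρ x := by
  obtain ⟨K, hKn, hK⟩ := exists_perturbation α m hR.le (by linarith) hα hαR hm
  have hunit : IsUnit (1 + K) := by
    have := (Units.oneSub (-K) (by rw [norm_neg]; exact hKn.trans_lt hRM)).isUnit
    simpa using this
  obtain ⟨T, hT⟩ := hunit
  set G : H n →L[ℂ] H n := ((T⁻¹ : (H n →L[ℂ] H n)ˣ) : H n →L[ℂ] H n)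
  have hTG : ∀ h, G h + K (G h) = h := by
    intro h
    have := DFunLike.congr_fun (T.mul_inv) h
    rw [hT] at this
    exact this
  have hGT : ∀ h, G (h + K h) = h := by
    intro h
    have := DFunLike.congr_fun (T.inv_mul) h
    rw [hT] at this
    exact this
  set e : (Fin n → ℤ) → H n := fun k => mFourierLp 2 k + K (mFourierLp 2 k) with he
  have hex : ∀ k, e k =ᵐ[volume] fun x => (1 + symb α m k x) * mFourier k x := by
    intro k
    filter_upwards [Lp.coeFn_add (mFourierLp 2 k) (K (mFourierLp 2 k)), hK k,
      coeFn_mFourierLp 2 k] with x h1 h2 h3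
    rw [h1, Pi.add_apply, h2, h3]
    ring
  have hsymb0 : ∀ x, symb α m 0 x = 0 := fun x => by simp [symb, hm0]
  have hsymbneg : ∀ k x, symb α m (-k) x = conj (symb α m k x) := fun k x => by
    simp [symb, hmneg]
  set r : H n := ContinuousLinearMap.adjoint G (mFourierLp 2 0) with hr
  have hrin : ∀ h, inner ℂ r h = inner ℂ (mFourierLp 2 0) (G h) := fun h => by
    rw [hr, ContinuousLinearMap.adjoint_inner_left]
  have hre : ∀ k, inner ℂ r (e k) = if k = 0 then 1 else 0 := by
    intro k
    rw [hrin, hGT, orthonormal_iff_ite.1 (orthonormal_mFourier (d := Fin n)) 0 k]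
    simp only [eq_comm]
  have hrint : ∀ k, ∫ x, conj (r x) * ((1 + symb α m k x) * mFourier k x) =
      if k = 0 then 1 else 0 := by
    intro k
    rw [← hre, inner_eq_integral]
    refine integral_congr_ae ?_
    filter_upwards [hex k] with x hx
    rw [hx]
  have hrint' : ∀ k, ∫ x, r x * ((1 + symb α m k x) * mFourier k x) =
      if k = 0 then 1 else 0 := by
    intro k
    have h1 := congrArg conj (hrint (-k))
    rw [← integral_conj] at h1
    simp only [map_mul, map_add, map_one, hsymbneg, mFourier_neg, Complex.conj_conj] at h1
    rw [h1]
    simp [apply_ite]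
  have hrL : MemLp r 2 := Lp.memLp r
  have heL : ∀ k, MemLp (fun x => (1 + symb α m k x) * mFourier k x) 2 := fun k =>
    (memLp_congr_ae (hex k)).1 (Lp.memLp (e k))
  set ρ : UnitAddTorus (Fin n) → ℝ := fun x => (r x).re with hρ
  have hρL : MemLp ρ 2 := hrL.re
  have hρint : ∀ k, ∫ x, (ρ x : ℂ) * ((1 + symb α m k x) * mFourier k x) =
      if k = 0 then 1 else 0 := by
    intro k
    have i1 : Integrable fun x => conj (r x) * ((1 + symb α m k x) * mFourier k x) :=
      hrL.star.integrable_mul (heL k)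
    have i2 : Integrable fun x => r x * ((1 + symb α m k x) * mFourier k x) :=
      hrL.integrable_mul (heL k)
    have h1 : ∀ x, (ρ x : ℂ) * ((1 + symb α m k x) * mFourier k x) =
        (1 / 2 : ℂ) * (r x * ((1 + symb α m k x) * mFourier k x) +
          conj (r x) * ((1 + symb α m k x) * mFourier k x)) := by
      intro x
      rw [hρ, ← add_mul, Complex.add_conj]
      push_cast
      ring
    simp_rw [h1]
    rw [integral_const_mul, integral_add i2 i1, hrint, hrint']
    split_ifs <;> norm_num
  have hpos : ∀ g : C(UnitAddTorus (Fin n), ℂ), (∀ x, 0 ≤ (g x).re) →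
      0 ≤ (inner ℂ r (toH g)).re := by
    intro g hg
    refine le_of_forall_pos_le_add fun τ hτ => ?_
    obtain ⟨ε, hε, hετ⟩ : ∃ ε : ℝ, 0 < ε ∧ (‖r‖ + 1) * (2 * ε) = τ :=
      ⟨τ / (2 * (‖r‖ + 1)), by positivity, by field_simp⟩
    obtain ⟨d, p, hp, hpg⟩ := exists_trig_near g hε
    have hp' : p + (ε : ℂ) • mFourier 0 ∈ trig n d :=
      Submodule.add_mem _ hp (Submodule.smul_mem _ _ (mFourier_mem_trig (by simp [mem_box])))
    have h1 := inner_nonneg_of_trig hM hm hmax hR hRM hα hαR hKn hK hp' (fun x => by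
      have h2 := (Complex.abs_re_le_norm _).trans
        (((g - p).norm_coe_le_norm x).trans hpg.le)
      have h3 := hg x
      simp only [ContinuousMap.sub_apply, Complex.sub_re] at h2
      simp [mFourier_zero]
      linarith [(abs_le.1 h2).2]) (hTG _)
    rw [← hrin] at h1
    have h2 : ‖g - (p + (ε : ℂ) • mFourier 0)‖ ≤ 2 * ε := by
      rw [← sub_sub]
      refine (norm_sub_le _ _).trans ?_
      rw [norm_smul, mFourier_norm, Complex.norm_real, Real.norm_of_nonneg hε.le]
      linarith
    have h3 : |(inner ℂ r (toH (g - (p + (ε : ℂ) • mFourier 0)))).re| ≤ ‖r‖ * (2 * ε) :=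
      (Complex.abs_re_le_norm _).trans ((norm_inner_le_norm _ _).trans
        (mul_le_mul_of_nonneg_left ((norm_toH_le _).trans h2) (norm_nonneg _)))
    rw [map_sub, inner_sub_right, Complex.sub_re] at h3
    linarith [(abs_le.1 h3).1]
  refine ⟨ρ, hρL, ?_, ?_, fun k hk => by rw [hρint, if_neg hk], fun σ hσ hσk => ?_⟩
  · refine ae_nonneg_of_integral_mul_nonneg hρL fun g hg => ?_
    have h1 := hpos ⟨fun x => (g x : ℂ), by fun_prop⟩ (by simpa using hg)
    have h2 : (∫ x, ρ x * g x) = (inner ℂ r (toH ⟨fun x => (g x : ℂ), by fun_prop⟩)).re := by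
      have hi : Integrable fun x => conj (r x) *
          (toH (⟨fun x => (g x : ℂ), by fun_prop⟩ : C(UnitAddTorus (Fin n), ℂ))) x :=
        hrL.star.integrable_mul (Lp.memLp _)
      rw [inner_eq_integral]
      have := integral_re hi
      simp only [RCLike.re_eq_complex_re] at this
      rw [← this]
      refine integral_congr_ae ?_
      filter_upwards [ContinuousMap.coeFn_toLp (p := 2) (𝕜 := ℂ) volume
        (⟨fun x => (g x : ℂ), by fun_prop⟩ : C(UnitAddTorus (Fin n), ℂ))] with x hx
      rw [hx]
      simp [hρ]
    rw [h2]
    exact h1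
  · have := hρint 0
    simp only [hsymb0, mFourier_zero, if_true, add_zero, ContinuousMap.one_apply,
      mul_one] at this
    rw [integral_complex_ofReal] at this
    exact_mod_cast this
  · set s := ∫ y, σ y with hs
    have hwL : MemLp (fun x => ((σ x - s * ρ x : ℝ) : ℂ)) 2 := (hσ.sub (hρL.const_mul s)).ofReal
    set w : H n := hwL.toLp _ with hw
    have hwe : ∀ k, inner ℂ w (e k) = 0 := by
      intro k
      have i1 : Integrable fun x => (σ x : ℂ) * ((1 + symb α m k x) * mFourier k x) :=
        hσ.ofReal.integrable_mul (heL k)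
      have i2 : Integrable fun x => (ρ x : ℂ) * ((1 + symb α m k x) * mFourier k x) :=
        hρL.ofReal.integrable_mul (heL k)
      have h1 : inner ℂ w (e k) = ∫ x, ((σ x : ℂ) * ((1 + symb α m k x) * mFourier k x) -
          s * ((ρ x : ℂ) * ((1 + symb α m k x) * mFourier k x))) := by
        rw [inner_eq_integral]
        refine integral_congr_ae ?_
        filter_upwards [hex k, hwL.coeFn_toLp] with x h1 h2
        rw [h1, hw, h2, Complex.conj_ofReal]
        push_cast
        ring
      rw [h1, integral_sub i1 (i2.const_mul _), integral_const_mul, hρint]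
      split_ifs with hk
      · subst hk
        simp only [hsymb0, mFourier_zero, add_zero, ContinuousMap.one_apply, mul_one]
        rw [integral_complex_ofReal, hs, sub_self]
      · rw [hσk k hk]; simp
    have hwT : ∀ h : H n, inner ℂ w (h + K h) = 0 := by
      intro h
      have hc : Continuous fun h : H n => inner ℂ w (h + K h) := by fun_prop
      have h2 : (fun h : H n => inner ℂ w (h + K h)) = fun _ => 0 := by
        refine (denseRange_linearCombination (n := n)).equalizer hc continuous_const ?_
        funext c
        simp only [Function.comp_apply, Finsupp.linearCombination_apply, Finsupp.sum, map_sum,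
          map_smul, ← Finset.sum_add_distrib, ← smul_add, inner_sum, inner_smul_right]
        exact Finset.sum_eq_zero fun k _ => by rw [hwe k, mul_zero]
      exact congrFun h2 h
    have hw0 : w = 0 := by
      have := hwT (G w)
      rw [hTG] at this
      exact inner_self_eq_zero.1 this
    have h1 := hwL.coeFn_toLp
    rw [← hw, hw0] at h1
    filter_upwards [h1, Lp.coeFn_zero ℂ 2 (volume : Measure (UnitAddTorus (Fin n)))] with x h1 h2
    rw [h2, Pi.zero_apply] at h1
    have h3 : σ x - s * ρ x = 0 := by exact_mod_cast h1.symm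
    linarith

lemma second_deriv_test {f f' : ℝ → ℝ} {f'' : ℝ} (h1 : ∀ s, HasDerivAt f (f' s) s)
    (h2 : HasDerivAt f' f'' 0) (hmax : ∀ s, f s ≤ f 0) : f' 0 = 0 ∧ f'' ≤ 0 := by
  have hd : deriv f = f' := funext fun s => (h1 s).deriv
  have hlm : IsLocalMax f 0 := Filter.Eventually.of_forall hmax
  have h0 : f' 0 = 0 := by rw [← hd]; exact hlm.deriv_eq_zero
  refine ⟨h0, ?_⟩
  by_contra! hpos
  have hmin := isLocalMin_of_deriv_deriv_pos (f := f) (x₀ := 0) (by rw [hd, h2.deriv]; exact hpos)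
    (by rw [hd, h0]) (h1 0).continuousAt
  have heq : f =ᶠ[nhds 0] fun _ => f 0 := by
    filter_upwards [hmin] with s hs
    exact le_antisymm (hmax s) hs
  have h3 : deriv (deriv f) 0 = 0 := by
    rw [heq.deriv.deriv_eq]
    simp
  rw [hd, h2.deriv] at h3
  exact hpos.ne' h3

lemma trace_add_inner_nonpos {M β : Fin n → Fin n → ℝ} (hsymm : ∀ i j, M i j = M j i)
    (hM : ∀ ξ : Fin n → ℝ, ∑ i, ∑ j, M i j * (ξ i * ξ j) ≤ 0)
    (hβ : ∑ i, ∑ j, β i j ^ 2 ≤ 1) : ∑ i, M i i + ∑ i, ∑ j, β i j * M i j ≤ 0 := by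
  classical
  have hdiag : ∀ i, M i i ≤ 0 := by
    intro i
    simpa [Pi.single_apply] using hM (Pi.single i 1)
  have hminor : ∀ i j, M i j ^ 2 ≤ M i i * M j j := by
    intro i j
    have hq : ∀ t : ℝ, M i i * t ^ 2 + 2 * M i j * t + M j j ≤ 0 := by
      intro t
      have h := hM (t • Pi.single i 1 + Pi.single j 1)
      have e : ∑ k, ∑ l, M k l * ((t • Pi.single i 1 + Pi.single j 1 : Fin n → ℝ) k *
          (t • Pi.single i 1 + Pi.single j 1 : Fin n → ℝ) l) =
          M i i * t ^ 2 + 2 * M i j * t + M j j := by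
        simp only [Pi.add_apply, Pi.smul_apply, smul_eq_mul, Pi.single_apply, mul_ite, mul_one,
          mul_zero, add_mul, mul_add, ite_mul, zero_mul, one_mul, Finset.sum_add_distrib,
          Finset.sum_ite_eq', Finset.mem_univ, if_true]
        rw [hsymm j i]
        ring
      rwa [e] at h
    have := discrim_le_zero (a := -M i i) (b := -(2 * M i j)) (c := -M j j) (fun t => by
      linarith [hq t])
    rw [discrim] at this
    linarith
  have htr : ∑ i, M i i ≤ 0 := Finset.sum_nonpos fun i _ => hdiag i
  have hfrob : ∑ i, ∑ j, M i j ^ 2 ≤ (∑ i, M i i) ^ 2 := by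
    rw [sq, Finset.sum_mul_sum]
    exact Finset.sum_le_sum fun i _ => Finset.sum_le_sum fun j _ => hminor i j
  have hcs : (∑ i, ∑ j, β i j * M i j) ^ 2 ≤ (∑ i, M i i) ^ 2 := by
    have h := Finset.sum_mul_sq_le_sq_mul_sq (Finset.univ : Finset (Fin n × Fin n))
      (fun p => β p.1 p.2) (fun p => M p.1 p.2)
    simp only [Fintype.sum_prod_type] at h
    refine h.trans ?_
    calc _ ≤ 1 * ∑ i, ∑ j, M i j ^ 2 := by gcongr
      _ ≤ _ := by rw [one_mul]; exact hfrob
  have : ∑ i, ∑ j, β i j * M i j ≤ -∑ i, M i i :=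
    (abs_le_of_sq_le_sq' (by rwa [neg_sq]) (neg_nonneg.2 htr)).2
  linarith

/-- The projection `ℝⁿ → (ℝ/ℤ)ⁿ`. -/
def proj (x : Fin n → ℝ) : UnitAddTorus (Fin n) := fun i => (x i : UnitAddCircle)

lemma mFourier_add_apply (k : Fin n → ℤ) (x y : UnitAddTorus (Fin n)) :
    mFourier k (x + y) = mFourier k x * mFourier k y := by
  simp only [mFourier, ContinuousMap.coe_mk, ← Finset.prod_mul_distrib]
  refine Finset.prod_congr rfl fun i _ => ?_
  simp [fourier_apply, AddCircle.toCircle_add, smul_add]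

lemma mFourier_proj (k : Fin n → ℤ) (x : Fin n → ℝ) :
    mFourier k (proj x) = Complex.exp (2 * Real.pi * Complex.I * ∑ i, (k i : ℂ) * x i) := by
  simp only [mFourier, ContinuousMap.coe_mk, proj, fourier_coe_apply, Finset.mul_sum,
    Complex.exp_sum]
  refine Finset.prod_congr rfl fun i _ => ?_
  congr 1
  push_cast
  ring

/-- The Fourier multipliers `kᵢkⱼ/|k|²` and `-i kⱼ/(2π|k|²)` of `∂ᵢⱼΔ⁻¹` and `∂ⱼΔ⁻¹`. -/
def mult (n : ℕ) : (Fin n × Fin n) ⊕ Fin n → (Fin n → ℤ) → ℂ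
  | Sum.inl (i, j), k => (k i * k j : ℂ) / ∑ l, (k l : ℂ) ^ 2
  | Sum.inr j, k => 2 * Real.pi * Complex.I * k j / (-4 * Real.pi ^ 2 * ∑ l, (k l : ℂ) ^ 2)

lemma mult_zero (i : (Fin n × Fin n) ⊕ Fin n) : mult n i 0 = 0 := by
  rcases i with ⟨i, j⟩ | j <;> simp [mult]

lemma mult_neg (i : (Fin n × Fin n) ⊕ Fin n) (k : Fin n → ℤ) :
    mult n i (-k) = conj (mult n i k) := by
  rcases i with ⟨i, j⟩ | j
  · simp [mult]
  · simp [mult, map_ofNat]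

lemma one_le_sum_sq {k : Fin n → ℤ} (hk : k ≠ 0) : (1 : ℝ) ≤ ∑ l, (k l : ℝ) ^ 2 := by
  obtain ⟨i, hi⟩ := Function.ne_iff.1 hk
  have h1 : (1 : ℝ) ≤ (k i : ℝ) ^ 2 := by
    have h2 : (1 : ℤ) ≤ k i ^ 2 := Order.one_le_iff_pos.2 (sq_pos_of_ne_zero hi)
    exact_mod_cast h2
  exact h1.trans (Finset.single_le_sum (f := fun l => (k l : ℝ) ^ 2) (fun _ _ => sq_nonneg _)
    (Finset.mem_univ i))

lemma sum_mult_sq_le (k : Fin n → ℤ) : ∑ i, ‖mult n i k‖ ^ 2 ≤ 1 + 1 / (4 * Real.pi ^ 2) := by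
  by_cases hk : k = 0
  · subst hk
    simp only [mult_zero]
    simp
    positivity
  · have hS := one_le_sum_sq hk
    set S := ∑ l, (k l : ℝ) ^ 2 with hSd
    have hSc : ∑ l, (k l : ℂ) ^ 2 = (S : ℂ) := by push_cast [hSd]; rfl
    have hS0 : 0 < S := by linarith
    have h1 : ∑ i, ∑ j, ‖mult n (Sum.inl (i, j)) k‖ ^ 2 = 1 := by
      have e : ∀ i j, ‖mult n (Sum.inl (i, j)) k‖ ^ 2 = (k i : ℝ) ^ 2 * (k j : ℝ) ^ 2 / S ^ 2 := by
        intro i j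
        simp only [mult, hSc]
        rw [norm_div, norm_mul, Complex.norm_intCast, Complex.norm_intCast, Complex.norm_real,
          div_pow, mul_pow, sq_abs, sq_abs, Real.norm_eq_abs, sq_abs]
      simp only [e, ← Finset.sum_div, ← Finset.mul_sum, ← Finset.sum_mul, ← hSd]
      field_simp
    have h2 : ∑ j, ‖mult n (Sum.inr j) k‖ ^ 2 = 1 / (4 * Real.pi ^ 2 * S) := by
      have e : ∀ j, ‖mult n (Sum.inr j) k‖ ^ 2 = (k j : ℝ) ^ 2 / (4 * Real.pi ^ 2 * S ^ 2) := by
        intro j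
        simp only [mult, hSc]
        have hp := Real.pi_pos
        simp only [norm_div, norm_mul, norm_neg, Complex.norm_intCast, Complex.norm_real,
          Complex.norm_I, Complex.norm_ofNat, norm_pow, Real.norm_eq_abs, abs_of_pos hp,
          abs_of_pos hS0, mul_one]
        rw [div_pow, mul_pow, sq_abs]
        field_simp
        ring
      simp only [e, ← Finset.sum_div, ← hSd]
      field_simp
    rw [Fintype.sum_sum_type, Fintype.sum_prod_type, h1, h2]
    exact add_le_add le_rfl (one_div_le_one_div_of_le (by positivity)
      (le_mul_of_one_le_right (by positivity) hS))

lemma exists_max_principle (β : (Fin n × Fin n) ⊕ Fin n → UnitAddTorus (Fin n) → ℝ)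
    (hβ : ∀ x, ∑ i, β i x ^ 2 ≤ 1) (d : ℕ) (c : (Fin n → ℤ) → ℂ) :
    ∃ x, (∑ k ∈ box n d, c k * ((1 + symb β (mult n) k x) * mFourier k x)).re ≤ (c 0).re := by
  set q : (Fin n → ℤ) → ℂ := fun k => c k / (-4 * Real.pi ^ 2 * ∑ l, (k l : ℂ) ^ 2) with hq
  obtain ⟨x, -, hx⟩ := isCompact_univ.exists_isMaxOn Set.univ_nonempty
    (f := fun x : UnitAddTorus (Fin n) => (∑ k ∈ box n d, q k * mFourier k x).re)
    (by fun_prop)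
  refine ⟨x, ?_⟩
  set z : (Fin n → ℤ) → ℂ := fun k => q k * mFourier k x with hz
  have key : ∀ ξ : Fin n → ℝ,
      (∑ k ∈ box n d, z k * (2 * Real.pi * Complex.I * ∑ i, (k i : ℂ) * ξ i)).re = 0 ∧
      (∑ k ∈ box n d, z k * (2 * Real.pi * Complex.I * ∑ i, (k i : ℂ) * ξ i) ^ 2).re ≤ 0 := by
    intro ξ
    set w : (Fin n → ℤ) → ℂ := fun k => 2 * Real.pi * Complex.I * ∑ i, (k i : ℂ) * ξ i with hw
    have hexp : ∀ k (s : ℝ), HasDerivAt (fun s : ℝ => Complex.exp (w k * s))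
        (Complex.exp (w k * s) * w k) s := by
      intro k s
      have h1 : HasDerivAt (fun s : ℝ => w k * (s : ℂ)) (w k) s := by
        simpa using (Complex.ofRealCLM.hasDerivAt (x := s)).const_mul (w k)
      exact h1.cexp
    have hD : ∀ (y : (Fin n → ℤ) → ℂ) (s : ℝ),
        HasDerivAt (fun s : ℝ => (∑ k ∈ box n d, y k * Complex.exp (w k * s)).re)
          ((∑ k ∈ box n d, y k * w k * Complex.exp (w k * s)).re) s := by
      intro y s
      have h1 : HasDerivAt (fun s : ℝ => ∑ k ∈ box n d, y k * Complex.exp (w k * s))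
          (∑ k ∈ box n d, y k * w k * Complex.exp (w k * s)) s := by
        refine HasDerivAt.fun_sum fun k _ => ?_
        exact ((hexp k s).const_mul (y k)).congr_deriv (by ring)
      exact Complex.reCLM.hasFDerivAt.comp_hasDerivAt s h1
    have hval : ∀ s : ℝ, (∑ k ∈ box n d, z k * Complex.exp (w k * s)) =
        ∑ k ∈ box n d, q k * mFourier k (x + proj (s • ξ)) := by
      intro s
      refine Finset.sum_congr rfl fun k _ => ?_
      rw [mFourier_add_apply, mFourier_proj, hz, mul_assoc]
      congr 3
      simp only [hw, Pi.smul_apply, smul_eq_mul, Finset.mul_sum, Finset.sum_mul]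
      refine Finset.sum_congr rfl fun i _ => ?_
      push_cast
      ring
    have hval0 : (∑ k ∈ box n d, z k * Complex.exp (w k * (0 : ℝ))) =
        ∑ k ∈ box n d, q k * mFourier k x := by
      simp [hz]
    have := second_deriv_test (hD z) (hD (fun k => z k * w k) 0) fun s => by
      rw [hval, hval0]
      exact hx (Set.mem_univ _)
    simp only [Complex.ofReal_zero, mul_zero, Complex.exp_zero, mul_one] at this
    refine ⟨this.1, ?_⟩
    have h2 := this.2
    simp only [mul_assoc _ (w _) (w _), ← sq] at h2
    exact h2
  set N : Fin n → Fin n → ℝ := fun i j =>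
    (∑ k ∈ box n d, z k * (-4 * Real.pi ^ 2 * (k i * k j))).re with hN
  have hgrad : ∀ j, (∑ k ∈ box n d, z k * (2 * Real.pi * Complex.I * k j)).re = 0 := by
    classical
    intro j
    have := (key (Pi.single j 1)).1
    simpa [Pi.single_apply] using this
  have hNneg : ∀ ξ : Fin n → ℝ, ∑ i, ∑ j, N i j * (ξ i * ξ j) ≤ 0 := by
    intro ξ
    refine le_of_eq_of_le ?_ (key ξ).2
    have : ∀ i j, N i j * (ξ i * ξ j) =
        (∑ k ∈ box n d, z k * (-4 * Real.pi ^ 2 * (k i * k j)) * (ξ i * ξ j)).re := by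
      intro i j
      rw [← Finset.sum_mul, ← Complex.ofReal_mul, Complex.re_mul_ofReal]
    simp only [this, ← Complex.re_sum]
    congr 1
    rw [Finset.sum_congr rfl fun i _ => Finset.sum_comm, Finset.sum_comm]
    refine Finset.sum_congr rfl fun k _ => ?_
    rw [mul_pow, sq (∑ i, _), Finset.sum_mul_sum, mul_pow, Complex.I_sq, Finset.mul_sum,
      Finset.mul_sum]
    refine Finset.sum_congr rfl fun i _ => ?_
    rw [Finset.mul_sum, Finset.mul_sum]
    refine Finset.sum_congr rfl fun j _ => ?_
    ring
  have hterm : ∀ k, c k * ((1 + symb β (mult n) k x) * mFourier k x) =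
      (if k = 0 then c 0 else 0) + (∑ i, z k * (-4 * Real.pi ^ 2 * (k i * k i)) +
        ∑ i, ∑ j, (β (Sum.inl (i, j)) x : ℂ) * (z k * (-4 * Real.pi ^ 2 * (k i * k j))) +
        ∑ j, (β (Sum.inr j) x : ℂ) * (z k * (2 * Real.pi * Complex.I * k j))) := by
    intro k
    by_cases hk : k = 0
    · subst hk
      simp [symb, mult_zero, mFourier_zero]
    · have hS : ∑ l, (k l : ℂ) ^ 2 ≠ 0 := by
        have := one_le_sum_sq hk
        have h2 : ∑ l, (k l : ℂ) ^ 2 = ((∑ l, (k l : ℝ) ^ 2 : ℝ) : ℂ) := by push_cast; rfl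
        rw [h2]
        exact_mod_cast (by linarith : (∑ l, (k l : ℝ) ^ 2) ≠ 0)
      have hp : (Real.pi : ℂ) ≠ 0 := by exact_mod_cast Real.pi_ne_zero
      set S := ∑ l, (k l : ℂ) ^ 2 with hSd
      have hcz : c k * mFourier k x = z k * (-4 * Real.pi ^ 2 * S) := by
        simp only [hz, hq, ← hSd]
        field_simp
      rw [if_neg hk, zero_add, symb, Fintype.sum_sum_type, Fintype.sum_prod_type]
      have e1 : ∑ i, z k * (-4 * Real.pi ^ 2 * ((k i : ℂ) * k i)) =
          z k * (-4 * Real.pi ^ 2 * S) := by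
        rw [hSd, Finset.mul_sum, Finset.mul_sum]
        exact Finset.sum_congr rfl fun i _ => by ring
      have e2 : ∀ i j, (β (Sum.inl (i, j)) x : ℂ) * (z k * (-4 * Real.pi ^ 2 * (k i * k j))) =
          z k * (-4 * Real.pi ^ 2 * S) * ((β (Sum.inl (i, j)) x : ℂ) * mult n (Sum.inl (i, j)) k) := by
        intro i j
        simp only [mult, ← hSd]
        field_simp
      have e3 : ∀ j, (β (Sum.inr j) x : ℂ) * (z k * (2 * Real.pi * Complex.I * k j)) =
          z k * (-4 * Real.pi ^ 2 * S) * ((β (Sum.inr j) x : ℂ) * mult n (Sum.inr j) k) := by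
        intro j
        simp only [mult, ← hSd]
        field_simp
      simp only [e1, e2, e3, ← Finset.mul_sum]
      rw [← hcz]
      ring
  have hsum : (∑ k ∈ box n d, c k * ((1 + symb β (mult n) k x) * mFourier k x)).re =
      (c 0).re + (∑ i, N i i + ∑ i, ∑ j, β (Sum.inl (i, j)) x * N i j) := by
    have hg : ∑ j, (β (Sum.inr j) x) *
        (∑ k ∈ box n d, z k * (2 * Real.pi * Complex.I * k j)).re = 0 :=
      Finset.sum_eq_zero fun j _ => by rw [hgrad, mul_zero]
    rw [← add_zero (∑ i, N i i + _), ← hg]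
    simp only [hterm, Finset.sum_add_distrib, Complex.add_re]
    rw [Finset.sum_ite_eq', if_pos (by simp [mem_box])]
    congr 2
    · congr 1
      · rw [Finset.sum_comm, Complex.re_sum]
      · rw [Finset.sum_comm, Complex.re_sum]
        refine Finset.sum_congr rfl fun i _ => ?_
        rw [Finset.sum_comm, Complex.re_sum]
        refine Finset.sum_congr rfl fun j _ => ?_
        rw [← Finset.mul_sum, Complex.re_ofReal_mul]
    · rw [Finset.sum_comm, Complex.re_sum]
      refine Finset.sum_congr rfl fun j _ => ?_
      rw [← Finset.mul_sum, Complex.re_ofReal_mul]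
  rw [hsum]
  have hβ' : ∑ i, ∑ j, β (Sum.inl (i, j)) x ^ 2 ≤ 1 := by
    have := hβ x
    rw [Fintype.sum_sum_type, Fintype.sum_prod_type] at this
    have h2 : 0 ≤ ∑ j, β (Sum.inr j) x ^ 2 := by positivity
    linarith
  have := trace_add_inner_nonpos (M := N) (β := fun i j => β (Sum.inl (i, j)) x)
    (fun i j => by simp only [hN, mul_comm]) hNneg hβ'
  linarith

/-- The representative in `(0,1]ⁿ` of a point of the torus. -/
def sec (t : UnitAddTorus (Fin n)) : Fin n → ℝ := (measurableEquivPiIoc (0 : Fin n → ℝ) t).1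

lemma proj_sec (t : UnitAddTorus (Fin n)) : proj (sec t) = t :=
  (measurableEquivPiIoc (0 : Fin n → ℝ)).symm_apply_apply t

lemma continuous_proj : Continuous (proj (n := n)) :=
  continuous_pi fun i => (AddCircle.continuous_mk' 1).comp (continuous_apply i)

lemma proj_add (x y : Fin n → ℝ) : proj (x + y) = proj x + proj y := by
  ext i
  simp [proj]

lemma proj_add_intCast (x : Fin n → ℝ) (k : Fin n → ℤ) :
    proj (x + fun i => (k i : ℝ)) = proj x := by
  ext i
  simp [proj]

lemma exists_sec_proj (x : Fin n → ℝ) :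
    ∃ k : Fin n → ℤ, sec (proj x) = x + fun i => (k i : ℝ) := by
  have h : ∀ i, ∃ k : ℤ, sec (proj x) i - x i = k := by
    intro i
    have h1 := congrFun (proj_sec (proj x)) i
    have h2 : ((sec (proj x) i - x i : ℝ) : UnitAddCircle) = 0 := by
      rw [AddCircle.coe_sub, sub_eq_zero]
      exact h1
    obtain ⟨k, hk⟩ := (AddCircle.coe_eq_zero_iff 1).1 h2
    exact ⟨k, by simpa using hk.symm⟩
  choose k hk using h
  refine ⟨k, funext fun i => ?_⟩
  rw [Pi.add_apply, ← hk]
  ring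

lemma apply_sec_proj {E : Type*} {f : (Fin n → ℝ) → E} (hf : IsPeriodic f) (x : Fin n → ℝ) :
    f (sec (proj x)) = f x := by
  obtain ⟨k, hk⟩ := exists_sec_proj x
  rw [hk, hf]

lemma measurableEmbedding_sec : MeasurableEmbedding (sec (n := n)) := by
  refine (MeasurableEmbedding.subtype_coe ?_).comp
    (measurableEquivPiIoc (0 : Fin n → ℝ)).measurableEmbedding
  exact MeasurableSet.univ_pi' fun i => measurableSet_Ioc

lemma range_sec : Set.range (sec (n := n)) = Set.univ.pi fun _ => Set.Ioc (0 : ℝ) 1 := by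
  have h : sec (n := n) = Subtype.val ∘ measurableEquivPiIoc (0 : Fin n → ℝ) := rfl
  have h' : Set.range (measurableEquivPiIoc (0 : Fin n → ℝ)) = Set.univ :=
    (measurableEquivPiIoc (0 : Fin n → ℝ)).surjective.range_eq
  rw [h, Set.range_comp, h', Set.image_univ]
  refine Subtype.range_coe.trans ?_
  ext x
  simp only [Set.mem_pi, Set.mem_univ, true_imp_iff]
  exact forall_congr' fun i => by simp

lemma unitCell_ae_eq_range_sec : unitCell n =ᵐ[volume] Set.range (sec (n := n)) := by
  rw [range_sec]
  exact (Measure.univ_pi_Ioo_ae_eq_Icc (μ := fun _ : Fin n => (volume : Measure ℝ))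
    (f := fun _ => 0) (g := fun _ => 1)).trans
    (Measure.univ_pi_Ioc_ae_eq_Icc (μ := fun _ : Fin n => (volume : Measure ℝ))
    (f := fun _ => 0) (g := fun _ => 1)).symm

lemma measurePreserving_sec :
    MeasurePreserving (sec (n := n)) volume (volume.restrict (unitCell n)) := by
  have h1 : MeasurableSet {x : Fin n → ℝ | ∀ i, x i ∈ Set.Ioc ((0 : Fin n → ℝ) i)
      ((0 : Fin n → ℝ) i + 1)} := MeasurableSet.univ_pi' fun i => measurableSet_Ioc
  have h2 : Set.range (sec (n := n)) = {x : Fin n → ℝ | ∀ i, x i ∈ Set.Ioc ((0 : Fin n → ℝ) i)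
      ((0 : Fin n → ℝ) i + 1)} := by
    rw [range_sec]
    ext x
    simp [Set.mem_pi]
  rw [Measure.restrict_congr_set unitCell_ae_eq_range_sec, h2, ← map_comap_subtype_coe h1]
  exact (⟨measurable_subtype_coe, rfl⟩ : MeasurePreserving Subtype.val
    (Measure.comap Subtype.val volume) _).comp (measurePreserving_equivPiIoc 0)

lemma measurable_sec : Measurable (sec (n := n)) := measurableEmbedding_sec.measurable

lemma integral_sec {E : Type*} [NormedAddCommGroup E] [NormedSpace ℝ E] (f : (Fin n → ℝ) → E) :
    ∫ t, f (sec t) = ∫ x in unitCell n, f x :=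
  measurePreserving_sec.integral_comp measurableEmbedding_sec f

lemma ae_sec {P : (Fin n → ℝ) → Prop} (h : ∀ᵐ x, P x) : ∀ᵐ t, P (sec t) := by
  have h1 : ∀ᵐ x ∂volume.restrict (unitCell n), P x := ae_restrict_of_ae h
  rw [← measurePreserving_sec.map_eq, measurableEmbedding_sec.ae_map_iff] at h1
  exact h1

lemma ae_of_ae_sec {P : (Fin n → ℝ) → Prop} (hP : IsPeriodic P) (h : ∀ᵐ t, P (sec t)) :
    ∀ᵐ x, P x := by
  have h1 : ∀ᵐ x ∂volume.restrict (unitCell n), P x := by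
    rw [← measurePreserving_sec.map_eq, measurableEmbedding_sec.ae_map_iff]
    exact h
  rw [Measure.restrict_congr_set unitCell_ae_eq_range_sec,
    ae_restrict_iff' measurableEmbedding_sec.measurableSet_range] at h1
  have h3 : ∀ᵐ x : Fin n → ℝ, ∀ k : Fin n → ℤ,
      (x + fun i => (k i : ℝ)) ∈ Set.range (sec (n := n)) → P (x + fun i => (k i : ℝ)) := by
    rw [ae_all_iff]
    intro k
    exact (measurePreserving_add_right volume (fun i => (k i : ℝ))).quasiMeasurePreserving.ae h1
  filter_upwards [h3] with x hx
  obtain ⟨k, hk⟩ := exists_sec_proj x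
  have := hx k ⟨proj x, hk⟩
  rwa [hP] at this

lemma integral_sec_add {E : Type*} [NormedAddCommGroup E] [NormedSpace ℝ E]
    {f : (Fin n → ℝ) → E} (hf : IsPeriodic f) (v : Fin n → ℝ) :
    ∫ t, f (sec t + v) = ∫ t, f (sec t) := by
  have h : ∀ t, f (sec t + v) = f (sec (t + proj v)) := by
    intro t
    rw [← apply_sec_proj hf, proj_add, proj_sec]
  simp_rw [h]
  exact integral_add_right_eq_self (fun t => f (sec t)) (proj v)

lemma exists_bound {E : Type*} [NormedAddCommGroup E] {f : (Fin n → ℝ) → E} (hf : Continuous f)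
    (hper : IsPeriodic f) : ∃ C, ∀ x, ‖f x‖ ≤ C := by
  obtain ⟨C, hC⟩ := (isCompact_Icc (a := (0 : Fin n → ℝ)) (b := 1)).exists_bound_of_continuousOn
    hf.continuousOn
  refine ⟨C, fun x => ?_⟩
  rw [← apply_sec_proj hper]
  refine hC _ ?_
  have := (measurableEquivPiIoc (0 : Fin n → ℝ) (proj x)).2
  exact ⟨fun i => (this i).1.le, fun i => (this i).2.trans_eq (by simp)⟩

lemma memLp_sec {E : Type*} [NormedAddCommGroup E] [SecondCountableTopology E]
    {f : (Fin n → ℝ) → E} (hf : Continuous f) (hper : IsPeriodic f) {p : ℝ≥0∞} :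
    MemLp (fun t => f (sec t)) p := by
  obtain ⟨C, hC⟩ := exists_bound hf hper
  exact MemLp.of_bound (hf.stronglyMeasurable.comp_measurable measurable_sec).aestronglyMeasurable
    C (Filter.Eventually.of_forall fun t => hC _)

lemma integral_deriv_sec_eq_zero {E : Type*} [NormedAddCommGroup E] [NormedSpace ℝ E]
    [SecondCountableTopology E] [CompleteSpace E] {ψ ψ' : (Fin n → ℝ) → E} {v : Fin n → ℤ}
    (hψ : IsPeriodic ψ) (hψ' : IsPeriodic ψ') (hc : Continuous ψ')
    (hd : ∀ x, ∀ s : ℝ, HasDerivAt (fun s : ℝ => ψ (x + s • fun i => (v i : ℝ)))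
      (ψ' (x + s • fun i => (v i : ℝ))) s) :
    ∫ t, ψ' (sec t) = 0 := by
  obtain ⟨C, hC⟩ := exists_bound hc hψ'
  have h1 : ∫ s in (0 : ℝ)..1, ∫ t, ψ' (sec t + s • fun i => (v i : ℝ)) = ∫ t, ψ' (sec t) := by
    simp_rw [integral_sec_add hψ']
    simp
  have h2 : ∫ s in (0 : ℝ)..1, ∫ t, ψ' (sec t + s • fun i => (v i : ℝ)) =
      ∫ t, ∫ s in (0 : ℝ)..1, ψ' (sec t + s • fun i => (v i : ℝ)) := by
    refine intervalIntegral_integral_swap ?_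
    rw [Set.uIoc_of_le zero_le_one]
    refine Integrable.of_bound (StronglyMeasurable.aestronglyMeasurable ?_) C
      (Filter.Eventually.of_forall fun _ => hC _)
    refine hc.stronglyMeasurable.comp_measurable ?_
    exact (measurable_sec.comp measurable_snd).add (by fun_prop)
  rw [← h1, h2]
  refine integral_eq_zero_of_ae (Filter.Eventually.of_forall fun t => ?_)
  simp only [Pi.zero_apply]
  rw [intervalIntegral.integral_eq_sub_of_hasDerivAt (fun s _ => hd (sec t) s)
    (Continuous.intervalIntegrable (by fun_prop) _ _)]
  rw [one_smul, hψ]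
  simp

lemma hasSum_integral_mul {P u : UnitAddTorus (Fin n) → ℂ} (hP : MemLp P 2) (hu : MemLp u 2) :
    HasSum (fun k => (∫ t, P t * mFourier k t) * mFourierCoeff u k) (∫ t, P t * u t) := by
  have hPs : MemLp (fun t => conj (P t)) 2 := hP.star
  have h := hasSum_prod_mFourierCoeff (hPs.toLp _) (hu.toLp _)
  have e1 : ∀ k, conj (mFourierCoeff (hPs.toLp _) k) = ∫ t, P t * mFourier k t := by
    intro k
    rw [mFourierCoeff, ← integral_conj]
    refine integral_congr_ae ?_
    filter_upwards [hPs.coeFn_toLp] with t ht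
    rw [ht, smul_eq_mul, map_mul, Complex.conj_conj, mFourier_neg, Complex.conj_conj, mul_comm]
  have e2 : ∀ k, mFourierCoeff (hu.toLp _) k = mFourierCoeff u k := by
    intro k
    refine integral_congr_ae ?_
    filter_upwards [hu.coeFn_toLp] with t ht
    rw [ht]
  have e3 : ∫ t, conj ((hPs.toLp _ : H n) t) * (hu.toLp _ : H n) t = ∫ t, P t * u t := by
    refine integral_congr_ae ?_
    filter_upwards [hPs.coeFn_toLp, hu.coeFn_toLp] with t h1 h2
    rw [h1, h2, Complex.conj_conj]
  simpa only [e1, e2, e3] using h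

/-- The symbol of the operator `A : D² + b · ∇` at frequency `k`. -/
def opSymb (A : (Fin n → ℝ) → Matrix (Fin n) (Fin n) ℝ) (b : (Fin n → ℝ) → Fin n → ℝ)
    (k : Fin n → ℤ) (x : Fin n → ℝ) : ℂ :=
  ∑ i, ∑ j, (A x i j : ℂ) * ((2 * Real.pi * Complex.I * k i) * (2 * Real.pi * Complex.I * k j)) +
    ∑ j, (b x j : ℂ) * (2 * Real.pi * Complex.I * k j)

/-- The deviation of the rescaled coefficients from those of the Laplacian. -/
def deviation (A : (Fin n → ℝ) → Matrix (Fin n) (Fin n) ℝ) (b : (Fin n → ℝ) → Fin n → ℝ) :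
    (Fin n × Fin n) ⊕ Fin n → UnitAddTorus (Fin n) → ℝ
  | Sum.inl (i, j), t => gam A b (sec t) * A (sec t) i j - if i = j then 1 else 0
  | Sum.inr j, t => gam A b (sec t) * b (sec t) j

lemma gam_mul_opSymb (A : (Fin n → ℝ) → Matrix (Fin n) (Fin n) ℝ) (b : (Fin n → ℝ) → Fin n → ℝ)
    {k : Fin n → ℤ} (hk : k ≠ 0) (t : UnitAddTorus (Fin n)) :
    (gam A b (sec t) : ℂ) * opSymb A b k (sec t) =
      (-4 * Real.pi ^ 2 * ∑ l, (k l : ℂ) ^ 2) * (1 + symb (deviation A b) (mult n) k t) := by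
  have hS : (∑ l, (k l : ℂ) ^ 2) ≠ 0 := by
    have := one_le_sum_sq hk
    have h0 : (∑ l, (k l : ℝ) ^ 2) ≠ 0 := by linarith
    exact_mod_cast h0
  have hpi : (Real.pi : ℂ) ≠ 0 := by exact_mod_cast Real.pi_ne_zero
  have hI := Complex.I_sq
  set S := ∑ l, (k l : ℂ) ^ 2 with hSd
  have e1 : ∀ i j, (-4 * Real.pi ^ 2 * S) *
      ((deviation A b (Sum.inl (i, j)) t : ℂ) * mult n (Sum.inl (i, j)) k) =
      (gam A b (sec t) : ℂ) * ((A (sec t) i j : ℂ) *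
        ((2 * Real.pi * Complex.I * k i) * (2 * Real.pi * Complex.I * k j))) +
      if i = j then 4 * Real.pi ^ 2 * (k i : ℂ) ^ 2 else 0 := by
    intro i j
    simp only [deviation, mult, ← hSd]
    split_ifs with hij
    · subst hij
      push_cast
      field_simp
      linear_combination (-4 * (gam A b (sec t) : ℂ) * (A (sec t) i i : ℂ) * (k i : ℂ) ^ 2) * hI
    · push_cast
      field_simp
      linear_combination (-4 * (Real.pi : ℂ) ^ 2 * (gam A b (sec t) : ℂ) * (A (sec t) i j : ℂ) * k i * k j) * hI
  have e2 : ∀ j, (-4 * Real.pi ^ 2 * S) *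
      ((deviation A b (Sum.inr j) t : ℂ) * mult n (Sum.inr j) k) =
      (gam A b (sec t) : ℂ) * ((b (sec t) j : ℂ) * (2 * Real.pi * Complex.I * k j)) := by
    intro j
    simp only [deviation, mult, ← hSd]
    push_cast
    field_simp
  have e3 : (-4 * Real.pi ^ 2 * S) * symb (deviation A b) (mult n) k t =
      (gam A b (sec t) : ℂ) * opSymb A b k (sec t) + 4 * Real.pi ^ 2 * S := by
    rw [symb, Fintype.sum_sum_type, Fintype.sum_prod_type, mul_add]
    simp_rw [Finset.mul_sum (s := Finset.univ) (a := -4 * Real.pi ^ 2 * S), e1, e2,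
      Finset.sum_add_distrib, Finset.sum_ite_eq, Finset.mem_univ, if_true, ← Finset.mul_sum,
      ← hSd]
    rw [opSymb]
    ring
  rw [mul_add, e3]
  ring

lemma trace_sq_le (M : Matrix (Fin n) (Fin n) ℝ) : M.trace ^ 2 ≤ n * frobSq M := by
  have h1 := sq_sum_le_card_mul_sum_sq (s := Finset.univ) (f := fun i => M i i)
  rw [Finset.card_univ, Fintype.card_fin] at h1
  refine h1.trans (mul_le_mul_of_nonneg_left ?_ n.cast_nonneg)
  exact Finset.sum_le_sum fun i _ => Finset.single_le_sum (f := fun j => M i j ^ 2)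
    (fun _ _ => sq_nonneg _) (Finset.mem_univ i)

lemma mul_le_trace {M : Matrix (Fin n) (Fin n) ℝ} {lam : ℝ}
    (h : ∀ ξ : Fin n → ℝ, lam * euclSq ξ ≤ dotc ξ (M.mulVec ξ)) : n * lam ≤ M.trace := by
  have h1 : ∀ i, lam ≤ M i i := by
    intro i
    simpa [euclSq, dotc, Pi.single_apply] using h (Pi.single i 1)
  calc n * lam = ∑ _i : Fin n, lam := by simp
    _ ≤ M.trace := Finset.sum_le_sum fun i _ => h1 i

lemma trace_pos_of_ellip (hn : 1 ≤ n) {M : Matrix (Fin n) (Fin n) ℝ} {lam : ℝ} (hl : 0 < lam)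
    (h : ∀ ξ : Fin n → ℝ, lam * euclSq ξ ≤ dotc ξ (M.mulVec ξ)) : 0 < M.trace := by
  have hn' : (0 : ℝ) < n := by exact_mod_cast hn
  exact (mul_pos hn' hl).trans_le (mul_le_trace h)

lemma euclSq_nonneg (v : Fin n → ℝ) : 0 ≤ euclSq v := Finset.sum_nonneg fun _ _ => sq_nonneg _

lemma frobSq_add_euclSq_pos {M : Matrix (Fin n) (Fin n) ℝ} (v : Fin n → ℝ) (h : 0 < M.trace) :
    0 < frobSq M + euclSq v := by
  have h1 := trace_sq_le M
  have h2 := euclSq_nonneg v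
  have h3 : 0 < n * frobSq M := (pow_pos h 2).trans_le h1
  have h4 := pos_of_mul_pos_right h3 n.cast_nonneg
  linarith

/-- Essential bounds on the renormalization function. -/
lemma exists_gam_bounds (hn : 1 ≤ n) {A : (Fin n → ℝ) → Matrix (Fin n) (Fin n) ℝ}
    {b : (Fin n → ℝ) → Fin n → ℝ} {lam Lam δ : ℝ} (hAB : SettingB A b lam Lam δ) :
    ∃ c C : ℝ, 0 < c ∧ ∀ᵐ x, c ≤ gam A b x ∧ gam A b x ≤ C := by
  obtain ⟨C1, h1⟩ := hAB.bddA
  obtain ⟨C2, h2⟩ := hAB.bddb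
  have hn' : (0 : ℝ) < n := by exact_mod_cast hn
  have hl := hAB.lam_pos
  have hC : 0 < |C1| + |C2| + 1 := by positivity
  refine ⟨n * lam / (|C1| + |C2| + 1), 1 / lam, by positivity, ?_⟩
  filter_upwards [h1, h2, hAB.ellip] with x hx1 hx2 hx3
  have ht := mul_le_trace fun ξ => (hx3 ξ).1
  have htp := trace_pos_of_ellip hn hl fun ξ => (hx3 ξ).1
  have hS := frobSq_add_euclSq_pos (b x) htp
  have hts := trace_sq_le (A x)
  have hb := euclSq_nonneg (b x)
  rw [gam]
  constructor
  · refine div_le_div₀ htp.le ht hS ?_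
    linarith [le_abs_self C1, le_abs_self C2]
  · rw [div_le_div_iff₀ hS hl, one_mul]
    have h5 : n * ((A x).trace * lam) ≤ n * (frobSq (A x) + euclSq (b x)) := by
      nlinarith
    exact le_of_mul_le_mul_left h5 hn'

lemma sum_deviation_sq (A : (Fin n → ℝ) → Matrix (Fin n) (Fin n) ℝ)
    (b : (Fin n → ℝ) → Fin n → ℝ) (t : UnitAddTorus (Fin n)) :
    ∑ i, deviation A b i t ^ 2 = gam A b (sec t) ^ 2 *
      (frobSq (A (sec t)) + euclSq (b (sec t))) - 2 * gam A b (sec t) * (A (sec t)).trace + n := by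
  have e1 : ∀ i j, deviation A b (Sum.inl (i, j)) t ^ 2 = gam A b (sec t) ^ 2 * A (sec t) i j ^ 2 +
      if i = j then 1 - 2 * gam A b (sec t) * A (sec t) i i else 0 := by
    intro i j
    simp only [deviation]
    split_ifs with h
    · subst h
      ring
    · ring
  have e2 : ∀ j, deviation A b (Sum.inr j) t ^ 2 = gam A b (sec t) ^ 2 * b (sec t) j ^ 2 := by
    intro j
    simp only [deviation]
    ring
  rw [Fintype.sum_sum_type, Fintype.sum_prod_type]
  simp_rw [e1, e2, Finset.sum_add_distrib, Finset.sum_ite_eq, Finset.mem_univ, if_true,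
    Finset.sum_sub_distrib, ← Finset.mul_sum]
  simp only [frobSq, euclSq, Matrix.trace, Matrix.diag, Finset.sum_const, Finset.card_univ,
    Fintype.card_fin, nsmul_eq_mul, mul_one]
  ring

lemma ae_sum_deviation_sq_le (hn : 1 ≤ n) {A : (Fin n → ℝ) → Matrix (Fin n) (Fin n) ℝ}
    {b : (Fin n → ℝ) → Fin n → ℝ} {lam Lam δ : ℝ} (hAB : SettingB A b lam Lam δ) :
    ∀ᵐ t, ∑ i, deviation A b i t ^ 2 ≤ Real.pi ^ 2 / (1 + Real.pi ^ 2) := by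
  have hn' : (1 : ℝ) ≤ n := by exact_mod_cast hn
  have hpi : 0 < Real.pi ^ 2 := by positivity
  filter_upwards [ae_sec hAB.ellip, ae_sec hAB.cordes] with t h1 h2
  have htp := trace_pos_of_ellip hn hAB.lam_pos fun ξ => (h1 ξ).1
  have hS := frobSq_add_euclSq_pos (b (sec t)) htp
  have hδ := hAB.delta_mem.1
  have hδ0 : 0 < δ := lt_of_le_of_lt (by positivity) hδ
  have h3 : (n : ℝ) - 1 + δ ≤
      (A (sec t)).trace ^ 2 / (frobSq (A (sec t)) + euclSq (b (sec t))) := by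
    rw [div_le_div_iff₀ (by positivity) (by linarith)] at h2
    rw [le_div_iff₀ hS]
    linarith
  have h4 : ∑ i, deviation A b i t ^ 2 =
      n - (A (sec t)).trace ^ 2 / (frobSq (A (sec t)) + euclSq (b (sec t))) := by
    rw [sum_deviation_sq, gam]
    field_simp
    ring
  have h5 : 1 - (n : ℝ) / (n + Real.pi ^ 2) ≤ Real.pi ^ 2 / (1 + Real.pi ^ 2) := by
    rw [one_sub_div (by positivity), add_sub_cancel_left]
    gcongr
  rw [h4]
  linarith

section Measurability

variable {A : (Fin n → ℝ) → Matrix (Fin n) (Fin n) ℝ} {b : (Fin n → ℝ) → Fin n → ℝ}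
  {lam Lam δ : ℝ}

lemma measurable_gam (hAB : SettingB A b lam Lam δ) : Measurable (gam A b) := by
  have h1 := hAB.measA
  have h2 := hAB.measb
  unfold gam frobSq euclSq Matrix.trace Matrix.diag
  fun_prop

lemma isPeriodic_gam (hAB : SettingB A b lam Lam δ) : IsPeriodic (gam A b) := by
  intro x k
  rw [gam, gam, hAB.perA, hAB.perb]

lemma aestronglyMeasurable_deviation (hAB : SettingB A b lam Lam δ)
    (i : (Fin n × Fin n) ⊕ Fin n) : AEStronglyMeasurable (deviation A b i) := by
  have hg := (measurable_gam hAB).comp measurable_sec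
  refine Measurable.aestronglyMeasurable ?_
  rcases i with ⟨i, j⟩ | j
  · exact (hg.mul ((hAB.measA i j).comp measurable_sec)).sub measurable_const
  · exact hg.mul ((hAB.measb j).comp measurable_sec)

end Measurability

lemma opSymb_zero (A : (Fin n → ℝ) → Matrix (Fin n) (Fin n) ℝ) (b : (Fin n → ℝ) → Fin n → ℝ)
    (x : Fin n → ℝ) : opSymb A b 0 x = 0 := by
  simp [opSymb]

/-- Existence and uniqueness of the renormalized invariant density on the torus. -/
theorem exists_torus_density (hn : 1 ≤ n) {A : (Fin n → ℝ) → Matrix (Fin n) (Fin n) ℝ}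
    {b : (Fin n → ℝ) → Fin n → ℝ} {lam Lam δ : ℝ} (hAB : SettingB A b lam Lam δ) :
    ∃ ρ : UnitAddTorus (Fin n) → ℝ, MemLp ρ 2 ∧ 0 ≤ᵐ[volume] ρ ∧ ∫ t, ρ t = 1 ∧
      (∀ k, ∫ t, (ρ t : ℂ) * ((gam A b (sec t) : ℂ) * opSymb A b k (sec t) * mFourier k t) = 0) ∧
      ∀ σ : UnitAddTorus (Fin n) → ℝ, MemLp σ 2 →
        (∀ k, ∫ t, (σ t : ℂ) * ((gam A b (sec t) : ℂ) * opSymb A b k (sec t) * mFourier k t) = 0) →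
        σ =ᵐ[volume] fun t => (∫ y, σ y) * ρ t := by
  have hpi : 0 < Real.pi ^ 2 := by positivity
  have hR2 : 0 < Real.pi ^ 2 / (1 + Real.pi ^ 2) := by positivity
  obtain ⟨ρ, h1, h2, h3, h4, h5⟩ := exists_density (n := n) (m := mult n)
    (M := √(1 + 1 / (4 * Real.pi ^ 2))) (R := √(Real.pi ^ 2 / (1 + Real.pi ^ 2)))
    (α := deviation A b)
    (by rw [Real.one_le_sqrt]; simp; positivity)
    (fun k => by rw [Real.sq_sqrt (by positivity)]; exact sum_mult_sq_le k)
    mult_zero mult_neg exists_max_principle (Real.sqrt_pos.2 hR2)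
    (by
      rw [← Real.sqrt_mul hR2.le, Real.sqrt_lt' one_pos, div_mul_eq_mul_div,
        div_lt_iff₀ (by positivity)]
      field_simp
      linarith)
    (aestronglyMeasurable_deviation hAB)
    (by rw [Real.sq_sqrt hR2.le]; exact ae_sum_deviation_sq_le hn hAB)
  have key : ∀ (σ : UnitAddTorus (Fin n) → ℝ) (k : Fin n → ℤ), k ≠ 0 →
      ∫ t, (σ t : ℂ) * ((gam A b (sec t) : ℂ) * opSymb A b k (sec t) * mFourier k t) =
      (-4 * Real.pi ^ 2 * ∑ l, (k l : ℂ) ^ 2) *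
        ∫ t, (σ t : ℂ) * ((1 + symb (deviation A b) (mult n) k t) * mFourier k t) := by
    intro σ k hk
    rw [← integral_const_mul]
    congr with t
    rw [gam_mul_opSymb A b hk]
    ring
  refine ⟨ρ, h1, h2, h3, fun k => ?_, fun σ hσ h => h5 σ hσ fun k hk => ?_⟩
  · rcases eq_or_ne k 0 with rfl | hk
    · simp [opSymb_zero]
    · rw [key ρ k hk, h4 k hk, mul_zero]
  · have h6 := h k
    rw [key σ k hk, mul_eq_zero] at h6
    refine h6.resolve_left ?_
    have := one_le_sum_sq hk
    have h0 : -4 * Real.pi ^ 2 * (∑ l, (k l : ℝ) ^ 2) ≠ 0 := by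
      have : 0 < Real.pi ^ 2 * (∑ l, (k l : ℝ) ^ 2) := by positivity
      linarith
    exact_mod_cast h0

lemma isPeriodic_pd {f : (Fin n → ℝ) → ℝ} (hf : IsPeriodic f) (i : Fin n) :
    IsPeriodic (pd f i) := by
  intro x k
  rw [pd, pd, ← fderiv_comp_add_right]
  congr 2
  ext y
  exact hf y k

lemma contDiff_pd {f : (Fin n → ℝ) → ℝ} {p q : WithTop ℕ∞} (hf : ContDiff ℝ q f) (hpq : p + 1 ≤ q)
    (i : Fin n) : ContDiff ℝ p (pd f i) :=
  (hf.fderiv_right hpq).clm_apply contDiff_const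

lemma hasFDerivAt_mFourier_proj (k : Fin n → ℤ) (x : Fin n → ℝ) :
    HasFDerivAt (fun x => mFourier k (proj x))
      (mFourier k (proj x) • ((2 * Real.pi * Complex.I : ℂ) • ∑ i, (k i : ℂ) •
        Complex.ofRealCLM.comp (ContinuousLinearMap.proj (R := ℝ) (φ := fun _ : Fin n => ℝ) i))) x := by
  simp_rw [mFourier_proj]
  refine HasFDerivAt.cexp (HasFDerivAt.const_mul ?_ _)
  refine HasFDerivAt.fun_sum fun i _ => ?_
  refine HasFDerivAt.const_mul ?_ _
  exact (Complex.ofRealCLM.comp (ContinuousLinearMap.proj (R := ℝ)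
    (φ := fun _ : Fin n => ℝ) i)).hasFDerivAt

lemma contDiff_mFourier_proj (k : Fin n → ℤ) {p : WithTop ℕ∞} :
    ContDiff ℝ p fun x => mFourier k (proj x) := by
  simp_rw [mFourier_proj]
  refine ContDiff.cexp (contDiff_const.mul (ContDiff.sum fun i _ => contDiff_const.mul ?_))
  exact Complex.ofRealCLM.contDiff.comp (contDiff_apply ℝ ℝ i)

/-- Fourier coefficients of partial derivatives. -/
lemma mFourierCoeff_pd {f : (Fin n → ℝ) → ℝ} (hf : ContDiff ℝ 1 f) (hper : IsPeriodic f)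
    (i : Fin n) (k : Fin n → ℤ) :
    mFourierCoeff (fun t => (pd f i (sec t) : ℂ)) k =
      2 * Real.pi * Complex.I * k i * mFourierCoeff (fun t => (f (sec t) : ℂ)) k := by
  have hcf : Continuous f := hf.continuous
  have hcp : Continuous (pd f i) := (contDiff_pd (p := 0) hf (by simp) i).continuous
  have hpp := isPeriodic_pd hper i
  have hcm : Continuous fun x : Fin n → ℝ => mFourier (-k) (proj x) :=
    (mFourier (-k)).continuous.comp continuous_proj
  have h0 := integral_deriv_sec_eq_zero (v := Pi.single i 1)
    (ψ := fun x => mFourier (-k) (proj x) * (f x : ℂ))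
    (ψ' := fun x => mFourier (-k) (proj x) * (2 * Real.pi * Complex.I * (-k i)) * (f x : ℂ) +
      mFourier (-k) (proj x) * (pd f i x : ℂ))
    (fun x l => by simp only [proj_add_intCast, hper x l])
    (fun x l => by simp only [proj_add_intCast, hper x l, hpp x l])
    (by fun_prop) ?_
  · rw [integral_add] at h0
    · have h1 : ∫ t, mFourier (-k) (proj (sec t)) * (2 * Real.pi * Complex.I * (-k i)) *
          (f (sec t) : ℂ) =
          (2 * Real.pi * Complex.I * (-k i)) * mFourierCoeff (fun t => (f (sec t) : ℂ)) k := by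
        rw [mFourierCoeff, ← integral_const_mul]
        congr with t
        rw [proj_sec, smul_eq_mul]
        ring
      have h2 : ∫ t, mFourier (-k) (proj (sec t)) * (pd f i (sec t) : ℂ) =
          mFourierCoeff (fun t => (pd f i (sec t) : ℂ)) k := by
        rw [mFourierCoeff]
        congr with t
        rw [proj_sec, smul_eq_mul]
      rw [h1, h2] at h0
      linear_combination h0
    · exact memLp_one_iff_integrable.1 (memLp_sec (f := fun x => mFourier (-k) (proj x) *
        (2 * Real.pi * Complex.I * (-k i)) * (f x : ℂ)) (by fun_prop)
        fun x l => by simp only [proj_add_intCast, hper x l])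
    · exact memLp_one_iff_integrable.1 (memLp_sec (f := fun x => mFourier (-k) (proj x) *
        (pd f i x : ℂ)) (by fun_prop) fun x l => by simp only [proj_add_intCast, hpp x l])
  · intro x s
    have hline : HasDerivAt (fun s : ℝ => x + s • fun j => ((Pi.single i 1 : Fin n → ℤ) j : ℝ))
        (Pi.single i 1) s := by
      have h1 : (fun j => ((Pi.single i 1 : Fin n → ℤ) j : ℝ)) = Pi.single i 1 := by
        ext j
        rcases eq_or_ne j i with rfl | h <;> simp [*]
      rw [h1]
      simpa using ((hasDerivAt_id s).smul_const (Pi.single i (1 : ℝ))).const_add x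
    have hm := (hasFDerivAt_mFourier_proj (-k) _).comp_hasDerivAt s hline
    have hff := ((hf.differentiable one_ne_zero _).hasFDerivAt.comp_hasDerivAt s
      hline).ofReal_comp
    refine (hm.mul hff).congr_deriv ?_
    have hsum : ∑ j, (k j : ℂ) * ((Pi.single i (1 : ℝ) : Fin n → ℝ) j : ℂ) = k i := by
      rw [Finset.sum_eq_single i] <;> simp +contextual
    simp only [smul_apply, sum_apply,
      ContinuousLinearMap.comp_apply, ContinuousLinearMap.proj_apply, Complex.ofRealCLM_apply,
      smul_eq_mul, Pi.neg_apply, Int.cast_neg, neg_mul, Finset.sum_neg_distrib, hsum, pd,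
      Function.comp_apply, mul_assoc]

/-- The rescaled coefficients of the operator, on the torus. -/
def coef (A : (Fin n → ℝ) → Matrix (Fin n) (Fin n) ℝ) (b : (Fin n → ℝ) → Fin n → ℝ) :
    (Fin n × Fin n) ⊕ Fin n → UnitAddTorus (Fin n) → ℝ
  | Sum.inl (i, j), t => gam A b (sec t) * A (sec t) i j
  | Sum.inr j, t => gam A b (sec t) * b (sec t) j

/-- The second and first partial derivatives of a function. -/
def derivs (φ : (Fin n → ℝ) → ℝ) : (Fin n × Fin n) ⊕ Fin n → (Fin n → ℝ) → ℝ
  | Sum.inl (i, j) => pd (pd φ j) i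
  | Sum.inr j => pd φ j

/-- The Fourier symbols of the second and first partial derivatives. -/
def derivSymb (n : ℕ) : (Fin n × Fin n) ⊕ Fin n → (Fin n → ℤ) → ℂ
  | Sum.inl (i, j), k => (2 * Real.pi * Complex.I * k i) * (2 * Real.pi * Complex.I * k j)
  | Sum.inr j, k => 2 * Real.pi * Complex.I * k j

lemma sum_coef_mul_derivs (A : (Fin n → ℝ) → Matrix (Fin n) (Fin n) ℝ)
    (b : (Fin n → ℝ) → Fin n → ℝ) (φ : (Fin n → ℝ) → ℝ) (t : UnitAddTorus (Fin n)) :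
    ∑ i, coef A b i t * derivs φ i (sec t) = gam A b (sec t) *
      (frobInner (A (sec t)) (hess φ (sec t)) + dotc (b (sec t)) (grad φ (sec t))) := by
  rw [Fintype.sum_sum_type, Fintype.sum_prod_type]
  simp only [coef, derivs, frobInner, dotc, hess, grad, Matrix.of_apply, mul_add, Finset.mul_sum,
    mul_assoc]

lemma sum_coef_mul_derivSymb (A : (Fin n → ℝ) → Matrix (Fin n) (Fin n) ℝ)
    (b : (Fin n → ℝ) → Fin n → ℝ) (k : Fin n → ℤ) (t : UnitAddTorus (Fin n)) :
    ∑ i, (coef A b i t : ℂ) * derivSymb n i k = (gam A b (sec t) : ℂ) * opSymb A b k (sec t) := by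
  rw [Fintype.sum_sum_type, Fintype.sum_prod_type]
  simp only [coef, derivSymb, opSymb, mul_add, Finset.mul_sum, mul_assoc, Complex.ofReal_mul]

lemma coef_eq (A : (Fin n → ℝ) → Matrix (Fin n) (Fin n) ℝ) (b : (Fin n → ℝ) → Fin n → ℝ)
    (i : (Fin n × Fin n) ⊕ Fin n) : ∃ c : ℝ, coef A b i = fun t => deviation A b i t + c := by
  rcases i with ⟨i, j⟩ | j
  · exact ⟨if i = j then 1 else 0, by ext t; simp [coef, deviation]⟩
  · exact ⟨0, by ext t; simp [coef, deviation]⟩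

lemma memLp_coef (hn : 1 ≤ n) {A : (Fin n → ℝ) → Matrix (Fin n) (Fin n) ℝ}
    {b : (Fin n → ℝ) → Fin n → ℝ} {lam Lam δ : ℝ} (hAB : SettingB A b lam Lam δ)
    (i : (Fin n × Fin n) ⊕ Fin n) : MemLp (coef A b i) ∞ := by
  obtain ⟨c, hc⟩ := coef_eq A b i
  rw [hc]
  refine MemLp.add (f := deviation A b i) (g := fun _ => c) ?_ (memLp_const c)
  refine memLp_top_of_bound (aestronglyMeasurable_deviation hAB i) 1 ?_
  filter_upwards [ae_sum_deviation_sq_le hn hAB] with t ht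
  have h1 : deviation A b i t ^ 2 ≤ 1 := by
    refine (Finset.single_le_sum (f := fun i => deviation A b i t ^ 2) (fun _ _ => sq_nonneg _)
      (Finset.mem_univ i)).trans (ht.trans ?_)
    rw [div_le_one (by positivity)]
    linarith
  exact abs_le_one_iff_mul_self_le_one.2 (by nlinarith)

lemma continuous_derivs {φ : (Fin n → ℝ) → ℝ} (hφ : ContDiff ℝ 2 φ)
    (i : (Fin n × Fin n) ⊕ Fin n) : Continuous (derivs φ i) := by
  have h1 (j) : ContDiff ℝ 1 (pd φ j) := contDiff_pd hφ (by norm_num) j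
  rcases i with ⟨i, j⟩ | j
  · exact (contDiff_pd (p := 0) (h1 j) (by simp) i).continuous
  · exact (h1 j).continuous

lemma isPeriodic_derivs {φ : (Fin n → ℝ) → ℝ} (hφ : IsPeriodic φ)
    (i : (Fin n × Fin n) ⊕ Fin n) : IsPeriodic (derivs φ i) := by
  rcases i with ⟨i, j⟩ | j
  · exact isPeriodic_pd (isPeriodic_pd hφ j) i
  · exact isPeriodic_pd hφ j

lemma mFourierCoeff_derivs {φ : (Fin n → ℝ) → ℝ} (hφ : ContDiff ℝ 2 φ) (hper : IsPeriodic φ)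
    (i : (Fin n × Fin n) ⊕ Fin n) (k : Fin n → ℤ) :
    mFourierCoeff (fun t => (derivs φ i (sec t) : ℂ)) k =
      derivSymb n i k * mFourierCoeff (fun t => (φ (sec t) : ℂ)) k := by
  have h1 (j) : ContDiff ℝ 1 (pd φ j) := contDiff_pd hφ (by norm_num) j
  have h2 := hφ.of_le one_le_two
  rcases i with ⟨i, j⟩ | j
  · simp only [derivs, derivSymb]
    rw [mFourierCoeff_pd (h1 j) (isPeriodic_pd hper j), mFourierCoeff_pd h2 hper]
    ring
  · exact mFourierCoeff_pd h2 hper j k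

/-- A density annihilating the operator on all characters annihilates it on all periodic
`C²` functions. -/
theorem integral_eq_zero_of_mFourier (hn : 1 ≤ n)
    {A : (Fin n → ℝ) → Matrix (Fin n) (Fin n) ℝ} {b : (Fin n → ℝ) → Fin n → ℝ} {lam Lam δ : ℝ}
    (hAB : SettingB A b lam Lam δ) {ρ : UnitAddTorus (Fin n) → ℝ} (hρ : MemLp ρ 2)
    (h : ∀ k, ∫ t, (ρ t : ℂ) * ((gam A b (sec t) : ℂ) * opSymb A b k (sec t) * mFourier k t) = 0)
    {φ : (Fin n → ℝ) → ℝ} (hφ : ContDiff ℝ 2 φ) (hper : IsPeriodic φ) :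
    ∫ t, ρ t * (gam A b (sec t) *
      (frobInner (A (sec t)) (hess φ (sec t)) + dotc (b (sec t)) (grad φ (sec t)))) = 0 := by
  have hP (i) : MemLp (fun t => ((ρ t * coef A b i t : ℝ) : ℂ)) 2 :=
    MemLp.ofReal ((memLp_coef hn hAB i).mul hρ)
  have hu (i) : MemLp (fun t => (derivs φ i (sec t) : ℂ)) 2 :=
    MemLp.ofReal (memLp_sec (continuous_derivs hφ i) (isPeriodic_derivs hper i))
  have hi1 (i) (k : Fin n → ℤ) :
      Integrable fun t => ((ρ t * coef A b i t : ℝ) : ℂ) * mFourier k t :=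
    (hP i).integrable_mul (q := 2) (MemLp.of_bound
      (mFourier k).continuous.aestronglyMeasurable ‖mFourier k‖
      (Filter.Eventually.of_forall (mFourier k).norm_coe_le_norm))
  have hi2 (i) : Integrable fun t => ((ρ t * coef A b i t : ℝ) : ℂ) * (derivs φ i (sec t) : ℂ) :=
    (hP i).integrable_mul (hu i)
  have hsum := hasSum_sum (s := Finset.univ) fun i _ => hasSum_integral_mul (hP i) (hu i)
  have hzero (k : Fin n → ℤ) : ∑ i, (∫ t, ((ρ t * coef A b i t : ℝ) : ℂ) * mFourier k t) *
      mFourierCoeff (fun t => (derivs φ i (sec t) : ℂ)) k = 0 := by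
    have e : ∑ i, (∫ t, ((ρ t * coef A b i t : ℝ) : ℂ) * mFourier k t) * derivSymb n i k = 0 := by
      simp_rw [← integral_mul_const]
      rw [← integral_finsetSum _ fun i _ => (hi1 i k).mul_const _, ← h k]
      congr with t
      rw [← sum_coef_mul_derivSymb, Finset.sum_mul, Finset.mul_sum]
      refine Finset.sum_congr rfl fun i _ => ?_
      push_cast
      ring
    simp_rw [mFourierCoeff_derivs hφ hper, ← mul_assoc, ← Finset.sum_mul, e, zero_mul]
  simp only [hzero] at hsum
  have h0 := hsum.unique hasSum_zero
  rw [← integral_finsetSum _ fun i _ => hi2 i] at h0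
  rw [← Complex.ofReal_inj, ← integral_complex_ofReal, Complex.ofReal_zero, ← h0]
  congr with t
  rw [← sum_coef_mul_derivs, Finset.mul_sum, Complex.ofReal_sum]
  refine Finset.sum_congr rfl fun i _ => ?_
  push_cast
  ring

/-- Real trigonometric test functions. -/
def trigFun (k : Fin n → ℤ) (z : ℂ) (x : Fin n → ℝ) : ℝ := (z * mFourier k (proj x)).re

lemma contDiff_trigFun (k : Fin n → ℤ) (z : ℂ) {p : WithTop ℕ∞} : ContDiff ℝ p (trigFun k z) :=
  Complex.reCLM.contDiff.comp (contDiff_const.mul (contDiff_mFourier_proj k))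

lemma isPeriodic_trigFun (k : Fin n → ℤ) (z : ℂ) : IsPeriodic (trigFun k z) := by
  intro x l
  simp only [trigFun, proj_add_intCast]

lemma pd_trigFun (k : Fin n → ℤ) (z : ℂ) (i : Fin n) :
    pd (trigFun k z) i = trigFun k (z * (2 * Real.pi * Complex.I * k i)) := by
  ext x
  have h := Complex.reCLM.hasFDerivAt.comp x ((hasFDerivAt_mFourier_proj k x).const_mul z)
  have hsum : ∑ j, (k j : ℂ) * ((Pi.single i (1 : ℝ) : Fin n → ℝ) j : ℂ) = k i := by
    rw [Finset.sum_eq_single i] <;> simp +contextual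
  have h2 : HasFDerivAt (trigFun k z) _ x := h
  rw [pd, h2.fderiv]
  simp only [ContinuousLinearMap.comp_apply, smul_apply, sum_apply,
    ContinuousLinearMap.proj_apply, Complex.ofRealCLM_apply, smul_eq_mul, hsum,
    Complex.reCLM_apply, trigFun]
  congr 1
  ring

lemma derivs_trigFun (k : Fin n → ℤ) (z : ℂ) (i : (Fin n × Fin n) ⊕ Fin n) :
    derivs (trigFun k z) i = trigFun k (z * derivSymb n i k) := by
  rcases i with ⟨i, j⟩ | j
  · simp only [derivs, derivSymb, pd_trigFun]
    congr 1
    ring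
  · simp only [derivs, derivSymb, pd_trigFun]

/-- A density annihilating the operator on all periodic `C²` functions annihilates it on all
characters. -/
theorem integral_mFourier_eq_zero {A : (Fin n → ℝ) → Matrix (Fin n) (Fin n) ℝ}
    {b : (Fin n → ℝ) → Fin n → ℝ} {σ : UnitAddTorus (Fin n) → ℝ}
    (h : ∀ φ : (Fin n → ℝ) → ℝ, ContDiff ℝ 2 φ → IsPeriodic φ →
      ∫ t, σ t * (gam A b (sec t) *
        (frobInner (A (sec t)) (hess φ (sec t)) + dotc (b (sec t)) (grad φ (sec t)))) = 0)
    (k : Fin n → ℤ) :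
    ∫ t, (σ t : ℂ) * ((gam A b (sec t) : ℂ) * opSymb A b k (sec t) * mFourier k t) = 0 := by
  set G : UnitAddTorus (Fin n) → ℂ :=
    fun t => (σ t : ℂ) * ((gam A b (sec t) : ℂ) * opSymb A b k (sec t) * mFourier k t) with hG
  by_cases hi : Integrable G
  swap
  · exact integral_undef hi
  have key (z : ℂ) : (z * ∫ t, G t).re = 0 := by
    rw [← integral_const_mul, ← Complex.reCLM_apply,
      ← Complex.reCLM.integral_comp_comm (hi.const_mul z),
      ← h (trigFun k z) (contDiff_trigFun k z) (isPeriodic_trigFun k z)]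
    congr with t
    simp only [hG]
    rw [← sum_coef_mul_derivs, ← sum_coef_mul_derivSymb, Complex.reCLM_apply, Finset.sum_mul,
      Finset.mul_sum, Finset.mul_sum, Finset.mul_sum, Complex.re_sum]
    refine Finset.sum_congr rfl fun i _ => ?_
    rw [derivs_trigFun, trigFun, proj_sec, ← Complex.re_ofReal_mul, ← Complex.re_ofReal_mul]
    congr 1
    ring
  have h1 := key 1
  have h2 := key (-Complex.I)
  rw [one_mul] at h1
  apply Complex.ext
  · exact h1
  · simpa using h2

section Main

variable {A : (Fin n → ℝ) → Matrix (Fin n) (Fin n) ℝ} {b : (Fin n → ℝ) → Fin n → ℝ}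
  {lam Lam δ : ℝ}

lemma memLp_gam (hn : 1 ≤ n) (hAB : SettingB A b lam Lam δ) :
    MemLp (fun t => gam A b (sec t)) ∞ := by
  obtain ⟨c, C, hc, h⟩ := exists_gam_bounds hn hAB
  refine memLp_top_of_bound
    ((measurable_gam hAB).comp measurable_sec).aestronglyMeasurable C ?_
  filter_upwards [ae_sec h] with t ht
  rw [Real.norm_of_nonneg (hc.le.trans ht.1)]
  exact ht.2

lemma memLp_inv_gam (hn : 1 ≤ n) (hAB : SettingB A b lam Lam δ) :
    MemLp (fun t => (gam A b (sec t))⁻¹) ∞ := by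
  obtain ⟨c, C, hc, h⟩ := exists_gam_bounds hn hAB
  refine memLp_top_of_bound
    ((measurable_gam hAB).comp measurable_sec).inv.aestronglyMeasurable c⁻¹ ?_
  filter_upwards [ae_sec h] with t ht
  rw [Real.norm_of_nonneg (inv_nonneg.2 (hc.le.trans ht.1))]
  exact inv_anti₀ hc ht.1

lemma isPeriodic_rel {f g : (Fin n → ℝ) → ℝ} (hf : IsPeriodic f) (hg : IsPeriodic g)
    (R : ℝ → ℝ → Prop) : IsPeriodic fun x => R (f x) (g x) := by
  intro x k
  simp only [hf x k, hg x k]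

theorem exists_unique_invariantMeasure (hn : 1 ≤ n) (hAB : SettingB A b lam Lam δ) :
    ∃ r : (Fin n → ℝ) → ℝ, IsInvariantMeasure A b r ∧ (∀ᵐ x, 0 ≤ r x) ∧
      ∀ r' : (Fin n → ℝ) → ℝ, IsInvariantMeasure A b r' → ∀ᵐ x, r' x = r x := by
  obtain ⟨c, C, hc, hgam⟩ := exists_gam_bounds hn hAB
  have hgs := ae_sec hgam
  obtain ⟨ρ₀, h1, h2, h3, h4, h5⟩ := exists_torus_density hn hAB
  obtain ⟨ρ, hρm, hρ⟩ := h1.aestronglyMeasurable.aemeasurable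
  have hρ2 : MemLp ρ 2 := (memLp_congr_ae hρ).1 h1
  have hρi : Integrable ρ := hρ2.integrable one_le_two
  have hρ0 : 0 ≤ᵐ[volume] ρ := h2.trans hρ.le
  have hρ1 : ∫ t, ρ t = 1 := by rw [← integral_congr_ae hρ, h3]
  have hρk (k) : ∫ t, (ρ t : ℂ) *
      ((gam A b (sec t) : ℂ) * opSymb A b k (sec t) * mFourier k t) = 0 := by
    rw [← h4 k]
    refine integral_congr_ae ?_
    filter_upwards [hρ] with t ht
    rw [ht]
  have hw : MemLp (fun t => gam A b (sec t) * ρ t) 2 := hρ2.mul (memLp_gam hn hAB)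
  set m : ℝ := ∫ t, gam A b (sec t) * ρ t with hm
  have hmpos : 0 < m := by
    refine hc.trans_le ?_
    calc c = ∫ t, c * ρ t := by rw [integral_const_mul, hρ1, mul_one]
      _ ≤ m := by
        refine integral_mono_ae (hρi.const_mul c) (hw.integrable one_le_two) ?_
        filter_upwards [hgs, hρ0] with t ht ht0
        exact mul_le_mul_of_nonneg_right ht.1 ht0
  set r : (Fin n → ℝ) → ℝ := fun x => m⁻¹ * (gam A b x * ρ (proj x)) with hr
  have hrs (t) : r (sec t) = m⁻¹ * (gam A b (sec t) * ρ t) := by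
    simp only [hr, proj_sec]
  have hrper : IsPeriodic r := by
    intro x k
    simp only [hr, proj_add_intCast, isPeriodic_gam hAB x k]
  have hrm : Measurable r :=
    measurable_const.mul ((measurable_gam hAB).mul (hρm.comp continuous_proj.measurable))
  refine ⟨r, ⟨hrm, hrper, ?_, ?_, ?_⟩, ?_, ?_⟩
  · rw [IntegrableOn, ← measurePreserving_sec.integrable_comp_emb measurableEmbedding_sec]
    have h6 : MemLp (fun t => r (sec t)) 2 := by
      simp only [hrs]
      exact hw.const_mul _
    exact h6.integrable_sq
  · rw [← integral_sec]
    simp only [hrs]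
    rw [integral_const_mul, ← hm, inv_mul_cancel₀ hmpos.ne']
  · intro φ hφ hper
    rw [← integral_sec (fun x => r x * (frobInner (A x) (hess φ x) + dotc (b x) (grad φ x)))]
    have h6 := integral_eq_zero_of_mFourier hn hAB hρ2 hρk hφ hper
    rw [← mul_zero m⁻¹, ← h6, ← integral_const_mul]
    congr with t
    rw [hrs]
    ring
  · refine ae_of_ae_sec (isPeriodic_rel hrper hrper fun u _ => 0 ≤ u) ?_
    filter_upwards [hgs, hρ0] with t ht ht0
    rw [hrs]
    exact mul_nonneg (inv_nonneg.2 hmpos.le) (mul_nonneg (hc.le.trans ht.1) ht0)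
  · rintro r' ⟨hm', hper', hsq', hinteg', hinv'⟩
    refine ae_of_ae_sec (isPeriodic_rel hper' hrper (· = ·)) ?_
    have h6 : MemLp (fun t => r' (sec t)) 2 := by
      refine (memLp_two_iff_integrable_sq (hm'.comp measurable_sec).aestronglyMeasurable).2 ?_
      exact (measurePreserving_sec.integrable_comp_emb measurableEmbedding_sec).2 hsq'
    have hσ : MemLp (fun t => (gam A b (sec t))⁻¹ * r' (sec t)) 2 := h6.mul (memLp_inv_gam hn hAB)
    have hcancel : ∀ᵐ t, gam A b (sec t) * ((gam A b (sec t))⁻¹ * r' (sec t)) = r' (sec t) := by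
      filter_upwards [hgs] with t ht
      rw [mul_inv_cancel_left₀ (hc.trans_le ht.1).ne']
    have h7 := h5 _ hσ (integral_mFourier_eq_zero fun φ hφ hper => by
      rw [← hinv' φ hφ hper, ← integral_sec]
      refine integral_congr_ae ?_
      filter_upwards [hcancel] with t ht
      linear_combination
        (frobInner (A (sec t)) (hess φ (sec t)) + dotc (b (sec t)) (grad φ (sec t))) * ht)
    set s : ℝ := ∫ t, (gam A b (sec t))⁻¹ * r' (sec t)
    have h8 : ∀ᵐ t, r' (sec t) = s * (gam A b (sec t) * ρ t) := by
      filter_upwards [hcancel, h7, hρ] with t ht1 ht2 ht3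
      rw [← ht1, ht2, ht3]
      ring
    have hs : s * m = 1 := by
      rw [← hinteg', ← integral_sec, integral_congr_ae h8, integral_const_mul]
    filter_upwards [h8] with t ht
    rw [ht, hrs, eq_inv_of_mul_eq_one_left hs]

end Main

end TorusCordes

end

/-- In Setting B there exists a nonnegative invariant measure
`r ∈ L²_per(Y)` with `∫_Y r = 1`, solving the stationary FPK problem in the very
weak sense, and it is unique up to equality almost everywhere. -/
theorem stmt_0 {n : ℕ} (hn : 1 ≤ n)
    (A : (Fin n → ℝ) → Matrix (Fin n) (Fin n) ℝ) (b : (Fin n → ℝ) → Fin n → ℝ)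
    (lam Lam δ : ℝ) (hAB : SettingB A b lam Lam δ) :
    ∃ r : (Fin n → ℝ) → ℝ, IsInvariantMeasure A b r ∧
      (∀ᵐ x ∂(volume : Measure (Fin n → ℝ)), 0 ≤ r x) ∧
      ∀ r' : (Fin n → ℝ) → ℝ, IsInvariantMeasure A b r' →
        ∀ᵐ x ∂(volume : Measure (Fin n → ℝ)), r' x = r x := by
  exact TorusCordes.exists_unique_invariantMeasure hn hAB
end
end

section
/- Let n ≥ 1 and suppose (A,b) satisfies Setting B. Let r : ℝⁿ → ℝ be measurable, ℤⁿ-periodic with ∫_Y r² < ∞, ∫_Y r = 1, and ∫_Y r(A:D²φ + b·∇φ) = 0 for every twice continuously differentiable ℤⁿ-periodic φ : ℝⁿ → ℝ (the invariant measure). Then every measurable ℤⁿ-periodic function u : ℝⁿ → ℝ with ∫_Y u² < ∞ satisfying ∫_Y u(A:D²φ + b·∇φ) = 0 for every twice continuously differentiable ℤⁿ-periodic φ is equal to c·r almost everywhere for some constant c ∈ ℝ. -/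
open MeasureTheory

noncomputable section

/-- The phase `2π k·x`. -/
def phase {n : ℕ} (k : Fin n → ℤ) (x : Fin n → ℝ) : ℝ := 2 * Real.pi * ∑ j, (k j : ℝ) * x j

/-- The plane wave `exp (2πi k·x)`. -/
def wave {n : ℕ} (k : Fin n → ℤ) (x : Fin n → ℝ) : ℂ := Complex.exp (phase k x * Complex.I)

/-- Squared Euclidean length of a frequency. -/
def freqSq {n : ℕ} (k : Fin n → ℤ) : ℝ := ∑ j, (k j : ℝ) ^ 2

lemma norm_wave {n : ℕ} (k : Fin n → ℤ) (x : Fin n → ℝ) : ‖wave k x‖ = 1 :=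
  Complex.norm_exp_ofReal_mul_I _

lemma continuous_phase {n : ℕ} (k : Fin n → ℤ) : Continuous (phase k) := by
  unfold phase; fun_prop

lemma continuous_wave {n : ℕ} (k : Fin n → ℤ) : Continuous (wave k) := by
  have := continuous_phase k
  unfold wave; fun_prop

lemma wave_zero {n : ℕ} (x : Fin n → ℝ) : wave 0 x = 1 := by
  simp [wave, phase]

lemma freqSq_pos {n : ℕ} {k : Fin n → ℤ} (hk : k ≠ 0) : 0 < freqSq k := by
  obtain ⟨i, hi⟩ := Function.ne_iff.mp hk
  have hi' : (k i : ℝ) ≠ 0 := by exact_mod_cast hi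
  exact Finset.sum_pos' (fun j _ => sq_nonneg _) ⟨i, Finset.mem_univ i, by positivity⟩

lemma one_le_freqSq {n : ℕ} {k : Fin n → ℤ} (hk : k ≠ 0) : 1 ≤ freqSq k := by
  have h := freqSq_pos hk
  have e : freqSq k = ((∑ j, (k j) ^ 2 : ℤ) : ℝ) := by simp [freqSq]
  rw [e] at h ⊢
  exact_mod_cast h

lemma phase_add_int {n : ℕ} (k m : Fin n → ℤ) (x : Fin n → ℝ) :
    phase k (x + fun i => (m i : ℝ)) = phase k x + (∑ j, k j * m j : ℤ) * (2 * Real.pi) := by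
  simp only [phase, Pi.add_apply, mul_add, Finset.sum_add_distrib]
  push_cast
  ring

lemma mFourier_coe {n : ℕ} (k : Fin n → ℤ) (x : Fin n → ℝ) :
    UnitAddTorus.mFourier k (fun i => (x i : UnitAddCircle)) = wave k x := by
  simp only [UnitAddTorus.mFourier, ContinuousMap.coe_mk, wave, phase]
  simp only [fourier_coe_apply, ← Complex.exp_sum]
  congr 1
  push_cast
  rw [Finset.mul_sum, Finset.sum_mul]
  refine Finset.sum_congr rfl fun i _ => ?_
  ring

lemma conj_wave {n : ℕ} (k : Fin n → ℤ) (x : Fin n → ℝ) :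
    (starRingEnd ℂ) (wave k x) = wave (-k) x := by
  rw [← mFourier_coe, ← mFourier_coe, UnitAddTorus.mFourier_neg]

lemma unitCell_ae_eq_Ioc (n : ℕ) : unitCell n =ᵐ[volume]
    {x : Fin n → ℝ | ∀ i, x i ∈ Set.Ioc ((0 : Fin n → ℝ) i) ((0 : Fin n → ℝ) i + 1)} := by
  have e : {x : Fin n → ℝ | ∀ i, x i ∈ Set.Ioc ((0 : Fin n → ℝ) i) ((0 : Fin n → ℝ) i + 1)} =
      Set.univ.pi fun _ => Set.Ioc (0 : ℝ) 1 := by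
    ext x; simp
  rw [e]
  exact (Measure.univ_pi_Ioo_ae_eq_Icc (μ := fun _ => (volume : Measure ℝ))).trans
    (Measure.univ_pi_Ioc_ae_eq_Icc (μ := fun _ => (volume : Measure ℝ))).symm

lemma volume_unitCell (n : ℕ) : volume (unitCell n) = 1 := by
  rw [unitCell, volume_pi_pi]
  simp

instance isFiniteMeasure_unitCell (n : ℕ) :
    IsFiniteMeasure ((volume : Measure (Fin n → ℝ)).restrict (unitCell n)) :=
  ⟨by simp [volume_unitCell]⟩

section Torus

local instance : MeasureSpace UnitAddCircle := ⟨AddCircle.haarAddCircle⟩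

local instance : IsProbabilityMeasure (volume : Measure UnitAddCircle) :=
  inferInstanceAs (IsProbabilityMeasure AddCircle.haarAddCircle)

lemma integral_unitCell_comp_coe {n : ℕ} {E : Type*} [NormedAddCommGroup E] [NormedSpace ℝ E]
    (f : UnitAddTorus (Fin n) → E) :
    ∫ x in unitCell n, f (fun i => (x i : UnitAddCircle)) = ∫ t : UnitAddTorus (Fin n), f t := by
  rw [setIntegral_congr_set (unitCell_ae_eq_Ioc n)]
  exact (UnitAddTorus.integral_preimage f 0).symm

lemma integral_conj_wave_mul_wave {n : ℕ} (k l : Fin n → ℤ) :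
    ∫ x in unitCell n, (starRingEnd ℂ) (wave k x) * wave l x = if k = l then 1 else 0 := by
  have h := orthonormal_iff_ite.1 (UnitAddTorus.orthonormal_mFourier (d := Fin n)) k l
  rw [ContinuousMap.inner_toLp] at h
  rw [← h, ← integral_unitCell_comp_coe]
  simp only [mFourier_coe, mul_comm]

/-- Parseval's identity on the unit cell. -/
lemma hasSum_sq_coeff {n : ℕ} {w : (Fin n → ℝ) → ℝ} (hw : Measurable w)
    (hw2 : IntegrableOn (fun x => (w x) ^ 2) (unitCell n)) :
    HasSum (fun k : Fin n → ℤ => ‖∫ x in unitCell n, (starRingEnd ℂ) (wave k x) * (w x : ℂ)‖ ^ 2)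
      (∫ x in unitCell n, (w x) ^ 2) := by
  set P : UnitAddTorus (Fin n) → (Fin n → ℝ) :=
    fun t => (UnitAddTorus.measurableEquivPiIoc (0 : Fin n → ℝ) t).1 with hP
  have hPm : Measurable P :=
    measurable_subtype_coe.comp (UnitAddTorus.measurableEquivPiIoc (0 : Fin n → ℝ)).measurable
  have hPx : ∀ x : Fin n → ℝ,
      (∀ i, x i ∈ Set.Ioc ((0 : Fin n → ℝ) i) ((0 : Fin n → ℝ) i + 1)) →
      P (fun i => (x i : UnitAddCircle)) = x := by
    intro x hx
    have := (UnitAddTorus.measurableEquivPiIoc (0 : Fin n → ℝ)).apply_symm_apply ⟨x, hx⟩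
    rw [UnitAddTorus.coe_symm_measurableEquivPiIoc_apply] at this
    exact congrArg Subtype.val this
  have hae : ∀ᵐ x ∂(volume : Measure (Fin n → ℝ)).restrict (unitCell n),
      P (fun i => (x i : UnitAddCircle)) = x := by
    rw [Measure.restrict_congr_set (unitCell_ae_eq_Ioc n)]
    refine (ae_restrict_mem ?_).mono fun x hx => hPx x hx
    exact MeasurableSet.univ_pi' fun i => measurableSet_Ioc
  have hmeas : Measurable fun t => (w (P t) : ℂ) := Complex.measurable_ofReal.comp (hw.comp hPm)
  have hL : MemLp (fun t => (w (P t) : ℂ)) 2 (volume : Measure (UnitAddTorus (Fin n))) := by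
    rw [memLp_two_iff_integrable_sq_norm hmeas.aestronglyMeasurable]
    refine ⟨(hmeas.norm.pow_const 2).aestronglyMeasurable, ?_⟩
    rw [HasFiniteIntegral, UnitAddTorus.lintegral_preimage _ 0,
      ← Measure.restrict_congr_set (unitCell_ae_eq_Ioc n)]
    refine lt_of_eq_of_lt ?_ hw2.2
    refine lintegral_congr_ae (hae.mono fun x hx => ?_)
    simp [hx]
  have key := UnitAddTorus.hasSum_sq_mFourierCoeff (hL.toLp _)
  have hco := hL.coeFn_toLp
  convert key using 1
  · funext k
    congr 2
    rw [UnitAddTorus.mFourierCoeff, integral_congr_ae (g := fun t =>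
      UnitAddTorus.mFourier (-k) t • (w (P t) : ℂ)) (hco.mono fun t ht => by simp only [ht]),
      ← integral_unitCell_comp_coe]
    refine integral_congr_ae (hae.mono fun x hx => ?_)
    simp only [hx, mFourier_coe, conj_wave, smul_eq_mul]
  · rw [integral_congr_ae (g := fun t => ‖(w (P t) : ℂ)‖ ^ 2)
      (hco.mono fun t ht => by simp only [ht]), ← integral_unitCell_comp_coe]
    refine integral_congr_ae (hae.mono fun x hx => ?_)
    simp [hx]

end Torus

lemma integrable_wave_mul_wave {n : ℕ} (c : ℂ) (k l : Fin n → ℤ) :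
    IntegrableOn (fun x => c * ((starRingEnd ℂ) (wave k x) * wave l x)) (unitCell n) := by
  refine Integrable.const_mul ?_ c
  refine Integrable.of_bound (C := 1) ?_ ?_
  · exact ((Complex.continuous_conj.comp (continuous_wave k)).mul
      (continuous_wave l)).aestronglyMeasurable
  · exact Filter.Eventually.of_forall fun x => by simp [norm_wave]

/-- Parseval's identity for trigonometric polynomials. -/
lemma integral_norm_sq_trigPoly {n : ℕ} (S : Finset (Fin n → ℤ)) (a : (Fin n → ℤ) → ℂ) :
    ∫ x in unitCell n, ‖∑ k ∈ S, a k * wave k x‖ ^ 2 = ∑ k ∈ S, ‖a k‖ ^ 2 := by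
  have e : ∀ x, ((‖∑ k ∈ S, a k * wave k x‖ ^ 2 : ℝ) : ℂ) =
      ∑ k ∈ S, ∑ l ∈ S, ((starRingEnd ℂ) (a k) * a l) *
        ((starRingEnd ℂ) (wave k x) * wave l x) := by
    intro x
    push_cast
    rw [← Complex.conj_mul', map_sum, Finset.sum_mul_sum]
    refine Finset.sum_congr rfl fun k _ => Finset.sum_congr rfl fun l _ => ?_
    rw [map_mul]; ring
  have : ((∫ x in unitCell n, ‖∑ k ∈ S, a k * wave k x‖ ^ 2 : ℝ) : ℂ) =
      ((∑ k ∈ S, ‖a k‖ ^ 2 : ℝ) : ℂ) := by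
    rw [← integral_complex_ofReal]
    simp_rw [e]
    rw [integral_finsetSum _ fun k _ => integrable_finsetSum _ fun l _ =>
      integrable_wave_mul_wave _ k l]
    push_cast
    refine Finset.sum_congr rfl fun k hk => ?_
    rw [integral_finsetSum _ fun l _ => integrable_wave_mul_wave _ k l]
    simp_rw [integral_const_mul, integral_conj_wave_mul_wave]
    simp [hk, Complex.conj_mul']
  exact_mod_cast this

lemma hasFDerivAt_phase {n : ℕ} (k : Fin n → ℤ) (x : Fin n → ℝ) :
    HasFDerivAt (phase k) ((2 * Real.pi) • ∑ j, (k j : ℝ) •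
      (ContinuousLinearMap.proj j : (Fin n → ℝ) →L[ℝ] ℝ)) x := by
  unfold phase
  refine HasFDerivAt.const_mul (HasFDerivAt.fun_sum fun j _ => ?_) _
  exact (hasFDerivAt_apply j x).const_mul _

lemma fderiv_phase_single {n : ℕ} (k : Fin n → ℤ) (i : Fin n) :
    ((2 * Real.pi) • ∑ j, (k j : ℝ) • (ContinuousLinearMap.proj j : (Fin n → ℝ) →L[ℝ] ℝ))
      (Pi.single i 1) = 2 * Real.pi * k i := by
  simp [Pi.single_apply]

lemma pd_const_mul_cos {n : ℕ} (c : ℝ) (k : Fin n → ℤ) (i : Fin n) :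
    pd (fun x => c * Real.cos (phase k x)) i =
      fun x => (-(c * (2 * Real.pi * k i))) * Real.sin (phase k x) := by
  funext x
  rw [pd, ((hasFDerivAt_phase k x).cos.const_mul c).fderiv]
  rw [smul_apply, smul_apply, fderiv_phase_single]
  simp only [smul_eq_mul]
  ring

lemma pd_const_mul_sin {n : ℕ} (c : ℝ) (k : Fin n → ℤ) (i : Fin n) :
    pd (fun x => c * Real.sin (phase k x)) i =
      fun x => (c * (2 * Real.pi * k i)) * Real.cos (phase k x) := by
  funext x
  rw [pd, ((hasFDerivAt_phase k x).sin.const_mul c).fderiv]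
  rw [smul_apply, smul_apply, fderiv_phase_single]
  simp only [smul_eq_mul]
  ring

lemma contDiff_phase {n : ℕ} (k : Fin n → ℤ) : ContDiff ℝ 2 (phase k) := by
  unfold phase; fun_prop

/-- The second-order part of the symbol of the operator `A : D² + b · ∇` at frequency `k`. -/
def symbRe {n : ℕ} (A : (Fin n → ℝ) → Matrix (Fin n) (Fin n) ℝ) (k : Fin n → ℤ)
    (x : Fin n → ℝ) : ℝ := -(4 * Real.pi ^ 2 * ∑ i, ∑ j, A x i j * ((k i : ℝ) * k j))

/-- The first-order part of the symbol of the operator `A : D² + b · ∇` at frequency `k`. -/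
def symbIm {n : ℕ} (b : (Fin n → ℝ) → Fin n → ℝ) (k : Fin n → ℤ) (x : Fin n → ℝ) : ℝ :=
  2 * Real.pi * ∑ i, b x i * (k i : ℝ)

/-- The symbol of the operator `A : D² + b · ∇` at frequency `k`. -/
def symb {n : ℕ} (A : (Fin n → ℝ) → Matrix (Fin n) (Fin n) ℝ) (b : (Fin n → ℝ) → Fin n → ℝ)
    (k : Fin n → ℤ) (x : Fin n → ℝ) : ℂ := ⟨symbRe A k x, symbIm b k x⟩

lemma operator_cos {n : ℕ} (A : (Fin n → ℝ) → Matrix (Fin n) (Fin n) ℝ)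
    (b : (Fin n → ℝ) → Fin n → ℝ) (k : Fin n → ℤ) (x : Fin n → ℝ) :
    frobInner (A x) (hess (fun x => 1 * Real.cos (phase k x)) x) +
      dotc (b x) (grad (fun x => 1 * Real.cos (phase k x)) x) = (symb A b k x * wave k x).re := by
  simp only [frobInner, hess, dotc, grad, pd_const_mul_cos, pd_const_mul_sin, Matrix.of_apply,
    symb, symbRe, symbIm, wave, Complex.mul_re, Complex.exp_ofReal_mul_I_re,
    Complex.exp_ofReal_mul_I_im, Finset.mul_sum, Finset.sum_mul, ← Finset.sum_neg_distrib,
    sub_eq_add_neg]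
  refine congrArg₂ _ ?_ ?_
  · exact Finset.sum_congr rfl fun i _ => Finset.sum_congr rfl fun j _ => by ring
  · exact Finset.sum_congr rfl fun i _ => by ring

lemma operator_sin {n : ℕ} (A : (Fin n → ℝ) → Matrix (Fin n) (Fin n) ℝ)
    (b : (Fin n → ℝ) → Fin n → ℝ) (k : Fin n → ℤ) (x : Fin n → ℝ) :
    frobInner (A x) (hess (fun x => 1 * Real.sin (phase k x)) x) +
      dotc (b x) (grad (fun x => 1 * Real.sin (phase k x)) x) = (symb A b k x * wave k x).im := by
  simp only [frobInner, hess, dotc, grad, pd_const_mul_cos, pd_const_mul_sin, Matrix.of_apply,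
    symb, symbRe, symbIm, wave, Complex.mul_im, Complex.exp_ofReal_mul_I_re,
    Complex.exp_ofReal_mul_I_im, Finset.mul_sum, Finset.sum_mul, ← Finset.sum_neg_distrib]
  refine congrArg₂ _ ?_ ?_
  · exact Finset.sum_congr rfl fun i _ => Finset.sum_congr rfl fun j _ => by ring
  · exact Finset.sum_congr rfl fun i _ => by ring

lemma cos_phase_periodic {n : ℕ} (k : Fin n → ℤ) :
    IsPeriodic fun x => 1 * Real.cos (phase k x) := by
  intro x m
  simp only [phase_add_int, Real.cos_add_int_mul_two_pi]

lemma sin_phase_periodic {n : ℕ} (k : Fin n → ℤ) :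
    IsPeriodic fun x => 1 * Real.sin (phase k x) := by
  intro x m
  simp only [phase_add_int, Real.sin_add_int_mul_two_pi]

section Symbol

variable {n : ℕ} {A : (Fin n → ℝ) → Matrix (Fin n) (Fin n) ℝ} {b : (Fin n → ℝ) → Fin n → ℝ}
  {lam Lam δ : ℝ}

lemma SettingB.measurable_symb (hAB : SettingB A b lam Lam δ) (k : Fin n → ℤ) :
    Measurable (symb A b k) := by
  have h1 : Measurable (symbRe A k) := by
    have := hAB.measA
    unfold symbRe; fun_prop
  have h2 : Measurable (symbIm b k) := by
    have := hAB.measb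
    unfold symbIm; fun_prop
  have e : symb A b k = fun x => (symbRe A k x : ℂ) + symbIm b k x * Complex.I := by
    funext x
    exact Complex.mk_eq_add_mul_I _ _
  rw [e]
  fun_prop

lemma abs_entry_le_of_frobSq_le {M : Matrix (Fin n) (Fin n) ℝ} {C : ℝ} (h : frobSq M ≤ C)
    (i j : Fin n) : |M i j| ≤ C + 1 := by
  have h1 : (M i j) ^ 2 ≤ frobSq M :=
    (Finset.single_le_sum (f := fun j => (M i j) ^ 2) (fun j _ => sq_nonneg _)
      (Finset.mem_univ j)).trans
    (Finset.single_le_sum (f := fun i => ∑ j, (M i j) ^ 2)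
      (fun i _ => Finset.sum_nonneg fun j _ => sq_nonneg _) (Finset.mem_univ i))
  rw [abs_le]
  constructor <;> nlinarith [sq_nonneg (M i j - 1), sq_nonneg (M i j + 1)]

lemma abs_entry_le_of_euclSq_le {v : Fin n → ℝ} {C : ℝ} (h : euclSq v ≤ C)
    (i : Fin n) : |v i| ≤ C + 1 := by
  have h1 : (v i) ^ 2 ≤ euclSq v :=
    Finset.single_le_sum (f := fun i => (v i) ^ 2) (fun j _ => sq_nonneg _) (Finset.mem_univ i)
  rw [abs_le]
  constructor <;> nlinarith [sq_nonneg (v i - 1), sq_nonneg (v i + 1)]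

lemma SettingB.symb_bounded (hAB : SettingB A b lam Lam δ) (k : Fin n → ℤ) :
    ∃ C : ℝ, ∀ᵐ x, ‖symb A b k x‖ ≤ C := by
  obtain ⟨CA, hA⟩ := hAB.bddA
  obtain ⟨Cb, hb⟩ := hAB.bddb
  refine ⟨4 * Real.pi ^ 2 * ∑ i, ∑ j, (CA + 1) * |(k i : ℝ) * k j| +
    2 * Real.pi * ∑ i, (Cb + 1) * |(k i : ℝ)|, ?_⟩
  filter_upwards [hA, hb] with x hx hy
  refine (Complex.norm_le_abs_re_add_abs_im _).trans (add_le_add ?_ ?_)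
  · simp only [symb, symbRe, abs_neg, abs_mul (4 * Real.pi ^ 2)]
    rw [abs_of_nonneg (by positivity : (0 : ℝ) ≤ 4 * Real.pi ^ 2)]
    gcongr
    refine (Finset.abs_sum_le_sum_abs _ _).trans (Finset.sum_le_sum fun i _ => ?_)
    refine (Finset.abs_sum_le_sum_abs _ _).trans (Finset.sum_le_sum fun j _ => ?_)
    rw [abs_mul]
    gcongr
    exact abs_entry_le_of_frobSq_le hx i j
  · simp only [symb, symbIm, abs_mul (2 * Real.pi)]
    rw [abs_of_nonneg (by positivity : (0 : ℝ) ≤ 2 * Real.pi)]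
    gcongr
    refine (Finset.abs_sum_le_sum_abs _ _).trans (Finset.sum_le_sum fun i _ => ?_)
    rw [abs_mul]
    gcongr
    exact abs_entry_le_of_euclSq_le hy i

lemma integrableOn_of_sq {g : (Fin n → ℝ) → ℝ} (hg : Measurable g)
    (hg2 : IntegrableOn (fun x => (g x) ^ 2) (unitCell n)) : IntegrableOn g (unitCell n) :=
  ((memLp_two_iff_integrable_sq hg.aestronglyMeasurable).2 hg2).integrable one_le_two

lemma SettingB.integrable_mul_symb_wave (hAB : SettingB A b lam Lam δ)
    {g : (Fin n → ℝ) → ℝ} (hg : IntegrableOn g (unitCell n)) (k : Fin n → ℤ) :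
    IntegrableOn (fun x => (g x : ℂ) * (symb A b k x * wave k x)) (unitCell n) := by
  obtain ⟨C, hC⟩ := hAB.symb_bounded k
  refine Integrable.mul_bdd (c := C) hg.ofReal ?_ ?_
  · exact ((hAB.measurable_symb k).mul (continuous_wave k).measurable).aestronglyMeasurable
  · filter_upwards [ae_restrict_of_ae hC] with x hx
    rwa [norm_mul, norm_wave, mul_one]

/-- A very weak solution annihilates the image of every plane wave. -/
lemma SettingB.integral_mul_symb_wave_eq_zero (hAB : SettingB A b lam Lam δ)
    {g : (Fin n → ℝ) → ℝ} (hg : IntegrableOn g (unitCell n))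
    (hsol : ∀ φ : (Fin n → ℝ) → ℝ, ContDiff ℝ 2 φ → IsPeriodic φ →
      (∫ x in unitCell n, g x * (frobInner (A x) (hess φ x) + dotc (b x) (grad φ x))) = 0)
    (k : Fin n → ℤ) :
    ∫ x in unitCell n, (g x : ℂ) * (symb A b k x * wave k x) = 0 := by
  have hint := hAB.integrable_mul_symb_wave hg k
  have hc := hsol _ (contDiff_const.mul (contDiff_phase k).cos) (cos_phase_periodic k)
  have hs := hsol _ (contDiff_const.mul (contDiff_phase k).sin) (sin_phase_periodic k)
  simp only [operator_cos] at hc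
  simp only [operator_sin] at hs
  have hre := integral_re hint
  have him := integral_im hint
  simp only [RCLike.re_eq_complex_re, RCLike.im_eq_complex_im, Complex.re_ofReal_mul,
    Complex.im_ofReal_mul] at hre him
  exact Complex.ext (hre.symm.trans hc) (him.symm.trans hs)

end Symbol

section Cordes

variable {n : ℕ} {A : (Fin n → ℝ) → Matrix (Fin n) (Fin n) ℝ} {b : (Fin n → ℝ) → Fin n → ℝ}
  {lam Lam δ : ℝ}

/-- The coefficients of the difference between the renormalized operator and the Laplacian,
indexed by second-order and first-order derivatives. -/
def defect (A : (Fin n → ℝ) → Matrix (Fin n) (Fin n) ℝ) (b : (Fin n → ℝ) → Fin n → ℝ)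
    (x : Fin n → ℝ) : (Fin n × Fin n) ⊕ Fin n → ℝ :=
  Sum.elim (fun p => gam A b x * A x p.1 p.2 - if p.1 = p.2 then 1 else 0)
    (fun i => gam A b x * b x i)

/-- The Fourier multipliers of `D² Δ⁻¹` and `∇ Δ⁻¹` at frequency `k`. -/
def mult (k : Fin n → ℤ) : (Fin n × Fin n) ⊕ Fin n → ℂ :=
  Sum.elim (fun p => (((k p.1 : ℝ) * k p.2 / freqSq k : ℝ) : ℂ))
    (fun i => ((-(k i / (2 * Real.pi * freqSq k)) : ℝ) : ℂ) * Complex.I)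

lemma sum_defect_mul_mult (x : Fin n → ℝ) {k : Fin n → ℤ} (hk : k ≠ 0) :
    ∑ a, (defect A b x a : ℂ) * mult k a =
      -(1 + (gam A b x : ℂ) * symb A b k x / ((4 * Real.pi ^ 2 * freqSq k : ℝ) : ℂ)) := by
  have hf := (freqSq_pos hk).ne'
  have hpi := Real.pi_ne_zero
  have e1 : ∑ p : Fin n × Fin n, (gam A b x * A x p.1 p.2 - if p.1 = p.2 then 1 else 0) *
      ((k p.1 : ℝ) * k p.2 / freqSq k) =
      gam A b x * (∑ i, ∑ j, A x i j * ((k i : ℝ) * k j)) / freqSq k - 1 := by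
    have : (1 : ℝ) = (∑ i, ∑ j, (if i = j then (1 : ℝ) else 0) * ((k i : ℝ) * k j)) / freqSq k := by
      rw [eq_div_iff hf]
      simp [freqSq, sq]
    rw [Fintype.sum_prod_type]
    nth_rw 2 [this]
    simp only [Finset.mul_sum, Finset.sum_div, ← Finset.sum_sub_distrib]
    exact Finset.sum_congr rfl fun i _ => Finset.sum_congr rfl fun j _ => by ring
  have e2 : ∑ i, gam A b x * b x i * (-(k i / (2 * Real.pi * freqSq k))) =
      -(gam A b x * (∑ i, b x i * (k i : ℝ)) / (2 * Real.pi * freqSq k)) := by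
    simp only [Finset.mul_sum, Finset.sum_div, ← Finset.sum_neg_distrib]
    exact Finset.sum_congr rfl fun i _ => by ring
  have e3 : ∑ a, (defect A b x a : ℂ) * mult k a =
      ((∑ p : Fin n × Fin n, (gam A b x * A x p.1 p.2 - if p.1 = p.2 then 1 else 0) *
        ((k p.1 : ℝ) * k p.2 / freqSq k) : ℝ) : ℂ) +
      ((∑ i, gam A b x * b x i * (-(k i / (2 * Real.pi * freqSq k))) : ℝ) : ℂ) * Complex.I := by
    rw [Fintype.sum_sum_type, Complex.ofReal_sum, Complex.ofReal_sum, Finset.sum_mul]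
    refine congrArg₂ _ ?_ ?_
    · exact Finset.sum_congr rfl fun p _ => by
        simp only [defect, mult, Sum.elim_inl, Complex.ofReal_mul]
    · exact Finset.sum_congr rfl fun p _ => by
        simp only [defect, mult, Sum.elim_inr, Complex.ofReal_mul, mul_assoc]
  rw [e3, e1, e2]
  have hf' : (freqSq k : ℂ) ≠ 0 := by exact_mod_cast hf
  have hpi' : (Real.pi : ℂ) ≠ 0 := by exact_mod_cast hpi
  rw [symb, Complex.mk_eq_add_mul_I, symbRe, symbIm]
  push_cast
  field_simp
  ring

lemma sum_norm_sq_mult_le {k : Fin n → ℤ} (hk : k ≠ 0) :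
    ∑ a, ‖mult k a‖ ^ 2 ≤ 1 + 1 / (4 * Real.pi ^ 2) := by
  have hf := freqSq_pos hk
  have hpi := Real.pi_pos
  have e1 : ∑ p : Fin n × Fin n, ((k p.1 : ℝ) * k p.2 / freqSq k) ^ 2 = 1 := by
    rw [Fintype.sum_prod_type]
    have : (1 : ℝ) = (∑ i, (k i : ℝ) ^ 2) * (∑ j, (k j : ℝ) ^ 2) / freqSq k ^ 2 := by
      rw [eq_div_iff (by positivity), freqSq]; ring
    rw [this, Finset.sum_mul_sum]
    simp only [Finset.sum_div]
    exact Finset.sum_congr rfl fun i _ => Finset.sum_congr rfl fun j _ => by ring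
  have e2 : ∑ i, (-(k i / (2 * Real.pi * freqSq k))) ^ 2 = 1 / (4 * Real.pi ^ 2 * freqSq k) := by
    have : 1 / (4 * Real.pi ^ 2 * freqSq k) =
        (∑ i, (k i : ℝ) ^ 2) / (4 * Real.pi ^ 2 * freqSq k ^ 2) := by
      change _ = freqSq k / _
      field_simp
    rw [this, Finset.sum_div]
    exact Finset.sum_congr rfl fun i _ => by field_simp; ring
  rw [Fintype.sum_sum_type]
  simp only [mult, Sum.elim_inl, Sum.elim_inr, norm_mul, Complex.norm_real, Complex.norm_I,
    mul_one, Real.norm_eq_abs, sq_abs]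
  rw [e1, e2]
  have h1 := one_le_freqSq hk
  refine add_le_add le_rfl (one_div_le_one_div_of_le (by positivity) ?_)
  exact le_mul_of_one_le_right (by positivity) h1

lemma sum_defect_sq (x : Fin n → ℝ) (hD : 0 < frobSq (A x) + euclSq (b x)) :
    ∑ a, (defect A b x a) ^ 2 =
      n - (Matrix.trace (A x)) ^ 2 / (frobSq (A x) + euclSq (b x)) := by
  have e1 : ∑ i, ∑ j, (gam A b x * A x i j - if i = j then 1 else 0) ^ 2 =
      (gam A b x) ^ 2 * frobSq (A x) - 2 * gam A b x * Matrix.trace (A x) + n := by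
    have h : ∀ i j, (gam A b x * A x i j - if i = j then 1 else 0) ^ 2 =
        (gam A b x) ^ 2 * (A x i j) ^ 2 - (if i = j then 2 * gam A b x * A x i j else 0) +
          (if i = j then 1 else 0) := by
      intro i j
      split_ifs <;> ring
    simp only [h, Finset.sum_add_distrib, Finset.sum_sub_distrib, ← Finset.mul_sum, frobSq,
      Matrix.trace, Matrix.diag_apply, Finset.sum_ite_eq, Finset.mem_univ, if_true,
      Finset.sum_const, Finset.card_univ, Fintype.card_fin, nsmul_eq_mul, mul_one]
  have e2 : ∑ i, (gam A b x * b x i) ^ 2 = (gam A b x) ^ 2 * euclSq (b x) := by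
    simp only [mul_pow, ← Finset.mul_sum, euclSq]
  rw [Fintype.sum_sum_type, Fintype.sum_prod_type]
  simp only [defect, Sum.elim_inl, Sum.elim_inr]
  rw [e1, e2, gam]
  field_simp
  ring

lemma SettingB.trace_ge (hAB : SettingB A b lam Lam δ) :
    ∀ᵐ x, n * lam ≤ Matrix.trace (A x) := by
  filter_upwards [hAB.ellip] with x hx
  have h : ∀ i, lam ≤ A x i i := by
    intro i
    have := (hx (Pi.single i 1)).1
    simpa [euclSq, dotc, Pi.single_apply, Matrix.mulVec, dotProduct] using this
  calc n * lam = ∑ _i : Fin n, lam := by simp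
    _ ≤ _ := Finset.sum_le_sum fun i _ => h i

lemma frobSq_pos_of_trace_pos {M : Matrix (Fin n) (Fin n) ℝ} (h : 0 < Matrix.trace M) :
    0 < frobSq M := by
  refine lt_of_le_of_ne (Finset.sum_nonneg fun _ _ => Finset.sum_nonneg fun _ _ => sq_nonneg _)
    fun h0 => h.ne' ?_
  refine Finset.sum_eq_zero fun i _ => ?_
  have h1 := (Finset.sum_eq_zero_iff_of_nonneg
    (fun _ _ => Finset.sum_nonneg fun _ _ => sq_nonneg _)).1 h0.symm i (Finset.mem_univ i)
  have h2 := (Finset.sum_eq_zero_iff_of_nonneg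
    (fun j _ => sq_nonneg (M i j))).1 h1 i (Finset.mem_univ i)
  simpa using h2

lemma euclSq_nonneg (v : Fin n → ℝ) : 0 ≤ euclSq v := Finset.sum_nonneg fun _ _ => sq_nonneg _

lemma SettingB.delta_pos (hAB : SettingB A b lam Lam δ) : 0 < δ :=
  lt_of_le_of_lt (by positivity) hAB.delta_mem.1

lemma SettingB.sum_defect_sq_le (hn : 1 ≤ n) (hAB : SettingB A b lam Lam δ) :
    ∀ᵐ x, ∑ a, (defect A b x a) ^ 2 ≤ 1 - δ := by
  have hn' : (1 : ℝ) ≤ n := by exact_mod_cast hn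
  filter_upwards [hAB.trace_ge, hAB.cordes] with x ht hc
  have hT : 0 < Matrix.trace (A x) := lt_of_lt_of_le (mul_pos (by linarith) hAB.lam_pos) ht
  have hD : 0 < frobSq (A x) + euclSq (b x) :=
    add_pos_of_pos_of_nonneg (frobSq_pos_of_trace_pos hT) (euclSq_nonneg _)
  have hδ := hAB.delta_pos
  rw [sum_defect_sq x hD]
  rw [div_le_div_iff₀ (by positivity) (by linarith)] at hc
  have : n - 1 + δ ≤ (Matrix.trace (A x)) ^ 2 / (frobSq (A x) + euclSq (b x)) := by
    rw [le_div_iff₀ hD]; linarith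
  linarith

lemma SettingB.cordes_factor_lt_one (hn : 1 ≤ n) (hAB : SettingB A b lam Lam δ) :
    (1 - δ) * (1 + 1 / (4 * Real.pi ^ 2)) < 1 := by
  have hn' : (1 : ℝ) ≤ n := by exact_mod_cast hn
  have hpi : 0 < Real.pi ^ 2 := by positivity
  have h := hAB.delta_mem.1
  rw [div_lt_iff₀ (by linarith)] at h
  have h1 := hAB.delta_pos
  have h2 := hAB.delta_mem.2
  have h3 : (1 - δ) * (1 + Real.pi ^ 2) < Real.pi ^ 2 := by nlinarith
  have h4 : 1 + 1 / (4 * Real.pi ^ 2) ≤ (1 + Real.pi ^ 2) / Real.pi ^ 2 := by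
    rw [add_div, div_self hpi.ne', add_comm]
    gcongr
    linarith
  calc (1 - δ) * (1 + 1 / (4 * Real.pi ^ 2))
      ≤ (1 - δ) * ((1 + Real.pi ^ 2) / Real.pi ^ 2) := by
        gcongr
    _ < 1 := by rw [← mul_div_assoc, div_lt_one hpi]; exact h3

lemma norm_mul_sum_defect_le {ι : Type*} [Fintype ι] (w q : ℝ) (d : ι → ℝ) (z : ι → ℂ)
    (hd : ∑ a, d a ^ 2 ≤ q) :
    ‖(w : ℂ) * ∑ a, (d a : ℂ) * z a‖ ≤ (w ^ 2 + q * ∑ a, ‖z a‖ ^ 2) / 2 := by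
  have h1 : ‖∑ a, (d a : ℂ) * z a‖ ≤ ∑ a, |d a| * ‖z a‖ :=
    (norm_sum_le _ _).trans (le_of_eq (by simp))
  have h2 : (∑ a, |d a| * ‖z a‖) ^ 2 ≤ (∑ a, |d a| ^ 2) * ∑ a, ‖z a‖ ^ 2 :=
    Finset.sum_mul_sq_le_sq_mul_sq _ _ _
  simp only [sq_abs] at h2
  have h3 : (∑ a, d a ^ 2) * ∑ a, ‖z a‖ ^ 2 ≤ q * ∑ a, ‖z a‖ ^ 2 := by gcongr
  have h4 : ‖∑ a, (d a : ℂ) * z a‖ ^ 2 ≤ q * ∑ a, ‖z a‖ ^ 2 :=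
    (pow_le_pow_left₀ (norm_nonneg _) h1 2).trans (h2.trans h3)
  rw [norm_mul, Complex.norm_real, Real.norm_eq_abs]
  nlinarith [sq_nonneg (|w| - ‖∑ a, (d a : ℂ) * z a‖), sq_abs w]

lemma integrable_norm_sq_trigPoly (S : Finset (Fin n → ℤ)) (a : (Fin n → ℤ) → ℂ) :
    IntegrableOn (fun x => ‖∑ k ∈ S, a k * wave k x‖ ^ 2) (unitCell n) := by
  refine Integrable.of_bound (C := (∑ k ∈ S, ‖a k‖) ^ 2) ?_ ?_
  · have := fun k : Fin n → ℤ => continuous_wave k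
    exact Continuous.aestronglyMeasurable (by fun_prop)
  · refine Filter.Eventually.of_forall fun x => ?_
    rw [Real.norm_of_nonneg (by positivity)]
    gcongr
    exact (norm_sum_le _ _).trans (le_of_eq (by simp [norm_wave]))

lemma mul_sum_defect_trigPoly (S : Finset (Fin n → ℤ)) {c : (Fin n → ℤ) → ℂ} (hc : c 0 = 0)
    (w : ℝ) (x : Fin n → ℝ) :
    (w : ℂ) * ∑ a, (defect A b x a : ℂ) * ∑ k ∈ S, (c k * mult k a) * wave k x =
      ∑ k ∈ S, -(c k / ((4 * Real.pi ^ 2 * freqSq k : ℝ) : ℂ)) *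
          (((w * gam A b x : ℝ) : ℂ) * (symb A b k x * wave k x)) -
        ∑ k ∈ S, c k * ((w : ℂ) * wave k x) := by
  simp only [Finset.mul_sum]
  rw [Finset.sum_comm, ← Finset.sum_sub_distrib]
  refine Finset.sum_congr rfl fun k _ => ?_
  rcases eq_or_ne k 0 with rfl | hk
  · simp [hc]
  · have h := sum_defect_mul_mult (A := A) (b := b) x hk
    calc ∑ a, (w : ℂ) * ((defect A b x a : ℂ) * (c k * mult k a * wave k x))
        = (w : ℂ) * c k * wave k x * ∑ a, (defect A b x a : ℂ) * mult k a := by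
          rw [Finset.mul_sum]
          exact Finset.sum_congr rfl fun a _ => by ring
      _ = _ := by rw [h, Complex.ofReal_mul w]; ring

/-- A mean-zero square-integrable function annihilating the range of the renormalized operator
vanishes. -/
lemma SettingB.ae_eq_zero_of_mean_zero (hn : 1 ≤ n) (hAB : SettingB A b lam Lam δ)
    {w : (Fin n → ℝ) → ℝ} (hw : Measurable w)
    (hw2 : IntegrableOn (fun x => (w x) ^ 2) (unitCell n))
    (hmean : ∫ x in unitCell n, w x = 0)
    (hint : ∀ k, IntegrableOn
      (fun x => ((w x * gam A b x : ℝ) : ℂ) * (symb A b k x * wave k x)) (unitCell n))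
    (hsol : ∀ k, ∫ x in unitCell n,
      ((w x * gam A b x : ℝ) : ℂ) * (symb A b k x * wave k x) = 0) :
    ∀ᵐ x ∂(volume : Measure (Fin n → ℝ)).restrict (unitCell n), w x = 0 := by
  set c : (Fin n → ℤ) → ℂ := fun k =>
    ∫ x in unitCell n, (starRingEnd ℂ) (wave k x) * (w x : ℂ) with hc
  set q : ℝ := (1 - δ) * (1 + 1 / (4 * Real.pi ^ 2)) with hq
  have hq1 : q < 1 := hAB.cordes_factor_lt_one hn
  have hδ : 0 ≤ 1 - δ := by linarith [hAB.delta_mem.2]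
  have hc0 : c 0 = 0 := by
    simp only [hc, wave_zero, map_one, one_mul]
    rw [integral_complex_ofReal, hmean, Complex.ofReal_zero]
  have hwint : ∀ k, IntegrableOn (fun x => (w x : ℂ) * wave k x) (unitCell n) := fun k =>
    Integrable.mul_bdd (c := 1) (integrableOn_of_sq hw hw2).ofReal
      (continuous_wave k).aestronglyMeasurable
      (Filter.Eventually.of_forall fun x => (norm_wave k x).le)
  have hconj : ∀ k, ∫ x in unitCell n, (w x : ℂ) * wave k x = (starRingEnd ℂ) (c k) := by
    intro k
    rw [hc, ← integral_conj]
    refine integral_congr_ae (Filter.Eventually.of_forall fun x => ?_)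
    simp [mul_comm]
  have hsum := hasSum_sq_coeff hw hw2
  set W := ∫ x in unitCell n, (w x) ^ 2 with hW
  have hbound : ∀ S : Finset (Fin n → ℤ), ∑ k ∈ S, ‖c k‖ ^ 2 ≤ W / (2 - q) := by
    intro S
    set s := ∑ k ∈ S, ‖c k‖ ^ 2 with hs
    have hI : ∫ x in unitCell n, (w x : ℂ) * ∑ a, (defect A b x a : ℂ) *
        ∑ k ∈ S, (c k * mult k a) * wave k x = -(s : ℂ) := by
      simp only [mul_sum_defect_trigPoly S hc0]
      rw [integral_sub (integrable_finsetSum _ fun k _ => (hint k).const_mul _)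
        (integrable_finsetSum _ fun k _ => (hwint k).const_mul _),
        integral_finsetSum _ fun k _ => (hint k).const_mul _,
        integral_finsetSum _ fun k _ => (hwint k).const_mul _]
      simp only [integral_const_mul, hsol, hconj, mul_zero, Finset.sum_const_zero, zero_sub,
        Complex.mul_conj', hs]
      push_cast
      rfl
    have hZ : ∀ a, IntegrableOn (fun x => ‖∑ k ∈ S, (c k * mult k a) * wave k x‖ ^ 2)
        (unitCell n) := fun a => integrable_norm_sq_trigPoly S _
    have hle : s ≤ ∫ x in unitCell n, ((w x) ^ 2 +
        (1 - δ) * ∑ a, ‖∑ k ∈ S, (c k * mult k a) * wave k x‖ ^ 2) / 2 := by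
      have hs0 : 0 ≤ s := Finset.sum_nonneg fun k _ => by positivity
      calc s = ‖-(s : ℂ)‖ := by rw [norm_neg, Complex.norm_real, Real.norm_of_nonneg hs0]
        _ ≤ _ := by
          rw [← hI]
          refine (norm_integral_le_integral_norm _).trans (integral_mono_of_nonneg
            (Filter.Eventually.of_forall fun x => norm_nonneg _) ?_ ?_)
          · exact (hw2.add ((integrable_finsetSum _ fun a _ => hZ a).const_mul _)).div_const _
          · filter_upwards [ae_restrict_of_ae (hAB.sum_defect_sq_le hn)] with x hx
            exact norm_mul_sum_defect_le _ _ _ _ hx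
    rw [integral_div, integral_add hw2 ((integrable_finsetSum _ fun a _ => hZ a).const_mul _),
      integral_const_mul, integral_finsetSum _ fun a _ => hZ a] at hle
    simp only [integral_norm_sq_trigPoly] at hle
    have hm : ∑ a, ∑ k ∈ S, ‖c k * mult k a‖ ^ 2 ≤ (1 + 1 / (4 * Real.pi ^ 2)) * s := by
      rw [Finset.sum_comm, hs, Finset.mul_sum]
      refine Finset.sum_le_sum fun k _ => ?_
      simp only [norm_mul, mul_pow, ← Finset.mul_sum]
      rcases eq_or_ne k 0 with rfl | hk
      · simp [hc0]
      · rw [mul_comm]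
        gcongr
        exact sum_norm_sq_mult_le hk
    have hm' := mul_le_mul_of_nonneg_left hm hδ
    rw [← mul_assoc, ← hq] at hm'
    rw [le_div_iff₀ (by linarith)]
    linarith
  have hWle : W ≤ W / (2 - q) := hasSum_le_of_sum_le hsum hbound
  have hW0 : 0 ≤ W := integral_nonneg fun x => sq_nonneg _
  rw [le_div_iff₀ (by linarith)] at hWle
  have hWz : W = 0 := by nlinarith
  have := (integral_eq_zero_iff_of_nonneg (fun x => sq_nonneg (w x)) hw2).1 hWz
  filter_upwards [this] with x hx
  simpa using hx

end Cordes

section Uniqueness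

variable {n : ℕ} {A : (Fin n → ℝ) → Matrix (Fin n) (Fin n) ℝ} {b : (Fin n → ℝ) → Fin n → ℝ}
  {lam Lam δ : ℝ}

/-- The reciprocal of the renormalization function. -/
def recipGam (A : (Fin n → ℝ) → Matrix (Fin n) (Fin n) ℝ) (b : (Fin n → ℝ) → Fin n → ℝ)
    (x : Fin n → ℝ) : ℝ := (frobSq (A x) + euclSq (b x)) / Matrix.trace (A x)

lemma SettingB.measurable_recipGam (hAB : SettingB A b lam Lam δ) :
    Measurable (recipGam A b) := by
  have := hAB.measA
  have := hAB.measb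
  unfold recipGam frobSq euclSq Matrix.trace Matrix.diag
  fun_prop

lemma SettingB.recipGam_mul_gam (hn : 1 ≤ n) (hAB : SettingB A b lam Lam δ) :
    ∀ᵐ x, recipGam A b x * gam A b x = 1 := by
  have hn' : (1 : ℝ) ≤ n := by exact_mod_cast hn
  filter_upwards [hAB.trace_ge] with x ht
  have hT : 0 < Matrix.trace (A x) := lt_of_lt_of_le (mul_pos (by linarith) hAB.lam_pos) ht
  have hD : 0 < frobSq (A x) + euclSq (b x) :=
    add_pos_of_pos_of_nonneg (frobSq_pos_of_trace_pos hT) (euclSq_nonneg _)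
  rw [recipGam, gam]
  field_simp

lemma SettingB.recipGam_bounded (hn : 1 ≤ n) (hAB : SettingB A b lam Lam δ) :
    ∃ C : ℝ, ∀ᵐ x, ‖recipGam A b x‖ ≤ C := by
  have hn' : (1 : ℝ) ≤ n := by exact_mod_cast hn
  have hnl : 0 < n * lam := mul_pos (by linarith) hAB.lam_pos
  obtain ⟨CA, hA⟩ := hAB.bddA
  obtain ⟨Cb, hb⟩ := hAB.bddb
  refine ⟨(CA + Cb) / (n * lam), ?_⟩
  filter_upwards [hA, hb, hAB.trace_ge] with x hx hy ht
  have hT : 0 < Matrix.trace (A x) := lt_of_lt_of_le hnl ht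
  have hD : 0 < frobSq (A x) + euclSq (b x) :=
    add_pos_of_pos_of_nonneg (frobSq_pos_of_trace_pos hT) (euclSq_nonneg _)
  rw [recipGam, Real.norm_of_nonneg (by positivity)]
  exact div_le_div₀ (by linarith) (by linarith) hnl ht

/-- A very weak solution whose renormalization has mean zero vanishes. -/
lemma SettingB.ae_eq_zero_of_integral_recipGam_mul_eq_zero (hn : 1 ≤ n)
    (hAB : SettingB A b lam Lam δ) {g : (Fin n → ℝ) → ℝ} (hg : Measurable g)
    (hg2 : IntegrableOn (fun x => (g x) ^ 2) (unitCell n))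
    (hsol : ∀ k, ∫ x in unitCell n, (g x : ℂ) * (symb A b k x * wave k x) = 0)
    (hmean : ∫ x in unitCell n, recipGam A b x * g x = 0) :
    ∀ᵐ x ∂(volume : Measure (Fin n → ℝ)).restrict (unitCell n), g x = 0 := by
  have hone := ae_restrict_of_ae (s := unitCell n) (hAB.recipGam_mul_gam hn)
  obtain ⟨C, hC⟩ := hAB.recipGam_bounded hn
  have hae : ∀ k, (fun x => (g x : ℂ) * (symb A b k x * wave k x))
      =ᵐ[(volume : Measure (Fin n → ℝ)).restrict (unitCell n)] fun x =>
        ((recipGam A b x * g x * gam A b x : ℝ) : ℂ) * (symb A b k x * wave k x) := by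
    intro k
    filter_upwards [hone] with x hx
    rw [mul_right_comm, hx, one_mul]
  have hzero := hAB.ae_eq_zero_of_mean_zero hn (w := fun x => recipGam A b x * g x)
    (hAB.measurable_recipGam.mul hg) ?_ hmean
    (fun k => (hAB.integrable_mul_symb_wave (integrableOn_of_sq hg hg2) k).congr (hae k))
    (fun k => (integral_congr_ae (hae k)).symm.trans (hsol k))
  · filter_upwards [hzero, hone] with x hx h1
    rcases mul_eq_zero.1 hx with h | h
    · rw [h, zero_mul] at h1
      exact absurd h1 zero_ne_one
    · exact h
  · simp only [mul_pow]
    refine Integrable.bdd_mul (c := C ^ 2) hg2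
      (hAB.measurable_recipGam.pow_const 2).aestronglyMeasurable ?_
    filter_upwards [ae_restrict_of_ae hC] with x hx
    rw [norm_pow]
    gcongr

lemma SettingB.integrable_recipGam_mul (hn : 1 ≤ n) (hAB : SettingB A b lam Lam δ)
    {g : (Fin n → ℝ) → ℝ} (hg : IntegrableOn g (unitCell n)) :
    IntegrableOn (fun x => recipGam A b x * g x) (unitCell n) := by
  obtain ⟨C, hC⟩ := hAB.recipGam_bounded hn
  exact Integrable.bdd_mul hg hAB.measurable_recipGam.aestronglyMeasurable (ae_restrict_of_ae hC)

/-- A periodic property that holds almost everywhere on the unit cell holds almost everywhere. -/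
lemma ae_of_ae_restrict_unitCell {p : (Fin n → ℝ) → Prop}
    (hp : ∀ (x : Fin n → ℝ) (k : Fin n → ℤ), p (x + fun i => (k i : ℝ)) ↔ p x)
    (h : ∀ᵐ x ∂(volume : Measure (Fin n → ℝ)).restrict (unitCell n), p x) : ∀ᵐ x, p x := by
  rw [Measure.restrict_congr_set (unitCell_ae_eq_Ioc n),
    ae_restrict_iff' (MeasurableSet.univ_pi' fun i => measurableSet_Ioc)] at h
  have hk : ∀ᵐ x : Fin n → ℝ, ∀ k : Fin n → ℤ,
      (∀ i, (x + fun i => (k i : ℝ)) i ∈ Set.Ioc ((0 : Fin n → ℝ) i) ((0 : Fin n → ℝ) i + 1)) →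
        p (x + fun i => (k i : ℝ)) :=
    ae_all_iff.2 fun k =>
      (measurePreserving_add_right volume fun i => (k i : ℝ)).quasiMeasurePreserving.ae h
  filter_upwards [hk] with x hx
  rw [← hp x fun i => 1 - ⌈x i⌉]
  refine hx _ fun i => ?_
  have h1 := Int.le_ceil (x i)
  have h2 := Int.ceil_lt_add_one (x i)
  simp only [Pi.add_apply, Pi.zero_apply, zero_add, Set.mem_Ioc]
  push_cast
  constructor <;> linarith

end Uniqueness

/-- In Setting B, any very weak solution `u ∈ L²_per(Y)` of the
homogeneous stationary FPK problem is a.e. a constant multiple of the invariant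
measure `r`. -/
theorem stmt_1 {n : ℕ} (hn : 1 ≤ n)
    (A : (Fin n → ℝ) → Matrix (Fin n) (Fin n) ℝ) (b : (Fin n → ℝ) → Fin n → ℝ)
    (lam Lam δ : ℝ) (hAB : SettingB A b lam Lam δ)
    (r : (Fin n → ℝ) → ℝ) (hr : IsInvariantMeasure A b r)
    (u : (Fin n → ℝ) → ℝ) (hu_meas : Measurable u) (hu_per : IsPeriodic u)
    (hu_L2 : IntegrableOn (fun x => (u x) ^ 2) (unitCell n))
    (hu_sol : ∀ φ : (Fin n → ℝ) → ℝ, ContDiff ℝ 2 φ → IsPeriodic φ →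
      (∫ x in unitCell n,
        u x * (frobInner (A x) (hess φ x) + dotc (b x) (grad φ x))) = 0) :
    ∃ c : ℝ, ∀ᵐ x ∂(volume : Measure (Fin n → ℝ)), u x = c * r x := by
  obtain ⟨hr_meas, hr_per, hr_L2, hr_mass, hr_sol⟩ := hr
  have hu1 := integrableOn_of_sq hu_meas hu_L2
  have hr1 := integrableOn_of_sq hr_meas hr_L2
  have hu_wave := hAB.integral_mul_symb_wave_eq_zero hu1 hu_sol
  have hr_wave := hAB.integral_mul_symb_wave_eq_zero hr1 hr_sol
  set R := ∫ x in unitCell n, recipGam A b x * r x with hR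
  set U := ∫ x in unitCell n, recipGam A b x * u x with hU
  have hR0 : R ≠ 0 := by
    intro h0
    have h := hAB.ae_eq_zero_of_integral_recipGam_mul_eq_zero hn hr_meas hr_L2 hr_wave h0
    rw [integral_congr_ae h, integral_zero] at hr_mass
    exact zero_ne_one hr_mass
  refine ⟨U / R, ?_⟩
  have hz : ∀ᵐ x ∂(volume : Measure (Fin n → ℝ)).restrict (unitCell n),
      u x - U / R * r x = 0 := by
    refine hAB.ae_eq_zero_of_integral_recipGam_mul_eq_zero hn
      (hu_meas.sub (hr_meas.const_mul _)) ?_ (fun k => ?_) ?_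
    · exact (((memLp_two_iff_integrable_sq hu_meas.aestronglyMeasurable).2 hu_L2).sub
        (((memLp_two_iff_integrable_sq hr_meas.aestronglyMeasurable).2 hr_L2).const_mul
          _)).integrable_sq
    · have e : ∀ x, ((u x - U / R * r x : ℝ) : ℂ) * (symb A b k x * wave k x) =
          (u x : ℂ) * (symb A b k x * wave k x) -
            ((U / R : ℝ) : ℂ) * ((r x : ℂ) * (symb A b k x * wave k x)) := by
        intro x
        rw [Complex.ofReal_sub, Complex.ofReal_mul]
        ring
      simp_rw [e]
      rw [integral_sub (hAB.integrable_mul_symb_wave hu1 k)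
        ((hAB.integrable_mul_symb_wave hr1 k).const_mul _), integral_const_mul, hu_wave, hr_wave,
        mul_zero, sub_zero]
    · have e : ∀ x, recipGam A b x * (u x - U / R * r x) =
          recipGam A b x * u x - U / R * (recipGam A b x * r x) := fun x => by ring
      simp_rw [e]
      rw [integral_sub (hAB.integrable_recipGam_mul hn hu1)
        ((hAB.integrable_recipGam_mul hn hr1).const_mul _), integral_const_mul, ← hR, ← hU,
        div_mul_cancel₀ _ hR0, sub_self]
  refine ae_of_ae_restrict_unitCell (fun x k => by rw [hu_per x k, hr_per x k]) ?_
  filter_upwards [hz] with x hx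
  exact sub_eq_zero.1 hx
end
end
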